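/- Let i ≠ j in I. For every graded left R^Λ(β+α_i)-module N there is an isomorphism of graded modules q^{−(α_i,α_j)} F_j^Λ E_i^Λ N ≅ E_i^Λ F_j^Λ N, natural in N; here the left-hand composite applies E_i^Λ over β (from modules over R^Λ(β+α_i) to modules over R^Λ(β)) followed by F_j^Λ over β (to modules over R^Λ(β+α_j)), and the right-hand composite applies F_j^Λ over β+α_i followed by E_i^Λ over β+α_j. -/

import Mathlib

/- ## Scaffold: Khovanov–Lauda–Rouquier algebras -/

open scoped TensorProduct

/-- A symmetrizable Cartan datum together with the structure constants of the
family of polynomials `Q`. -/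
structure CartanDatum (k : Type) [Field k] (I : Type) [Fintype I] [DecidableEq I] : Type where
  a : I → I → ℤ
  d : I → ℤ
  t : I → I → ℕ → ℕ → k
  a_diag : ∀ i, a i i = 2
  a_nonpos : ∀ i j, i ≠ j → a i j ≤ 0
  a_zero_iff : ∀ i j, a i j = 0 ↔ a j i = 0
  d_pos : ∀ i, 0 < d i
  symmetrize : ∀ i j, d i * a i j = d j * a j i
  t_symm : ∀ i j p q, t i j p q = t j i q p
  t_lead : ∀ i j, i ≠ j → t i j (-(a i j)).toNat 0 ≠ 0

namespace KLR

variable {k : Type} [Field k] {I : Type} [Fintype I] [DecidableEq I]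

/-- The symmetric bilinear form `(α_i, α_j) = d_i a_{ij}`. -/
def B (C : CartanDatum k I) (i j : I) : ℤ := C.d i * C.a i j

/-- Generators of the KLR algebra `R(n)`. -/
inductive Gen (I : Type) (n : ℕ) : Type
  | e (ν : Fin n → I) : Gen I n
  | x (a : Fin n) : Gen I n
  | tau (l : ℕ) (h : l + 1 < n) : Gen I n

variable (k) in
/-- The free algebra on the generators. -/
abbrev FA (I : Type) (n : ℕ) : Type := FreeAlgebra k (Gen I n)

variable (k) in
def ge {n : ℕ} (ν : Fin n → I) : FA k I n := FreeAlgebra.ι k (Gen.e ν)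

variable (k) in
def gx {n : ℕ} (a : Fin n) : FA k I n := FreeAlgebra.ι k (Gen.x a)

variable (k) in
def gt {n : ℕ} (l : ℕ) (h : l + 1 < n) : FA k I n := FreeAlgebra.ι k (Gen.tau l h)

/-- The polynomial `Q_{ij}(u,v)` evaluated on two elements of an algebra. -/
def Qel (C : CartanDatum k I) {A : Type} [Ring A] [Algebra k A] (i j : I) (u v : A) : A :=
  if i = j then 0 else
    ∑ p ∈ Finset.range ((-(C.a i j)).toNat + 1), ∑ q ∈ Finset.range ((-(C.a j i)).toNat + 1),
      if C.d i * (p : ℤ) + C.d j * (q : ℤ) = -(C.d i * C.a i j) then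
        C.t i j p q • (u ^ p * v ^ q) else 0

/-- The divided difference `(Q_{ij}(u,v) - Q_{ij}(w,v))/(u - w)` evaluated on elements. -/
def Qdiff (C : CartanDatum k I) {A : Type} [Ring A] [Algebra k A] (i j : I) (u v w : A) : A :=
  if i = j then 0 else
    ∑ p ∈ Finset.range ((-(C.a i j)).toNat + 1), ∑ q ∈ Finset.range ((-(C.a j i)).toNat + 1),
      if C.d i * (p : ℤ) + C.d j * (q : ℤ) = -(C.d i * C.a i j) then
        C.t i j p q • ((∑ c ∈ Finset.range p, u ^ c * w ^ (p - 1 - c)) * v ^ q) else 0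

/-- The defining relations of the KLR algebra `R(n)`. -/
inductive Rel (C : CartanDatum k I) (n : ℕ) : FA k I n → FA k I n → Prop
  | ee : ∀ ν ν' : Fin n → I, Rel C n (ge k ν * ge k ν') (if ν = ν' then ge k ν else 0)
  | esum : Rel C n (∑ ν : Fin n → I, ge k ν) 1
  | xx : ∀ a b : Fin n, Rel C n (gx k a * gx k b) (gx k b * gx k a)
  | xe : ∀ (a : Fin n) (ν : Fin n → I), Rel C n (gx k a * ge k ν) (ge k ν * gx k a)
  | taue : ∀ (l : ℕ) (h : l + 1 < n) (ν : Fin n → I),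
      Rel C n (gt k l h * ge k ν)
        (ge k (ν ∘ Equiv.swap (⟨l, Nat.lt_of_succ_lt h⟩ : Fin n) ⟨l + 1, h⟩) * gt k l h)
  | tautau : ∀ (l : ℕ) (h : l + 1 < n) (l' : ℕ) (h' : l' + 1 < n),
      (l + 1 < l' ∨ l' + 1 < l) →
      Rel C n (gt k l h * gt k l' h') (gt k l' h' * gt k l h)
  | tausq : ∀ (l : ℕ) (h : l + 1 < n) (ν : Fin n → I),
      Rel C n (gt k l h ^ 2 * ge k ν)
        (Qel C (ν ⟨l, Nat.lt_of_succ_lt h⟩) (ν ⟨l + 1, h⟩)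
          (gx k ⟨l, Nat.lt_of_succ_lt h⟩) (gx k ⟨l + 1, h⟩) * ge k ν)
  | taux : ∀ (l : ℕ) (h : l + 1 < n) (m : Fin n) (ν : Fin n → I),
      Rel C n ((gt k l h * gx k m
          - gx k (Equiv.swap (⟨l, Nat.lt_of_succ_lt h⟩ : Fin n) ⟨l + 1, h⟩ m) * gt k l h) * ge k ν)
        (if m = ⟨l, Nat.lt_of_succ_lt h⟩ ∧ ν ⟨l, Nat.lt_of_succ_lt h⟩ = ν ⟨l + 1, h⟩ then
            -(ge k ν)
          else if m = (⟨l + 1, h⟩ : Fin n) ∧ ν ⟨l, Nat.lt_of_succ_lt h⟩ = ν ⟨l + 1, h⟩ then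
            ge k ν
          else 0)
  | braid : ∀ (l : ℕ) (h2 : l + 2 < n) (ν : Fin n → I),
      Rel C n ((gt k (l + 1) h2 * gt k l (Nat.lt_of_succ_lt h2) * gt k (l + 1) h2
          - gt k l (Nat.lt_of_succ_lt h2) * gt k (l + 1) h2 * gt k l (Nat.lt_of_succ_lt h2))
          * ge k ν)
        (if ν ⟨l, Nat.lt_of_succ_lt (Nat.lt_of_succ_lt h2)⟩ = ν ⟨l + 2, h2⟩ then
            Qdiff C (ν ⟨l, Nat.lt_of_succ_lt (Nat.lt_of_succ_lt h2)⟩)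
              (ν ⟨l + 1, Nat.lt_of_succ_lt h2⟩)
              (gx k ⟨l, Nat.lt_of_succ_lt (Nat.lt_of_succ_lt h2)⟩)
              (gx k ⟨l + 1, Nat.lt_of_succ_lt h2⟩)
              (gx k ⟨l + 2, h2⟩) * ge k ν
          else 0)

/-- The Khovanov–Lauda–Rouquier algebra `R(n)`. -/
abbrev Alg (C : CartanDatum k I) (n : ℕ) : Type := RingQuot (Rel C n)

variable (C : CartanDatum k I)

/-- The generator `e(ν)` of `R(n)`. -/
noncomputable def Ee {n : ℕ} (ν : Fin n → I) : Alg C n :=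
  RingQuot.mkAlgHom k (Rel C n) (ge k ν)

/-- The generator `x_a` of `R(n)`. -/
noncomputable def Xx {n : ℕ} (a : Fin n) : Alg C n :=
  RingQuot.mkAlgHom k (Rel C n) (gx k a)

/-- The generator `τ_l` of `R(n)`. -/
noncomputable def Tt {n : ℕ} (l : ℕ) (h : l + 1 < n) : Alg C n :=
  RingQuot.mkAlgHom k (Rel C n) (gt k l h)

variable (I) in
/-- The height of `β = Σ k_i α_i`. -/
def ht (β : I → ℕ) : ℕ := ∑ i, β i

/-- The content of a sequence `ν`. -/
def content {m : ℕ} (ν : Fin m → I) : I → ℕ :=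
  fun i => (Finset.univ.filter (fun a => ν a = i)).card

/-- The set `I^β` of sequences of length `m` with content `β`. -/
def seqs (β : I → ℕ) (m : ℕ) : Finset (Fin m → I) :=
  Finset.univ.filter (fun ν => content ν = β)

/-- The central idempotent `e(β)` in `R(n)`. -/
noncomputable def eIdem (n : ℕ) (β : I → ℕ) : Alg C n := ∑ ν ∈ seqs β n, Ee C ν

/-- `β + α_i`. -/
def addA (β : I → ℕ) (i : I) : I → ℕ := fun j => β j + if j = i then 1 else 0

/-- The idempotent `e(β, α_i)` of `R(n+1)` (sum over `ν ∈ I^{β+α_i}` with `ν_{n+1} = i`). -/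
noncomputable def eR (n : ℕ) (β : I → ℕ) (i : I) : Alg C (n + 1) :=
  ∑ ν ∈ (seqs (addA β i) (n + 1)).filter (fun ν => ν (Fin.last n) = i), Ee C ν

/-- The idempotent `e(α_i, β)` of `R(n+1)` (sum over `ν ∈ I^{β+α_i}` with `ν_1 = i`). -/
noncomputable def eL (n : ℕ) (β : I → ℕ) (i : I) : Alg C (n + 1) :=
  ∑ ν ∈ (seqs (addA β i) (n + 1)).filter (fun ν => ν 0 = i), Ee C ν

/-- The idempotent `e(β - α_i, α_i)` of `R(n)`: sum over `ν ∈ I^β` with last entry `i`;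
this is `0` when the coefficient of `α_i` in `β` is `0` or `n = 0`. -/
noncomputable def eD (n : ℕ) (β : I → ℕ) (i : I) : Alg C n :=
  ∑ ν ∈ (seqs β n).filter (fun ν => if h : 0 < n then ν ⟨n - 1, Nat.sub_lt h one_pos⟩ = i
      else False), Ee C ν

/-- The relations defining `R(β) = R(n)e(β)` (a unital ring with unit the image of
`e(β)`): the KLR relations together with the relation `e(β) = 1`. -/
inductive URel (n : ℕ) (β : I → ℕ) : FA k I n → FA k I n → Prop
  | base : ∀ {x y : FA k I n}, Rel C n x y → URel n β x y
  | unit : URel n β (∑ ν ∈ seqs β n, ge k ν) 1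

/-- The algebra `R(β)`, realized as the quotient of `R(n)` identifying `e(β)` with `1`. -/
abbrev bAlg (n : ℕ) (β : I → ℕ) : Type := RingQuot (URel C n β)

/-- The canonical projection `R(n) → R(β)`. -/
noncomputable def toB {n : ℕ} {β : I → ℕ} : Alg C n →ₐ[k] bAlg C n β :=
  RingQuot.liftAlgHom (S := k)
    ⟨RingQuot.mkAlgHom k (URel C n β),
      fun _ _ h => RingQuot.mkAlgHom_rel k (URel.base h)⟩

/-- The element `a^Λ(x_1)` at the level of the free algebra. -/
noncomputable def aLamF (Λ : I → ℕ) (n : ℕ) (β : I → ℕ) : FA k I n :=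
  if h : 0 < n then
    ∑ ν ∈ seqs β n, (gx k (⟨0, h⟩ : Fin n)) ^ (Λ (ν ⟨0, h⟩)) * ge k ν
  else 0

/-- The element `a^Λ(x_1)` of `R(β)`. -/
noncomputable def aLam (Λ : I → ℕ) (n : ℕ) (β : I → ℕ) : bAlg C n β :=
  RingQuot.mkAlgHom k (URel C n β) (aLamF Λ n β)

/-- The relations defining the cyclotomic quotient `R^Λ(β)`. -/
inductive CRel (Λ : I → ℕ) (n : ℕ) (β : I → ℕ) : FA k I n → FA k I n → Prop
  | base : ∀ {x y : FA k I n}, Rel C n x y → CRel Λ n β x y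
  | unit : CRel Λ n β (∑ ν ∈ seqs β n, ge k ν) 1
  | cyc : CRel Λ n β (aLamF Λ n β) 0

/-- The cyclotomic KLR algebra `R^Λ(β)`. -/
abbrev cAlg (Λ : I → ℕ) (n : ℕ) (β : I → ℕ) : Type := RingQuot (CRel C Λ n β)

/-- The canonical projection `R(β) → R^Λ(β)`. -/
noncomputable def toC {Λ : I → ℕ} {n : ℕ} {β : I → ℕ} : bAlg C n β →ₐ[k] cAlg C Λ n β :=
  RingQuot.liftAlgHom (S := k)
    ⟨RingQuot.mkAlgHom k (CRel C Λ n β),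
      fun _ _ h => by
        cases h with
        | base hb => exact RingQuot.mkAlgHom_rel k (CRel.base hb)
        | unit => exact RingQuot.mkAlgHom_rel k CRel.unit⟩

/-- The canonical projection `R(n) → R^Λ(β)`. -/
noncomputable def toCB (Λ : I → ℕ) {n : ℕ} {β : I → ℕ} : Alg C n →ₐ[k] cAlg C Λ n β :=
  (toC C).comp (toB C)

end KLR
namespace KLR

variable {k : Type} [Field k] {I : Type} [Fintype I] [DecidableEq I] (C : CartanDatum k I)

section Homs

/-- Characterization of the non-unital algebra homomorphism `R(n) → R(n+1)` adding `i`
on the right: `e(ν) ↦ e(ν∗(i))`, `x_a ↦ x_a e(…,α_i)`, `τ_l ↦ τ_l e(…,α_i)`,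
where the relevant idempotent is supplied as `e`. -/
def IsUpR {n : ℕ} (i : I) (e : Alg C (n + 1)) (φ : Alg C n →ₙₐ[k] Alg C (n + 1)) : Prop :=
  (∀ ν : Fin n → I, φ (Ee C ν) = Ee C (Fin.snoc ν i)) ∧
  (∀ a : Fin n, φ (Xx C a) = Xx C a.castSucc * e) ∧
  (∀ (l : ℕ) (h : l + 1 < n), φ (Tt C l h) = Tt C l (Nat.lt_succ_of_lt h) * e)

/-- Characterization of the non-unital algebra homomorphism `R(n) → R(n+1)` adding `i`
on the left: `e(ν) ↦ e((i)∗ν)`, `x_a ↦ x_{a+1} e(α_i,…)`, `τ_l ↦ τ_{l+1} e(α_i,…)`. -/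
def IsUpL {n : ℕ} (i : I) (e : Alg C (n + 1)) (φ : Alg C n →ₙₐ[k] Alg C (n + 1)) : Prop :=
  (∀ ν : Fin n → I, φ (Ee C ν) = Ee C (Fin.cons i ν)) ∧
  (∀ a : Fin n, φ (Xx C a) = Xx C a.succ * e) ∧
  (∀ (l : ℕ) (h : l + 1 < n), φ (Tt C l h) = Tt C (l + 1) (Nat.succ_lt_succ h) * e)

/-- Characterization of the non-unital homomorphism `R(β) → R(β+α_i)` (right version). -/
def IsUpRb {n : ℕ} {β γ' : I → ℕ} (i : I)
    (φ : bAlg C n β →ₙₐ[k] bAlg C (n + 1) γ') : Prop :=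
  (∀ ν : Fin n → I, φ (toB C (Ee C ν)) = toB C (Ee C (Fin.snoc ν i))) ∧
  (∀ a : Fin n, φ (toB C (Xx C a)) = toB C (Xx C a.castSucc * eR C n β i)) ∧
  (∀ (l : ℕ) (h : l + 1 < n),
    φ (toB C (Tt C l h)) = toB C (Tt C l (Nat.lt_succ_of_lt h) * eR C n β i))

/-- Characterization of the non-unital homomorphism `R(β) → R(β+α_i)` (left version). -/
def IsUpLb {n : ℕ} {β γ' : I → ℕ} (i : I)
    (φ : bAlg C n β →ₙₐ[k] bAlg C (n + 1) γ') : Prop :=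
  (∀ ν : Fin n → I, φ (toB C (Ee C ν)) = toB C (Ee C (Fin.cons i ν))) ∧
  (∀ a : Fin n, φ (toB C (Xx C a)) = toB C (Xx C a.succ * eL C n β i)) ∧
  (∀ (l : ℕ) (h : l + 1 < n),
    φ (toB C (Tt C l h)) = toB C (Tt C (l + 1) (Nat.succ_lt_succ h) * eL C n β i))

/-- Characterization of the non-unital homomorphism `R^Λ(β) → R^Λ(β+α_i)` (right version). -/
def IsUpRc (Λ : I → ℕ) {n : ℕ} {β γ' : I → ℕ} (i : I)
    (φ : cAlg C Λ n β →ₙₐ[k] cAlg C Λ (n + 1) γ') : Prop :=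
  (∀ ν : Fin n → I, φ (toCB C Λ (Ee C ν)) = toCB C Λ (Ee C (Fin.snoc ν i))) ∧
  (∀ a : Fin n, φ (toCB C Λ (Xx C a)) = toCB C Λ (Xx C a.castSucc * eR C n β i)) ∧
  (∀ (l : ℕ) (h : l + 1 < n),
    φ (toCB C Λ (Tt C l h)) = toCB C Λ (Tt C l (Nat.lt_succ_of_lt h) * eR C n β i))

end Homs

section Tensor

open scoped TensorProduct

variable (S B M : Type) [Ring S] [Algebra k S] [Ring B] [Algebra k B]
  [AddCommGroup M] [Module k M] [Module S M] [IsScalarTower k S M]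

variable (k) in
/-- The relation submodule defining the balanced tensor product `B ⊗_S M` where `S`
acts on `B` on the right through the (non-unital) homomorphism `φ : S → B`. -/
def TRel (φ : S →ₙₐ[k] B) : Submodule B (B ⊗[k] M) :=
  Submodule.span B {z | ∃ (b : B) (r : S) (m : M), z = (b * φ r) ⊗ₜ[k] m - b ⊗ₜ[k] (r • m)}

variable (k) in
/-- The balanced tensor product `B ⊗_S M` (over the homomorphism `φ : S → B`). -/
abbrev OT (φ : S →ₙₐ[k] B) : Type := (B ⊗[k] M) ⧸ TRel k S B M φ

variable (k) in
/-- The canonical projection onto the balanced tensor product. -/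
def OTmk (φ : S →ₙₐ[k] B) (z : B ⊗[k] M) : OT k S B M φ := Submodule.Quotient.mk z

end Tensor

section ESub

variable (A : Type) [Ring A] [Algebra k A] (N : Type) [AddCommGroup N] [Module k N]
  [Module A N] [IsScalarTower k A N]

variable (k) in
/-- Multiplication by `e` as a `k`-linear endomorphism of an `A`-module. -/
def eMap (e : A) : N →ₗ[k] N where
  toFun x := e • x
  map_add' x y := smul_add e x y
  map_smul' c x := by
    simp only [RingHom.id_apply]
    rw [← algebraMap_smul A c x, ← mul_smul, ← Algebra.commutes, mul_smul, algebraMap_smul]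

variable (k) in
/-- The `k`-submodule `eN` of an `A`-module `N`. -/
def eSub (e : A) : Submodule k N := LinearMap.range (eMap k A N e)

end ESub

section Grading

variable {A M : Type}

variable (k) in
/-- `𝒜` is an algebra grading of `A`. -/
def IsAlgGrading [Ring A] [Algebra k A] (𝒜 : ℤ → Submodule k A) : Prop :=
  (1 : A) ∈ 𝒜 0 ∧ (∀ {c₁ c₂ : ℤ} {a b : A}, a ∈ 𝒜 c₁ → b ∈ 𝒜 c₂ → a * b ∈ 𝒜 (c₁ + c₂)) ∧
    DirectSum.IsInternal 𝒜

variable (k) in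
/-- `gr` is a grading of the `A`-module `M` compatible with the algebra grading `𝒜`. -/
def IsModGrading [Ring A] [Algebra k A] [AddCommGroup M] [Module k M] [Module A M]
    (𝒜 : ℤ → Submodule k A) (gr : ℤ → Submodule k M) : Prop :=
  DirectSum.IsInternal gr ∧
    ∀ {c m : ℤ} {a : A} {x : M}, a ∈ 𝒜 c → x ∈ gr m → a • x ∈ gr (c + m)

end Grading

section KLRGrading

/-- The canonical grading property for `R(n)`-type quotients: images of `e(ν)` have degree 0,
`x_a e(ν)` has degree `(α_{ν_a}, α_{ν_a})`, and `τ_l e(ν)` has degree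
`-(α_{ν_l}, α_{ν_{l+1}})`.  Here `p : R(n) → A` is the canonical projection onto the
quotient under consideration. -/
def IsKLRGrading {n : ℕ} {A : Type} [Ring A] [Algebra k A] (p : Alg C n →ₐ[k] A)
    (𝒜 : ℤ → Submodule k A) : Prop :=
  IsAlgGrading k 𝒜 ∧
  (∀ ν : Fin n → I, p (Ee C ν) ∈ 𝒜 0) ∧
  (∀ (a : Fin n) (ν : Fin n → I), p (Xx C a * Ee C ν) ∈ 𝒜 (B C (ν a) (ν a))) ∧
  (∀ (l : ℕ) (h : l + 1 < n) (ν : Fin n → I),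
    p (Tt C l h * Ee C ν) ∈ 𝒜 (-(B C (ν ⟨l, Nat.lt_of_succ_lt h⟩) (ν ⟨l + 1, h⟩))))

end KLRGrading

end KLR
namespace KLR

open scoped TensorProduct

variable {k : Type} [Field k] {I : Type} [Fintype I] [DecidableEq I] (C : CartanDatum k I)

section IndGrading

variable (S B M : Type) [Ring S] [Algebra k S] [Ring B] [Algebra k B]
  [AddCommGroup M] [Module k M] [Module S M] [IsScalarTower k S M]

variable (k) in
/-- The induced grading on the balanced tensor product `B ⊗_S M`. -/
def otGr (φ : S →ₙₐ[k] B) (𝒜 : ℤ → Submodule k B) (gr : ℤ → Submodule k M)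
    (c : ℤ) : Submodule k (OT k S B M φ) :=
  Submodule.span k {z | ∃ (c₁ c₂ : ℤ) (b : B) (m : M),
    c₁ + c₂ = c ∧ b ∈ 𝒜 c₁ ∧ m ∈ gr c₂ ∧ z = OTmk k S B M φ (b ⊗ₜ[k] m)}

end IndGrading

section ESubGrading

variable (A N : Type) [Ring A] [Algebra k A] [AddCommGroup N] [Module k N]
  [Module A N] [IsScalarTower k A N]

variable (k) in
/-- The induced grading on the submodule `eN ⊆ N`. -/
def eSubGr (e : A) (gr : ℤ → Submodule k N) (c : ℤ) : Submodule k ↥(eSub k A N e) :=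
  (gr c).comap (eSub k A N e).subtype

end ESubGrading

section Instances

variable (n : ℕ) (β : I → ℕ) (Λ : I → ℕ)

noncomputable instance : Module (bAlg C n β) (cAlg C Λ n β) :=
  Module.compHom _ (toC C (Λ := Λ) (n := n) (β := β)).toRingHom

instance : IsScalarTower k (bAlg C n β) (cAlg C Λ n β) := by
  constructor
  intro c s m
  show (toC C (c • s)) * m = c • (toC C s * m)
  rw [map_smul, Algebra.smul_mul_assoc]

end Instances


end KLR
namespace KLR

open scoped TensorProduct

variable {k : Type} [Field k] {I : Type} [Fintype I] [DecidableEq I] (C : CartanDatum k I)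

/-- `⟨h_i, β⟩ = Σ_j k_j a_{ij}`. -/
def pairH (i : I) (β : I → ℕ) : ℤ := ∑ j, (β j : ℤ) * C.a i j

/-- `(α_i, β) = Σ_j k_j (α_i, α_j)`. -/
def pairB (i : I) (β : I → ℕ) : ℤ := ∑ j, (β j : ℤ) * B C i j

/-- The ordered product `τ_1 τ_2 ⋯ τ_n` in `R(β+α_i)`-type quotients. -/
noncomputable def tauProd (n : ℕ) (γ : I → ℕ) : bAlg C (n + 1) γ :=
  (List.ofFn (fun l : Fin n => toB C (Tt C l.val (Nat.succ_lt_succ l.isLt)))).prod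

/-- The right ideal `Ae` as a `k`-submodule. -/
noncomputable def rId {A : Type} [Ring A] [Algebra k A] (e : A) : Submodule k A :=
  LinearMap.range (LinearMap.mulRight k e)

/-- The left ideal `eA` as a `k`-submodule. -/
noncomputable def lId {A : Type} [Ring A] [Algebra k A] (e : A) : Submodule k A :=
  LinearMap.range (LinearMap.mulLeft k e)

variable (k) in
/-- Characterization of the module structure on `eN` over `S'` acting through
the (non-unital) homomorphism `φ : S' → A`. -/
def IsEAction {A N S' : Type} [Ring A] [Algebra k A] [AddCommGroup N] [Module k N]
    [Module A N] [IsScalarTower k A N] [Ring S'] [Algebra k S']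
    (e : A) (φ : S' →ₙₐ[k] A) (inst : Module S' ↥(eSub k A N e)) : Prop :=
  letI := inst
  ∀ (r : S') (x : ↥(eSub k A N e)), ((r • x : ↥(eSub k A N e)) : N) = φ r • (x : N)

end KLR

namespace KLR

variable {k : Type} [Field k] {I : Type} [Fintype I] [DecidableEq I] (C : CartanDatum k I)

/-- The image of `e(β,α_i)` in `R(β+α_i)`. -/
noncomputable def eRb (n : ℕ) (β : I → ℕ) (i : I) : bAlg C (n + 1) (addA β i) :=
  toB C (eR C n β i)

/-- The image of `e(α_i,β)` in `R(β+α_i)`. -/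
noncomputable def eLb (n : ℕ) (β : I → ℕ) (i : I) : bAlg C (n + 1) (addA β i) :=
  toB C (eL C n β i)

/-- The image of `e(β-α_i,α_i)` in `R(β)`. -/
noncomputable def eDb (n : ℕ) (β : I → ℕ) (i : I) : bAlg C n β :=
  toB C (eD C n β i)

/-- The image of `e(β,α_i)` in `R^Λ(β+α_i)`. -/
noncomputable def eRc (Λ : I → ℕ) (n : ℕ) (β : I → ℕ) (i : I) :
    cAlg C Λ (n + 1) (addA β i) :=
  toCB C Λ (eR C n β i)

/-- The image of `e(β-α_i,α_i)` in `R^Λ(β)`. -/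
noncomputable def eDc (Λ : I → ℕ) (n : ℕ) (β : I → ℕ) (i : I) : cAlg C Λ n β :=
  toCB C Λ (eD C n β i)

end KLR

namespace KLR

variable {k : Type} [Field k] {I : Type} [Fintype I] [DecidableEq I]

variable (k) in
/-- Bundled data of the canonical module structure on `eN` over `S'`, acting through
the non-unital homomorphism `φ : S' → A`, together with its scalar-tower property. -/
structure EData {A S' : Type} (N : Type) [Ring A] [Algebra k A] [AddCommGroup N]
    [Module k N] [Module A N] [IsScalarTower k A N] [Ring S'] [Algebra k S']
    (e : A) (φ : S' →ₙₐ[k] A) : Type where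
  inst : Module S' ↥(eSub k A N e)
  compat : IsEAction k e φ inst
  tower : letI := inst; IsScalarTower k S' ↥(eSub k A N e)

end KLR

/-!
The algebra `R(n+1)` contains `R(n)`, and it is free over `R(n)` with basis the elements
`x_{b+1}^a e(…l) τ_n ⋯ τ_{b+1}`. They span because moving `τ_n` past an element of `R(n)` costs only
terms of the same kind (the Mackey relation), and they are independent because `R(n)` acts on
functions on the injective maps `{1, …, n} → K × I`, for an infinite field `K`, in such a way that
these elements act independently.

For `i ≠ j` the corner `e(…i) R(n+2) e(…j)` equals `R(n+1) τ_{n+1} R(n+1)`: no term without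
`τ_{n+1}` joins different last colours. Freeness of `R(n+1)` over `R(n)` identifies this corner with
`R(n+1) e(…j) ⊗_{R(n)} e(…i) R(n+1)`. By the same Mackey relation the cyclotomic ideal of `R(n+2)`
meets the corner in the sum of the images of the two cyclotomic ideals of `R(n+1)`, so the
identification descends to the cyclotomic quotients. Tensoring with `N` gives the isomorphism, and
the degree `-(α_i, α_j)` of `τ_{n+1}` is the grading shift.
-/

namespace KLR

open scoped TensorProduct

variable {k : Type} [Field k] {I : Type} [Fintype I] [DecidableEq I] {C : CartanDatum k I}

/-! ### Homomorphisms out of `R(n)` -/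

lemma map_Qel {A A' : Type} [Ring A] [Algebra k A] [Ring A'] [Algebra k A']
    (f : A →ₐ[k] A') (i j : I) (u v : A) : f (Qel C i j u v) = Qel C i j (f u) (f v) := by
  simp only [Qel, apply_ite f, map_sum, map_zero, map_smul, map_mul, map_pow]

lemma map_Qdiff {A A' : Type} [Ring A] [Algebra k A] [Ring A'] [Algebra k A']
    (f : A →ₐ[k] A') (i j : I) (u v w : A) :
    f (Qdiff C i j u v w) = Qdiff C i j (f u) (f v) (f w) := by
  simp only [Qdiff, apply_ite f, map_sum, map_zero, map_smul, map_mul, map_pow]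

variable (C) in
/-- A family of elements `e(ν)`, `x_a`, `τ_l` of a `k`-algebra `A` satisfying the defining
relations of `R(n)`, i.e. a presentation-level description of a homomorphism `R(n) → A`. -/
structure GenFamily (n : ℕ) (A : Type) [Ring A] [Algebra k A] : Type where
  e : (Fin n → I) → A
  x : Fin n → A
  tau : (l : ℕ) → l + 1 < n → A
  e_mul_e : ∀ ν ν' : Fin n → I, e ν * e ν' = if ν = ν' then e ν else 0
  sum_e : ∑ ν : Fin n → I, e ν = 1
  x_mul_x : ∀ a b : Fin n, x a * x b = x b * x a
  x_mul_e : ∀ (a : Fin n) (ν : Fin n → I), x a * e ν = e ν * x a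
  tau_mul_e : ∀ (l : ℕ) (h : l + 1 < n) (ν : Fin n → I),
    tau l h * e ν = e (ν ∘ Equiv.swap (⟨l, Nat.lt_of_succ_lt h⟩ : Fin n) ⟨l + 1, h⟩) * tau l h
  tau_mul_tau : ∀ (l : ℕ) (h : l + 1 < n) (l' : ℕ) (h' : l' + 1 < n),
    (l + 1 < l' ∨ l' + 1 < l) → tau l h * tau l' h' = tau l' h' * tau l h
  tau_sq : ∀ (l : ℕ) (h : l + 1 < n) (ν : Fin n → I),
    tau l h ^ 2 * e ν =
      Qel C (ν ⟨l, Nat.lt_of_succ_lt h⟩) (ν ⟨l + 1, h⟩)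
        (x ⟨l, Nat.lt_of_succ_lt h⟩) (x ⟨l + 1, h⟩) * e ν
  tau_x : ∀ (l : ℕ) (h : l + 1 < n) (m : Fin n) (ν : Fin n → I),
    (tau l h * x m
        - x (Equiv.swap (⟨l, Nat.lt_of_succ_lt h⟩ : Fin n) ⟨l + 1, h⟩ m) * tau l h) * e ν
      = (if m = ⟨l, Nat.lt_of_succ_lt h⟩ ∧ ν ⟨l, Nat.lt_of_succ_lt h⟩ = ν ⟨l + 1, h⟩ then
          -(e ν)
        else if m = (⟨l + 1, h⟩ : Fin n) ∧ ν ⟨l, Nat.lt_of_succ_lt h⟩ = ν ⟨l + 1, h⟩ then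
          e ν
        else 0)
  braid : ∀ (l : ℕ) (h2 : l + 2 < n) (ν : Fin n → I),
    (tau (l + 1) h2 * tau l (Nat.lt_of_succ_lt h2) * tau (l + 1) h2
        - tau l (Nat.lt_of_succ_lt h2) * tau (l + 1) h2 * tau l (Nat.lt_of_succ_lt h2)) * e ν
      = (if ν ⟨l, Nat.lt_of_succ_lt (Nat.lt_of_succ_lt h2)⟩ = ν ⟨l + 2, h2⟩ then
          Qdiff C (ν ⟨l, Nat.lt_of_succ_lt (Nat.lt_of_succ_lt h2)⟩)
            (ν ⟨l + 1, Nat.lt_of_succ_lt h2⟩)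
            (x ⟨l, Nat.lt_of_succ_lt (Nat.lt_of_succ_lt h2)⟩)
            (x ⟨l + 1, Nat.lt_of_succ_lt h2⟩)
            (x ⟨l + 2, h2⟩) * e ν
        else 0)

namespace GenFamily

variable (C) in
/-- The generators of `R(n)` itself. -/
noncomputable def taut (n : ℕ) : GenFamily C n (Alg C n) where
  e := Ee C
  x := Xx C
  tau := Tt C
  e_mul_e ν ν' := by
    simpa only [Ee, map_mul, map_zero, apply_ite (RingQuot.mkAlgHom k (Rel C n))] using
      RingQuot.mkAlgHom_rel k (Rel.ee (C := C) ν ν')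
  sum_e := by
    simpa only [Ee, map_sum, map_one] using
      RingQuot.mkAlgHom_rel k (Rel.esum (C := C) (n := n))
  x_mul_x a b := by
    simpa only [Xx, map_mul] using RingQuot.mkAlgHom_rel k (Rel.xx (C := C) a b)
  x_mul_e a ν := by
    simpa only [Ee, Xx, map_mul] using RingQuot.mkAlgHom_rel k (Rel.xe (C := C) a ν)
  tau_mul_e l h ν := by
    simpa only [Ee, Tt, map_mul] using RingQuot.mkAlgHom_rel k (Rel.taue (C := C) l h ν)
  tau_mul_tau l h l' h' hl := by
    simpa only [Tt, map_mul] using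
      RingQuot.mkAlgHom_rel k (Rel.tautau (C := C) l h l' h' hl)
  tau_sq l h ν := by
    simpa only [Ee, Xx, Tt, map_mul, map_pow, map_Qel] using
      RingQuot.mkAlgHom_rel k (Rel.tausq (C := C) l h ν)
  tau_x l h m ν := by
    simpa only [Ee, Xx, Tt, map_mul, map_sub, map_zero, map_neg,
      apply_ite (RingQuot.mkAlgHom k (Rel C n))] using
      RingQuot.mkAlgHom_rel k (Rel.taux (C := C) l h m ν)
  braid l h ν := by
    simpa only [Ee, Xx, Tt, map_mul, map_sub, map_zero, map_Qdiff,
      apply_ite (RingQuot.mkAlgHom k (Rel C n))] using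
      RingQuot.mkAlgHom_rel k (Rel.braid (C := C) l h ν)

variable {n : ℕ} {A : Type} [Ring A] [Algebra k A] (D : GenFamily C n A)

/-- The map on generators underlying `GenFamily.lift`. -/
def onGen : Gen I n → A
  | Gen.e ν => D.e ν
  | Gen.x a => D.x a
  | Gen.tau l h => D.tau l h

lemma lift_onGen_eq {x y : FA k I n} (h : Rel C n x y) :
    FreeAlgebra.lift k D.onGen x = FreeAlgebra.lift k D.onGen y := by
  have he ν : FreeAlgebra.lift k D.onGen (ge k ν) = D.e ν := FreeAlgebra.lift_ι_apply _ _
  have hx a : FreeAlgebra.lift k D.onGen (gx k a) = D.x a := FreeAlgebra.lift_ι_apply _ _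
  have ht l h : FreeAlgebra.lift k D.onGen (gt k l h) = D.tau l h := FreeAlgebra.lift_ι_apply _ _
  cases h with
  | ee ν ν' =>
    simp only [map_mul, he, D.e_mul_e, apply_ite (FreeAlgebra.lift k D.onGen), map_zero]
  | esum => simp only [map_sum, map_one, he, D.sum_e]
  | xx a b => simp only [map_mul, hx, D.x_mul_x a b]
  | xe a ν => simp only [map_mul, hx, he, D.x_mul_e a ν]
  | taue l h ν => simp only [map_mul, ht, he, D.tau_mul_e l h ν]
  | tautau l h l' h' hl => simp only [map_mul, ht, D.tau_mul_tau l h l' h' hl]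
  | tausq l h ν => simp only [map_mul, map_pow, map_Qel, ht, he, hx, D.tau_sq]
  | taux l h m ν =>
    simp only [map_mul, map_sub, apply_ite (FreeAlgebra.lift k D.onGen), map_zero, map_neg,
      ht, hx, he, D.tau_x]
  | braid l h ν =>
    simp only [map_mul, map_sub, apply_ite (FreeAlgebra.lift k D.onGen), map_zero, map_Qdiff,
      ht, hx, he, D.braid]

/-- The homomorphism `R(n) → A` sending the generators to the given family. -/
noncomputable def lift : Alg C n →ₐ[k] A :=
  RingQuot.liftAlgHom (S := k) ⟨FreeAlgebra.lift k D.onGen, fun _ _ h => D.lift_onGen_eq h⟩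

@[simp] lemma lift_Ee (ν : Fin n → I) : D.lift (Ee C ν) = D.e ν :=
  (RingQuot.liftAlgHom_mkAlgHom_apply _ _ _ _).trans (FreeAlgebra.lift_ι_apply _ _)

@[simp] lemma lift_Xx (a : Fin n) : D.lift (Xx C a) = D.x a :=
  (RingQuot.liftAlgHom_mkAlgHom_apply _ _ _ _).trans (FreeAlgebra.lift_ι_apply _ _)

@[simp] lemma lift_Tt (l : ℕ) (h : l + 1 < n) : D.lift (Tt C l h) = D.tau l h :=
  (RingQuot.liftAlgHom_mkAlgHom_apply _ _ _ _).trans (FreeAlgebra.lift_ι_apply _ _)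

end GenFamily

@[elab_as_elim]
lemma Alg.induction {n : ℕ} {p : Alg C n → Prop} (algebraMap : ∀ c : k, p (algebraMap k _ c))
    (e : ∀ ν, p (Ee C ν)) (x : ∀ a, p (Xx C a)) (tau : ∀ l h, p (Tt C l h))
    (add : ∀ a b, p a → p b → p (a + b)) (mul : ∀ a b, p a → p b → p (a * b))
    (r : Alg C n) : p r := by
  obtain ⟨r, rfl⟩ := RingQuot.mkAlgHom_surjective k (Rel C n) r
  induction r using FreeAlgebra.induction with
  | grade0 c => rw [AlgHom.commutes]; exact algebraMap c
  | grade1 g =>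
    cases g with
    | e ν => exact e ν
    | x a => exact x a
    | tau l h => exact tau l h
  | mul a b ha hb => rw [map_mul]; exact mul _ _ ha hb
  | add a b ha hb => rw [map_add]; exact add _ _ ha hb

lemma commute_map_of_generators {n : ℕ} {A : Type} [Ring A] [Algebra k A] (f : Alg C n →ₐ[k] A)
    {y : A} (he : ∀ ν, Commute (f (Ee C ν)) y) (hx : ∀ a, Commute (f (Xx C a)) y)
    (ht : ∀ l h, Commute (f (Tt C l h)) y) (r : Alg C n) : Commute (f r) y := by
  induction r using Alg.induction with
  | algebraMap c => rw [AlgHom.commutes]; exact Algebra.commutes _ _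
  | e ν => exact he ν
  | x a => exact hx a
  | tau l h => exact ht l h
  | add a b ha hb => rw [map_add]; exact ha.add_left hb
  | mul a b ha hb => rw [map_mul]; exact ha.mul_left hb

/-! ### Diagonal elements -/

lemma Ee_mul_Ee {n : ℕ} (ν ν' : Fin n → I) :
    Ee C ν * Ee C ν' = if ν = ν' then Ee C ν else 0 := (GenFamily.taut C n).e_mul_e ν ν'

lemma sum_Ee {n : ℕ} : ∑ ν : Fin n → I, Ee C ν = 1 := (GenFamily.taut C n).sum_e

lemma Xx_mul_Ee {n : ℕ} (a : Fin n) (ν : Fin n → I) : Xx C a * Ee C ν = Ee C ν * Xx C a :=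
  (GenFamily.taut C n).x_mul_e a ν

lemma Tt_mul_Ee {n : ℕ} (l : ℕ) (h : l + 1 < n) (ν : Fin n → I) : Tt C l h * Ee C ν =
    Ee C (ν ∘ Equiv.swap (⟨l, Nat.lt_of_succ_lt h⟩ : Fin n) ⟨l + 1, h⟩) * Tt C l h :=
  (GenFamily.taut C n).tau_mul_e l h ν

lemma eq_of_mul_Ee {n : ℕ} {a b : Alg C n} (h : ∀ ν, a * Ee C ν = b * Ee C ν) : a = b := by
  simpa only [← Finset.mul_sum, sum_Ee, mul_one] using
    Finset.sum_congr rfl fun ν (_ : ν ∈ Finset.univ) => h ν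

variable (C) in
/-- The element `∑ f(ν) e(ν)` of `R(n)`. Every idempotent occurring below (`e(β)`, `e(β, α_i)`,
the projection to a given last letter, ...) is of this form for an indicator function `f`. -/
noncomputable def diag {n : ℕ} (f : (Fin n → I) → k) : Alg C n := ∑ ν, f ν • Ee C ν

lemma diag_mul_Ee {n : ℕ} (f : (Fin n → I) → k) (ν : Fin n → I) :
    diag C f * Ee C ν = f ν • Ee C ν := by
  simp [diag, Finset.sum_mul, Ee_mul_Ee]

lemma diag_mul_diag {n : ℕ} (f g : (Fin n → I) → k) :
    diag C f * diag C g = diag C (f * g) :=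
  eq_of_mul_Ee fun ν => by
    rw [mul_assoc, diag_mul_Ee, mul_smul_comm, diag_mul_Ee, diag_mul_Ee, smul_smul, mul_comm,
      Pi.mul_apply]

lemma diag_commute_diag {n : ℕ} (f g : (Fin n → I) → k) : Commute (diag C f) (diag C g) := by
  rw [Commute, SemiconjBy, diag_mul_diag, diag_mul_diag, mul_comm]

lemma sum_Ee_filter {n : ℕ} (p : (Fin n → I) → Prop) [DecidablePred p] :
    ∑ ν with p ν, Ee C ν = diag C fun ν => if p ν then 1 else 0 := by
  simp [diag, Finset.sum_filter]

lemma Ee_eq_diag {n : ℕ} (ν : Fin n → I) :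
    Ee C ν = diag C fun μ => if μ = ν then 1 else 0 := by
  simp [diag]

lemma Xx_commute_diag {n : ℕ} (a : Fin n) (f : (Fin n → I) → k) :
    Commute (Xx C a) (diag C f) :=
  Commute.sum_right _ _ _ fun ν _ => Commute.smul_right (Xx_mul_Ee a ν) _

lemma Tt_mul_diag {n : ℕ} (l : ℕ) (h : l + 1 < n) (f : (Fin n → I) → k) :
    Tt C l h * diag C f =
      diag C (fun ν => f (ν ∘ Equiv.swap (⟨l, Nat.lt_of_succ_lt h⟩ : Fin n) ⟨l + 1, h⟩))
        * Tt C l h := by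
  refine eq_of_mul_Ee fun ν => ?_
  have hs (a b : Fin n) : ⇑(Equiv.swap a b) ∘ Equiv.swap a b = id :=
    funext fun c => Equiv.swap_apply_self a b c
  rw [mul_assoc, mul_assoc, diag_mul_Ee, Tt_mul_Ee, ← mul_assoc, diag_mul_Ee, mul_smul_comm,
    Tt_mul_Ee, smul_mul_assoc, Function.comp_assoc, hs, Function.comp_id]

lemma Tt_commute_diag {n : ℕ} {l : ℕ} {h : l + 1 < n} {f : (Fin n → I) → k}
    (hf : ∀ ν, f (ν ∘ Equiv.swap (⟨l, Nat.lt_of_succ_lt h⟩ : Fin n) ⟨l + 1, h⟩) = f ν) :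
    Commute (Tt C l h) (diag C f) := by
  rw [Commute, SemiconjBy, Tt_mul_diag, funext hf]

/-! ### The inclusion of `R(n)` in `R(n + 1)` -/

lemma snoc_mk_of_lt {α : Type} {n : ℕ} (ν : Fin n → α) (i : α) {a : ℕ} (h : a < n) :
    (Fin.snoc ν i : Fin (n + 1) → α) ⟨a, Nat.lt_succ_of_lt h⟩ = ν ⟨a, h⟩ :=
  Fin.snoc_castSucc (α := fun _ => α) i ν ⟨a, h⟩

lemma snoc_comp_swap {α : Type} {n : ℕ} (ν : Fin n → α) (i : α) (l : ℕ) (h : l + 1 < n) :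
    (Fin.snoc ν i : Fin (n + 1) → α) ∘ Equiv.swap (⟨l, by omega⟩ : Fin (n + 1)) ⟨l + 1, by omega⟩
      = Fin.snoc (ν ∘ Equiv.swap (⟨l, by omega⟩ : Fin n) ⟨l + 1, h⟩) i := by
  funext a
  change (Fin.snoc ν i : Fin (n + 1) → α)
    (Equiv.swap (Fin.castSucc ⟨l, by omega⟩) (Fin.castSucc ⟨l + 1, h⟩) a) = _
  induction a using Fin.lastCases with
  | last =>
    rw [Equiv.swap_apply_of_ne_of_ne (Fin.castSucc_lt_last _).ne' (Fin.castSucc_lt_last _).ne',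
      Fin.snoc_last, Fin.snoc_last]
  | cast a =>
    rw [(Fin.castSucc_injective n).swap_apply, Fin.snoc_castSucc, Fin.snoc_castSucc,
      Function.comp_apply]

variable (C) in
/-- The family in `R(n + 1)` defining `incl`. -/
noncomputable def inclFamily (n : ℕ) : GenFamily C n (Alg C (n + 1)) where
  e ν := ∑ l : I, Ee C (Fin.snoc ν l)
  x a := Xx C a.castSucc
  tau l h := Tt C l (Nat.lt_succ_of_lt h)
  e_mul_e ν ν' := by
    simp only [Finset.sum_mul_sum, Ee_mul_Ee, Fin.snoc_inj]
    split_ifs with h <;> simp [h]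
  sum_e := by
    rw [← sum_Ee, ← Fintype.sum_prod_type']
    exact Fintype.sum_equiv ((Equiv.prodComm _ _).trans (Fin.snocEquiv fun _ => I)) _ _
      fun _ => rfl
  x_mul_x a b := (GenFamily.taut C _).x_mul_x _ _
  x_mul_e a ν := by simp only [Finset.mul_sum, Finset.sum_mul, Xx_mul_Ee]
  tau_mul_e l h ν := by
    simp only [Finset.mul_sum, Finset.sum_mul, ← snoc_comp_swap]
    exact Finset.sum_congr rfl fun i _ => Tt_mul_Ee _ _ _
  tau_mul_tau l h l' h' hl := (GenFamily.taut C _).tau_mul_tau _ _ _ _ hl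
  tau_sq l h ν := by
    simp only [Finset.mul_sum]
    refine Finset.sum_congr rfl fun i _ => ?_
    have := (GenFamily.taut C (n + 1)).tau_sq l (by omega) (Fin.snoc ν i)
    rw [snoc_mk_of_lt ν i h, snoc_mk_of_lt ν i (Nat.lt_of_succ_lt h)] at this
    exact this
  tau_x l h m ν := by
    have hl : (⟨l, by omega⟩ : Fin (n + 1)) = Fin.castSucc ⟨l, by omega⟩ := rfl
    have hl' : (⟨l + 1, by omega⟩ : Fin (n + 1)) = Fin.castSucc ⟨l + 1, h⟩ := rfl
    have htau_x (i : I) := (GenFamily.taut C (n + 1)).tau_x l (by omega) m.castSucc (Fin.snoc ν i)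
    simp only [Fin.snoc_castSucc, hl, hl',
      (Fin.castSucc_injective n).swap_apply, Fin.castSucc_inj] at htau_x
    rw [Finset.mul_sum]
    refine (Finset.sum_congr rfl fun i _ => htau_x i).trans ?_
    split_ifs <;> simp [GenFamily.taut]
  braid l h ν := by
    have hbraid (i : I) := (GenFamily.taut C (n + 1)).braid l (by omega) (Fin.snoc ν i)
    simp only [snoc_mk_of_lt ν _ h, snoc_mk_of_lt ν _ (Nat.lt_of_succ_lt h),
      snoc_mk_of_lt ν _ (Nat.lt_of_succ_lt (Nat.lt_of_succ_lt h))] at hbraid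
    rw [Finset.mul_sum]
    refine (Finset.sum_congr rfl fun i _ => hbraid i).trans ?_
    split_ifs
    · rw [Finset.mul_sum]; rfl
    · exact Finset.sum_const_zero

/-- The unital embedding `R(n) → R(n + 1)` adding a strand on the right, summed over all its
colours: `e(ν) ↦ ∑ₗ e(ν∗l)`. -/
noncomputable def incl {n : ℕ} : Alg C n →ₐ[k] Alg C (n + 1) := (inclFamily C n).lift

@[simp] lemma incl_Ee {n : ℕ} (ν : Fin n → I) :
    incl (Ee C ν) = ∑ l : I, Ee C (Fin.snoc ν l) := (inclFamily C n).lift_Ee ν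

@[simp] lemma incl_Xx {n : ℕ} (a : Fin n) :
    incl (Xx C a) = Xx C a.castSucc := (inclFamily C n).lift_Xx a

@[simp] lemma incl_Tt {n : ℕ} (l : ℕ) (h : l + 1 < n) :
    incl (Tt C l h) = Tt C l (Nat.lt_succ_of_lt h) := (inclFamily C n).lift_Tt l h

lemma incl_diag {n : ℕ} (f : (Fin n → I) → k) :
    incl (diag C f) = diag C fun ν => f (Fin.init ν) := by
  simp only [diag, map_sum, map_smul, incl_Ee, Finset.smul_sum]
  rw [← Fintype.sum_prod_type']
  exact Fintype.sum_equiv ((Equiv.prodComm _ _).trans (Fin.snocEquiv fun _ => I)) _ _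
    fun x => by simp [Fin.snocEquiv]

/-! ### The generators on the last strands -/

variable (C) in
/-- The polynomial generator `x_{n+1}` on the last strand of `R(n + 1)`. -/
noncomputable def xLast (n : ℕ) : Alg C (n + 1) := Xx C (Fin.last n)

variable (C) in
/-- The crossing `τ_{n+1}` of the last two strands of `R(n + 2)`. -/
noncomputable def tauLast (n : ℕ) : Alg C (n + 2) := Tt C n (Nat.lt_succ_self (n + 1))

variable (C) in
/-- The idempotent of `R(n + 1)` requiring the last strand to have colour `l`. -/
noncomputable def eLast (n : ℕ) (l : I) : Alg C (n + 1) :=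
  diag C fun ν => if ν (Fin.last n) = l then 1 else 0

variable (C) in
/-- The idempotent of `R(n + 2)` requiring the last two strands to have the same colour. -/
noncomputable def eLastEq (n : ℕ) : Alg C (n + 2) :=
  diag C fun ν => if ν (Fin.last n).castSucc = ν (Fin.last (n + 1)) then 1 else 0

lemma eLast_mul_Ee {n : ℕ} (l : I) (ν : Fin (n + 1) → I) :
    eLast C n l * Ee C ν = if ν (Fin.last n) = l then Ee C ν else 0 := by
  rw [eLast, diag_mul_Ee, ite_smul, one_smul, zero_smul]

lemma incl_eLast_mul_Ee {n : ℕ} (l : I) (ν : Fin (n + 2) → I) :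
    incl (eLast C n l) * Ee C ν = if ν (Fin.last n).castSucc = l then Ee C ν else 0 := by
  rw [eLast, incl_diag, diag_mul_Ee, ite_smul, one_smul, zero_smul]
  rfl

lemma incl_incl_eLast_mul_Ee {n : ℕ} (l : I) (ν : Fin (n + 3) → I) :
    incl (incl (eLast C n l)) * Ee C ν =
      if ν (Fin.last n).castSucc.castSucc = l then Ee C ν else 0 := by
  rw [eLast, incl_diag, incl_diag, diag_mul_Ee, ite_smul, one_smul, zero_smul]
  rfl

lemma eLastEq_mul_Ee {n : ℕ} (ν : Fin (n + 2) → I) : eLastEq C n * Ee C ν =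
    if ν (Fin.last n).castSucc = ν (Fin.last (n + 1)) then Ee C ν else 0 := by
  rw [eLastEq, diag_mul_Ee, ite_smul, one_smul, zero_smul]

lemma eLast_mul_eLast {n : ℕ} (l m : I) :
    eLast C n l * eLast C n m = if l = m then eLast C n l else 0 :=
  eq_of_mul_Ee fun ν => by
    have h : (if l = m then eLast C n l else 0) * Ee C ν =
        if l = m ∧ ν (Fin.last n) = l then Ee C ν else 0 := by
      rw [ite_mul, zero_mul, eLast_mul_Ee, ite_and]
    rw [mul_assoc, eLast_mul_Ee, mul_ite, mul_zero, eLast_mul_Ee, h, ← ite_and]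
    exact if_congr (by grind) rfl rfl

lemma sum_eLast {n : ℕ} : ∑ l : I, eLast C n l = 1 :=
  eq_of_mul_Ee fun ν => by simp [Finset.sum_mul, eLast_mul_Ee]

lemma eLastEq_eq_sum {n : ℕ} :
    eLastEq C n = ∑ a : I, incl (eLast C n a) * eLast C (n + 1) a :=
  eq_of_mul_Ee fun ν => by
    simp [Finset.sum_mul, mul_assoc, eLast_mul_Ee, eLastEq_mul_Ee, incl_eLast_mul_Ee]

lemma Ee_eq_incl_mul_eLast {n : ℕ} (ν : Fin (n + 1) → I) :
    Ee C ν = incl (Ee C (Fin.init ν)) * eLast C n (ν (Fin.last n)) := by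
  rw [Ee_eq_diag (Fin.init ν), incl_diag, eLast, diag_mul_diag, Ee_eq_diag]
  congr 1
  funext μ
  rw [Pi.mul_apply, ite_zero_mul_ite_zero, mul_one]
  refine if_congr ?_ rfl rfl
  conv_lhs => rw [← Fin.snoc_init_self μ, ← Fin.snoc_init_self ν, Fin.snoc_inj]

/-! ### Commutation relations on the last strands -/

lemma incl_commute_eLast {n : ℕ} (r : Alg C n) (l : I) : Commute (incl r) (eLast C n l) := by
  refine commute_map_of_generators incl (fun ν => ?_) (fun a => ?_) (fun m h => ?_) r
  · rw [Ee_eq_diag, incl_diag]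
    exact diag_commute_diag _ _
  · rw [incl_Xx]
    exact Xx_commute_diag _ _
  · rw [incl_Tt]
    refine Tt_commute_diag fun ν => ?_
    rw [Function.comp_apply, Equiv.swap_apply_of_ne_of_ne] <;>
    · simp [Fin.ext_iff]; omega

lemma incl_commute_xLast {n : ℕ} (r : Alg C n) : Commute (incl r) (xLast C n) := by
  refine commute_map_of_generators incl (fun ν => ?_) (fun a => ?_) (fun m h => ?_) r
  · rw [Ee_eq_diag, incl_diag]
    exact (Xx_commute_diag _ _).symm
  · rw [incl_Xx]
    exact (GenFamily.taut C (n + 1)).x_mul_x _ _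
  · rw [incl_Tt]
    refine eq_of_mul_Ee fun μ => ?_
    have := (GenFamily.taut C (n + 1)).tau_x m (by omega) (Fin.last n) μ
    rw [Equiv.swap_apply_of_ne_of_ne, if_neg, if_neg, sub_mul, sub_eq_zero] at this
    · exact this
    all_goals simp [Fin.ext_iff]; omega

lemma xLast_commute_eLast {n : ℕ} (l : I) : Commute (xLast C n) (eLast C n l) :=
  Xx_commute_diag _ _

lemma incl_incl_commute_tauLast {n : ℕ} (r : Alg C n) :
    Commute (incl (incl r)) (tauLast C n) := by
  refine commute_map_of_generators (incl.comp incl) (fun ν => ?_) (fun a => ?_)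
    (fun m h => ?_) r
  · rw [AlgHom.comp_apply, Ee_eq_diag, incl_diag, incl_diag]
    refine (Tt_commute_diag fun μ => ?_).symm
    congr 2
    funext a
    simp only [Fin.init, Function.comp_apply]
    rw [Equiv.swap_apply_of_ne_of_ne] <;>
    · simp [Fin.ext_iff]; omega
  · rw [AlgHom.comp_apply, incl_Xx, incl_Xx]
    refine eq_of_mul_Ee fun μ => ?_
    have := (GenFamily.taut C (n + 2)).tau_x n (by omega) a.castSucc.castSucc μ
    rw [Equiv.swap_apply_of_ne_of_ne, if_neg, if_neg, sub_mul, sub_eq_zero] at this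
    · exact this.symm
    all_goals simp [Fin.ext_iff]; omega
  · rw [AlgHom.comp_apply, incl_Tt, incl_Tt]
    exact (GenFamily.taut C (n + 2)).tau_mul_tau _ _ _ _ (by omega)

lemma tauLast_mul_eLast {n : ℕ} (l : I) :
    tauLast C n * eLast C (n + 1) l = incl (eLast C n l) * tauLast C n := by
  rw [eLast, tauLast, Tt_mul_diag, eLast, incl_diag]
  congr! 5 with ν
  exact congrArg ν (Equiv.swap_apply_right _ _)

lemma eLast_mul_tauLast {n : ℕ} (l : I) :
    eLast C (n + 1) l * tauLast C n = tauLast C n * incl (eLast C n l) := by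
  rw [eLast, eLast, incl_diag, tauLast, Tt_mul_diag]
  congr! 5 with ν
  exact congrArg ν (Equiv.swap_apply_left _ _).symm

lemma tauLast_mul_xLast {n : ℕ} :
    tauLast C n * xLast C (n + 1) = incl (xLast C n) * tauLast C n + eLastEq C n := by
  refine eq_of_mul_Ee fun μ => ?_
  have htau_x := (GenFamily.taut C (n + 2)).tau_x n (by omega) (Fin.last (n + 1)) μ
  have hswap : Equiv.swap (⟨n, by omega⟩ : Fin (n + 2)) ⟨n + 1, by omega⟩ (Fin.last (n + 1)) =
    ⟨n, by omega⟩ := Equiv.swap_apply_right _ _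
  rw [hswap, if_neg (by simp [Fin.ext_iff]), sub_mul, sub_eq_iff_eq_add'] at htau_x
  rw [add_mul, eLastEq_mul_Ee, xLast, xLast, incl_Xx]
  refine htau_x.trans (congrArg _ ?_)
  exact if_congr (and_iff_right rfl) rfl rfl

lemma xLast_mul_tauLast {n : ℕ} :
    xLast C (n + 1) * tauLast C n = tauLast C n * incl (xLast C n) + eLastEq C n := by
  refine eq_of_mul_Ee fun μ => ?_
  have htau_x := (GenFamily.taut C (n + 2)).tau_x n (by omega) (Fin.last n).castSucc μ
  have hswap : Equiv.swap (⟨n, by omega⟩ : Fin (n + 2)) ⟨n + 1, by omega⟩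
    (Fin.last n).castSucc = ⟨n + 1, by omega⟩ := Equiv.swap_apply_left _ _
  have hne : ¬((Fin.last n).castSucc = (⟨n + 1, by omega⟩ : Fin (n + 2)) ∧
      μ ⟨n, by omega⟩ = μ ⟨n + 1, by omega⟩) := fun h => by simp [Fin.ext_iff] at h
  rw [hswap, if_neg hne, sub_mul, sub_eq_iff_eq_add', ← sub_eq_iff_eq_add] at htau_x
  rw [add_mul, eLastEq_mul_Ee, xLast, xLast, incl_Xx]
  refine htau_x.symm.trans ((sub_eq_add_neg _ _).trans (congrArg _ ?_))
  rw [apply_ite Neg.neg, neg_neg, neg_zero]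
  exact if_congr (and_iff_right rfl) rfl rfl

lemma tauLast_mul_tauLast {n : ℕ} :
    tauLast C n * tauLast C n = ∑ a : I, ∑ b : I,
      Qel C a b (incl (xLast C n)) (xLast C (n + 1)) *
        (incl (eLast C n a) * eLast C (n + 1) b) := by
  refine eq_of_mul_Ee fun μ => ?_
  have htau_sq := (GenFamily.taut C (n + 2)).tau_sq n (by omega) μ
  rw [pow_two] at htau_sq
  refine htau_sq.trans ?_
  simp only [Finset.sum_mul, mul_assoc, eLast_mul_Ee, mul_ite, incl_eLast_mul_Ee, mul_zero,
    Finset.sum_ite_eq, Finset.mem_univ, if_true, xLast, incl_Xx]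
  rfl

lemma tauLast_braid {n : ℕ} :
    tauLast C (n + 1) * incl (tauLast C n) * tauLast C (n + 1)
      - incl (tauLast C n) * tauLast C (n + 1) * incl (tauLast C n) =
    ∑ a : I, ∑ b : I, Qdiff C a b (incl (incl (xLast C n))) (incl (xLast C (n + 1)))
        (xLast C (n + 2)) *
      (incl (incl (eLast C n a)) * (incl (eLast C (n + 1) b) * eLast C (n + 2) a)) := by
  refine eq_of_mul_Ee fun μ => ?_
  have hbraid := (GenFamily.taut C (n + 3)).braid n (by omega) μ
  rw [tauLast, tauLast, incl_Tt]
  refine hbraid.trans ?_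
  simp only [Finset.sum_mul, mul_assoc, eLast_mul_Ee, mul_ite, incl_eLast_mul_Ee, mul_zero,
    incl_incl_eLast_mul_Ee, xLast, incl_Xx]
  rw [Finset.sum_comm]
  simp only [Finset.sum_ite_eq, Finset.mem_univ, if_true]
  by_cases h : μ (Fin.last n).castSucc.castSucc = μ (Fin.last (n + 2))
  · rw [if_pos (by exact h), if_pos h, ← h]; rfl
  · rw [if_neg (by exact h), if_neg h]

/-! ### Spanning sets of `R(n + 1)` over `R(n)` -/

lemma Qel_mem {A : Type} [Ring A] [Algebra k A] (S : Subalgebra k A) (i j : I) {u v : A}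
    (hu : u ∈ S) (hv : v ∈ S) : Qel C i j u v ∈ S := by
  unfold Qel
  split_ifs
  · exact S.zero_mem
  · refine S.sum_mem fun p _ => S.sum_mem fun q _ => ?_
    split_ifs
    · exact S.smul_mem (S.mul_mem (S.pow_mem hu _) (S.pow_mem hv _)) _
    · exact S.zero_mem

lemma Qdiff_mem {A : Type} [Ring A] [Algebra k A] (S : Subalgebra k A) (i j : I) {u v w : A}
    (hu : u ∈ S) (hv : v ∈ S) (hw : w ∈ S) : Qdiff C i j u v w ∈ S := by
  unfold Qdiff
  split_ifs
  · exact S.zero_mem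
  · refine S.sum_mem fun p _ => S.sum_mem fun q _ => ?_
    split_ifs
    · refine S.smul_mem (S.mul_mem (S.sum_mem fun c _ => ?_) (S.pow_mem hv _)) _
      exact S.mul_mem (S.pow_mem hu _) (S.pow_mem hw _)
    · exact S.zero_mem

/-- The subalgebra of all `y` with `y T ⊆ T`. -/
def leftStabilizer {A : Type} [Ring A] [Algebra k A] (T : Submodule k A) : Subalgebra k A where
  carrier := {y | ∀ t ∈ T, y * t ∈ T}
  mul_mem' {a b} ha hb t ht := by
    rw [mul_assoc]
    exact ha _ (hb _ ht)
  add_mem' {a b} ha hb t ht := by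
    rw [add_mul]
    exact T.add_mem (ha _ ht) (hb _ ht)
  algebraMap_mem' c t ht := by
    rw [← Algebra.smul_def]
    exact T.smul_mem _ ht

lemma mul_mem_of_mem_span {A : Type} [Ring A] [Algebra k A] {s : Set A} {y : A}
    {T : Submodule k A} (h : ∀ z ∈ s, y * z ∈ T) : ∀ t ∈ Submodule.span k s, y * t ∈ T :=
  fun t ht => (Submodule.map_span_le (LinearMap.mulLeft k y) s T).2 h ⟨t, ht, rfl⟩

lemma mul_mem_of_mem_span' {A : Type} [Ring A] [Algebra k A] {s : Set A} {y : A}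
    {T : Submodule k A} (h : ∀ z ∈ s, z * y ∈ T) : ∀ t ∈ Submodule.span k s, t * y ∈ T :=
  fun t ht => (Submodule.map_span_le (LinearMap.mulRight k y) s T).2 h ⟨t, ht, rfl⟩

lemma mem_of_last_generators_mem_zero (S : Subalgebra k (Alg C 1)) (hi : ∀ r, incl r ∈ S)
    (hx : xLast C 0 ∈ S) (he : ∀ l, eLast C 0 l ∈ S) (z : Alg C 1) : z ∈ S := by
  induction z using Alg.induction with
  | algebraMap c => exact S.algebraMap_mem c
  | e ν =>
    rw [Ee_eq_incl_mul_eLast]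
    exact S.mul_mem (hi _) (he _)
  | x a =>
    obtain rfl : a = Fin.last 0 := Subsingleton.elim _ _
    exact hx
  | tau l h => omega
  | add a b ha hb => exact S.add_mem ha hb
  | mul a b ha hb => exact S.mul_mem ha hb

lemma mem_of_last_generators_mem {n : ℕ} (S : Subalgebra k (Alg C (n + 2)))
    (hi : ∀ r, incl r ∈ S) (hx : xLast C (n + 1) ∈ S) (he : ∀ l, eLast C (n + 1) l ∈ S)
    (ht : tauLast C n ∈ S) (z : Alg C (n + 2)) : z ∈ S := by
  induction z using Alg.induction with
  | algebraMap c => exact S.algebraMap_mem c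
  | e ν =>
    rw [Ee_eq_incl_mul_eLast]
    exact S.mul_mem (hi _) (he _)
  | x a =>
    induction a using Fin.lastCases with
    | last => exact hx
    | cast a =>
      rw [← incl_Xx]
      exact hi _
  | tau l h =>
    obtain rfl | hl : l = n ∨ l + 1 < n + 1 := by omega
    · exact ht
    · rw [← incl_Tt l hl]
      exact hi _
  | add a b ha hb => exact S.add_mem ha hb
  | mul a b ha hb => exact S.mul_mem ha hb

variable (C) in
/-- The span `∑ R(n) x_{n+1}^a e_l` inside `R(n + 1)`, where `e_l = eLast C n l`. -/
def polySpan (n : ℕ) : Submodule k (Alg C (n + 1)) :=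
  Submodule.span k {z | ∃ r a l, z = incl r * (xLast C n ^ a * eLast C n l)}

variable (C) in
/-- The bimodule `R(n + 1) τ_{n+1} R(n + 1)` inside `R(n + 2)`, with the colours of the last
strand split off. -/
def tauSpan (n : ℕ) : Submodule k (Alg C (n + 2)) :=
  Submodule.span k {z | ∃ r r' l, z = incl r * (tauLast C n * (incl r' * eLast C (n + 1) l))}

variable (C) in
/-- The sum of `polySpan` and `tauSpan`, shown in `mackeySpan_eq_top` to be all of `R(n + 2)`:
the Mackey decomposition of `R(n + 2)` as an `R(n + 1)`-bimodule. -/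
def mackeySpan (n : ℕ) : Submodule k (Alg C (n + 2)) := polySpan C (n + 1) ⊔ tauSpan C n

lemma mem_polySpan {n : ℕ} (r a l) : incl r * (xLast C n ^ a * eLast C n l) ∈ polySpan C n :=
  Submodule.subset_span ⟨r, a, l, rfl⟩

lemma mem_tauSpan {n : ℕ} (r r' l) :
    incl r * (tauLast C n * (incl r' * eLast C (n + 1) l)) ∈ tauSpan C n :=
  Submodule.subset_span ⟨r, r', l, rfl⟩

lemma incl_mem_polySpan {n : ℕ} (r : Alg C n) : incl r ∈ polySpan C n := by
  rw [← mul_one (incl r), ← sum_eLast, Finset.mul_sum]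
  refine Submodule.sum_mem _ fun l _ => ?_
  simpa only [pow_zero, one_mul] using mem_polySpan r 0 l

lemma incl_mem_leftStabilizer_polySpan {n : ℕ} (r : Alg C n) :
    incl r ∈ leftStabilizer (polySpan C n) := by
  refine mul_mem_of_mem_span ?_
  rintro _ ⟨s, a, l, rfl⟩
  rw [← mul_assoc, ← map_mul]
  exact mem_polySpan _ _ _

lemma xLast_mem_leftStabilizer_polySpan {n : ℕ} :
    xLast C n ∈ leftStabilizer (polySpan C n) := by
  refine mul_mem_of_mem_span ?_
  rintro _ ⟨s, a, l, rfl⟩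
  rw [(incl_commute_xLast s).symm.left_comm, ← mul_assoc (xLast C n), ← pow_succ']
  exact mem_polySpan _ _ _

lemma eLast_mem_leftStabilizer_polySpan {n : ℕ} (m : I) :
    eLast C n m ∈ leftStabilizer (polySpan C n) := by
  refine mul_mem_of_mem_span ?_
  rintro _ ⟨s, a, l, rfl⟩
  rw [(incl_commute_eLast s m).symm.left_comm,
    ((xLast_commute_eLast m).pow_left a).symm.left_comm, eLast_mul_eLast]
  split_ifs
  · exact mem_polySpan _ _ _
  · simp only [mul_zero, Submodule.zero_mem]

lemma polySpan_zero_eq_top : polySpan C 0 = ⊤ := by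
  refine Submodule.eq_top_iff'.2 fun z => ?_
  rw [← mul_one z]
  refine mem_of_last_generators_mem_zero (leftStabilizer (polySpan C 0))
    incl_mem_leftStabilizer_polySpan xLast_mem_leftStabilizer_polySpan
    eLast_mem_leftStabilizer_polySpan z _ ?_
  simpa only [map_one] using incl_mem_polySpan (C := C) 1

lemma incl_mem_leftStabilizer_tauSpan {n : ℕ} (r : Alg C (n + 1)) :
    incl r ∈ leftStabilizer (tauSpan C n) := by
  refine mul_mem_of_mem_span ?_
  rintro _ ⟨s, r', l, rfl⟩
  rw [← mul_assoc, ← map_mul]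
  exact mem_tauSpan _ _ _

lemma eLast_mem_leftStabilizer_tauSpan {n : ℕ} (m : I) :
    eLast C (n + 1) m ∈ leftStabilizer (tauSpan C n) := by
  refine mul_mem_of_mem_span ?_
  rintro _ ⟨s, r', l, rfl⟩
  rw [(incl_commute_eLast s m).symm.left_comm, ← mul_assoc (eLast C (n + 1) m),
    eLast_mul_tauLast, mul_assoc, ← mul_assoc (incl (eLast C n m)), ← map_mul]
  exact mem_tauSpan _ _ _

lemma mem_mackeySpan_of_mem_polySpan {n : ℕ} {z : Alg C (n + 2)} (h : z ∈ polySpan C (n + 1)) :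
    z ∈ mackeySpan C n := Submodule.mem_sup_left h

lemma mem_mackeySpan_of_mem_tauSpan {n : ℕ} {z : Alg C (n + 2)} (h : z ∈ tauSpan C n) :
    z ∈ mackeySpan C n := Submodule.mem_sup_right h

lemma mem_leftStabilizer_mackeySpan {n : ℕ} {y : Alg C (n + 2)}
    (hp : ∀ t ∈ polySpan C (n + 1), y * t ∈ mackeySpan C n)
    (ht : ∀ t ∈ tauSpan C n, y * t ∈ mackeySpan C n) : y ∈ leftStabilizer (mackeySpan C n) := by
  intro t h
  obtain ⟨a, ha, b, hb, rfl⟩ := Submodule.mem_sup.1 h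
  rw [mul_add]
  exact Submodule.add_mem _ (hp _ ha) (ht _ hb)

lemma incl_mem_leftStabilizer_mackeySpan {n : ℕ} (r : Alg C (n + 1)) :
    incl r ∈ leftStabilizer (mackeySpan C n) :=
  mem_leftStabilizer_mackeySpan
    (fun _ h => mem_mackeySpan_of_mem_polySpan (incl_mem_leftStabilizer_polySpan r _ h))
    fun _ h => mem_mackeySpan_of_mem_tauSpan (incl_mem_leftStabilizer_tauSpan r _ h)

lemma eLast_mem_leftStabilizer_mackeySpan {n : ℕ} (m : I) :
    eLast C (n + 1) m ∈ leftStabilizer (mackeySpan C n) :=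
  mem_leftStabilizer_mackeySpan
    (fun _ h => mem_mackeySpan_of_mem_polySpan (eLast_mem_leftStabilizer_polySpan m _ h))
    fun _ h => mem_mackeySpan_of_mem_tauSpan (eLast_mem_leftStabilizer_tauSpan m _ h)

lemma mul_incl_mem_mackeySpan {n : ℕ} (s : Alg C (n + 1)) :
    ∀ t ∈ mackeySpan C n, t * incl s ∈ mackeySpan C n := by
  intro t ht
  obtain ⟨a, ha, b, hb, rfl⟩ := Submodule.mem_sup.1 ht
  rw [add_mul]
  refine Submodule.add_mem _ (mem_mackeySpan_of_mem_polySpan (mul_mem_of_mem_span' ?_ _ ha))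
    (mem_mackeySpan_of_mem_tauSpan (mul_mem_of_mem_span' ?_ _ hb))
  · rintro _ ⟨r, a, l, rfl⟩
    rw [mul_assoc, mul_assoc, ← (incl_commute_eLast s l).eq,
      ((incl_commute_xLast s).pow_right a).symm.left_comm, ← mul_assoc, ← map_mul]
    exact mem_polySpan _ _ _
  · rintro _ ⟨r, r', l, rfl⟩
    rw [mul_assoc, mul_assoc, mul_assoc, ← (incl_commute_eLast s l).eq,
      ← mul_assoc (incl r'), ← map_mul]
    exact mem_tauSpan _ _ _

lemma mul_eLast_mem_mackeySpan {n : ℕ} (m : I) :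
    ∀ t ∈ mackeySpan C n, t * eLast C (n + 1) m ∈ mackeySpan C n := by
  intro t ht
  obtain ⟨a, ha, b, hb, rfl⟩ := Submodule.mem_sup.1 ht
  rw [add_mul]
  refine Submodule.add_mem _ (mem_mackeySpan_of_mem_polySpan (mul_mem_of_mem_span' ?_ _ ha))
    (mem_mackeySpan_of_mem_tauSpan (mul_mem_of_mem_span' ?_ _ hb))
  · rintro _ ⟨r, a, l, rfl⟩
    rw [mul_assoc, mul_assoc, eLast_mul_eLast]
    split_ifs
    · exact mem_polySpan _ _ _
    · simp only [mul_zero, Submodule.zero_mem]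
  · rintro _ ⟨r, r', l, rfl⟩
    rw [mul_assoc, mul_assoc, mul_assoc, eLast_mul_eLast]
    split_ifs
    · exact mem_tauSpan _ _ _
    · simp only [mul_zero, Submodule.zero_mem]

lemma one_mem_mackeySpan {n : ℕ} : (1 : Alg C (n + 2)) ∈ mackeySpan C n :=
  mem_mackeySpan_of_mem_polySpan (by simpa only [map_one] using incl_mem_polySpan (C := C) 1)

lemma mem_mackeySpan_of_mem_leftStabilizer {n : ℕ} {y : Alg C (n + 2)}
    (h : y ∈ leftStabilizer (mackeySpan C n)) : y ∈ mackeySpan C n := by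
  simpa only [mul_one] using h 1 one_mem_mackeySpan

lemma tauLast_mem_mackeySpan {n : ℕ} : tauLast C n ∈ mackeySpan C n := by
  rw [← mul_one (tauLast C n), ← sum_eLast, Finset.mul_sum]
  refine Submodule.sum_mem _ fun l _ => mem_mackeySpan_of_mem_tauSpan ?_
  simpa only [map_one, one_mul] using mem_tauSpan (C := C) (n := n) 1 1 l

lemma eLastEq_mem_leftStabilizer_mackeySpan {n : ℕ} :
    eLastEq C n ∈ leftStabilizer (mackeySpan C n) := by
  rw [eLastEq_eq_sum]
  exact Subalgebra.sum_mem _ fun a _ => Subalgebra.mul_mem _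
    (incl_mem_leftStabilizer_mackeySpan _) (eLast_mem_leftStabilizer_mackeySpan a)

lemma xLast_mem_leftStabilizer_mackeySpan {n : ℕ} :
    xLast C (n + 1) ∈ leftStabilizer (mackeySpan C n) := by
  refine mem_leftStabilizer_mackeySpan
    (fun _ h => mem_mackeySpan_of_mem_polySpan (xLast_mem_leftStabilizer_polySpan _ h))
    (mul_mem_of_mem_span ?_)
  rintro _ ⟨r, r', l, rfl⟩
  have h_cross : tauLast C n * incl (xLast C n) * (incl r' * eLast C (n + 1) l)
      ∈ mackeySpan C n := by
    rw [mul_assoc, ← mul_assoc (incl (xLast C n)), ← map_mul, ← mul_assoc]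
    exact mul_eLast_mem_mackeySpan _ _ (mul_incl_mem_mackeySpan _ _ tauLast_mem_mackeySpan)
  have h_eq : eLastEq C n * (incl r' * eLast C (n + 1) l) ∈ mackeySpan C n := by
    refine eLastEq_mem_leftStabilizer_mackeySpan _ (mul_eLast_mem_mackeySpan l _ ?_)
    exact mem_mackeySpan_of_mem_polySpan (incl_mem_polySpan r')
  rw [(incl_commute_xLast r).symm.left_comm, ← mul_assoc (xLast C (n + 1)), xLast_mul_tauLast,
    add_mul]
  exact incl_mem_leftStabilizer_mackeySpan r _ (Submodule.add_mem _ h_cross h_eq)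

lemma tauLast_mul_xLast_pow_mem {n : ℕ} (a : ℕ) :
    tauLast C n * xLast C (n + 1) ^ a ∈ mackeySpan C n := by
  induction a with
  | zero => simpa only [pow_zero, mul_one] using tauLast_mem_mackeySpan
  | succ a ih =>
    rw [pow_succ', ← mul_assoc, tauLast_mul_xLast, add_mul, mul_assoc]
    exact Submodule.add_mem _ (incl_mem_leftStabilizer_mackeySpan _ _ ih)
      (mem_mackeySpan_of_mem_leftStabilizer (Subalgebra.mul_mem _
        eLastEq_mem_leftStabilizer_mackeySpan
        (Subalgebra.pow_mem _ xLast_mem_leftStabilizer_mackeySpan a)))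

lemma tauLast_mul_incl_xLast_pow_mul_tauLast_mem {n : ℕ} (a : ℕ) :
    tauLast C n * (incl (xLast C n) ^ a * tauLast C n) ∈ mackeySpan C n := by
  induction a with
  | zero =>
    rw [pow_zero, one_mul, tauLast_mul_tauLast]
    exact Submodule.sum_mem _ fun a _ => Submodule.sum_mem _ fun b _ =>
      mem_mackeySpan_of_mem_leftStabilizer <| Subalgebra.mul_mem _
        (Qel_mem _ _ _ (incl_mem_leftStabilizer_mackeySpan _) xLast_mem_leftStabilizer_mackeySpan)
        (Subalgebra.mul_mem _ (incl_mem_leftStabilizer_mackeySpan _)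
          (eLast_mem_leftStabilizer_mackeySpan _))
  | succ a ih =>
    rw [pow_succ', mul_assoc, ← mul_assoc, eq_sub_of_add_eq xLast_mul_tauLast.symm, sub_mul,
      mul_assoc]
    exact Submodule.sub_mem _ (xLast_mem_leftStabilizer_mackeySpan _ ih)
      (eLastEq_mem_leftStabilizer_mackeySpan _ (Subalgebra.pow_mem _
        (incl_mem_leftStabilizer_mackeySpan _) a _ tauLast_mem_mackeySpan))

lemma tauLast_mem_leftStabilizer_mackeySpan {n : ℕ} (h : ∀ r : Alg C (n + 1),
    tauLast C n * (incl r * tauLast C n) ∈ mackeySpan C n) :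
    tauLast C n ∈ leftStabilizer (mackeySpan C n) := by
  refine mem_leftStabilizer_mackeySpan (mul_mem_of_mem_span ?_) (mul_mem_of_mem_span ?_)
  · rintro _ ⟨r, a, l, rfl⟩
    rw [← mul_assoc (incl r), ((incl_commute_xLast r).pow_right a).eq, mul_assoc, ← mul_assoc,
      ← mul_assoc]
    exact mul_eLast_mem_mackeySpan _ _
      (mul_incl_mem_mackeySpan _ _ (tauLast_mul_xLast_pow_mem _))
  · rintro _ ⟨r, r', l, rfl⟩
    simpa only [mul_assoc] using
      mul_eLast_mem_mackeySpan l _ (mul_incl_mem_mackeySpan r' _ (h r))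

lemma tauLast_mul_incl_mul_tauLast_mem_of_mem_span {n : ℕ} {s : Set (Alg C (n + 1))}
    {T : Submodule k (Alg C (n + 2))} (h : ∀ r ∈ s, tauLast C n * (incl r * tauLast C n) ∈ T) :
    ∀ r ∈ Submodule.span k s, tauLast C n * (incl r * tauLast C n) ∈ T :=
  fun r hr => (Submodule.map_span_le (LinearMap.mulLeft k (tauLast C n) ∘ₗ
    LinearMap.mulRight k (tauLast C n) ∘ₗ incl.toLinearMap) s _).2 h ⟨r, hr, rfl⟩

lemma tauLast_mul_incl_mul_tauLast_mem_of_mem_polySpan {n : ℕ} {r : Alg C (n + 1)}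
    (hr : r ∈ polySpan C n) : tauLast C n * (incl r * tauLast C n) ∈ mackeySpan C n := by
  refine tauLast_mul_incl_mul_tauLast_mem_of_mem_span ?_ r hr
  rintro _ ⟨s, a, m, rfl⟩
  rw [map_mul, map_mul, map_pow, mul_assoc, mul_assoc, ← tauLast_mul_eLast,
    (incl_incl_commute_tauLast s).symm.left_comm]
  refine incl_mem_leftStabilizer_mackeySpan _ _ ?_
  simpa only [mul_assoc] using
    mul_eLast_mem_mackeySpan m _ (tauLast_mul_incl_xLast_pow_mul_tauLast_mem (C := C) (n := n) a)

lemma tauLast_mul_incl_tauLast_mul_tauLast_mem {n : ℕ} :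
    tauLast C (n + 1) * incl (tauLast C n) * tauLast C (n + 1) ∈ mackeySpan C (n + 1) := by
  rw [sub_eq_iff_eq_add.1 tauLast_braid]
  refine Submodule.add_mem _ (Submodule.sum_mem _ fun a _ => Submodule.sum_mem _ fun b _ => ?_) ?_
  · exact mem_mackeySpan_of_mem_leftStabilizer <| Subalgebra.mul_mem _
      (Qdiff_mem _ _ _ (incl_mem_leftStabilizer_mackeySpan _)
        (incl_mem_leftStabilizer_mackeySpan _) xLast_mem_leftStabilizer_mackeySpan)
      (Subalgebra.mul_mem _ (incl_mem_leftStabilizer_mackeySpan _) (Subalgebra.mul_mem _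
        (incl_mem_leftStabilizer_mackeySpan _) (eLast_mem_leftStabilizer_mackeySpan _)))
  · rw [mul_assoc]
    exact incl_mem_leftStabilizer_mackeySpan _ _
      (mul_incl_mem_mackeySpan _ _ tauLast_mem_mackeySpan)

lemma tauLast_mul_incl_mul_tauLast_mem_of_mem_tauSpan {n : ℕ} {r : Alg C (n + 2)}
    (hr : r ∈ tauSpan C n) :
    tauLast C (n + 1) * (incl r * tauLast C (n + 1)) ∈ mackeySpan C (n + 1) := by
  refine tauLast_mul_incl_mul_tauLast_mem_of_mem_span ?_ r hr
  rintro _ ⟨s, s', m, rfl⟩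
  have h_eq : tauLast C (n + 1) * (incl
      (incl s * (tauLast C n * (incl s' * eLast C (n + 1) m))) * tauLast C (n + 1)) =
      incl (incl s) * (tauLast C (n + 1) * incl (tauLast C n) * tauLast C (n + 1)
        * incl (incl s') * eLast C (n + 2) m) := by
    simp only [map_mul, mul_assoc]
    rw [← tauLast_mul_eLast, (incl_incl_commute_tauLast s').left_comm,
      (incl_incl_commute_tauLast s).symm.left_comm]
  rw [h_eq]
  exact incl_mem_leftStabilizer_mackeySpan _ _ (mul_eLast_mem_mackeySpan m _
    (mul_incl_mem_mackeySpan _ _ tauLast_mul_incl_tauLast_mul_tauLast_mem))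

lemma mackeySpan_eq_top_of_tauLast_mul_incl_mul_tauLast_mem {n : ℕ} (h : ∀ r : Alg C (n + 1),
    tauLast C n * (incl r * tauLast C n) ∈ mackeySpan C n) : mackeySpan C n = ⊤ :=
  Submodule.eq_top_iff'.2 fun z => mem_mackeySpan_of_mem_leftStabilizer <|
    mem_of_last_generators_mem (leftStabilizer (mackeySpan C n))
      incl_mem_leftStabilizer_mackeySpan xLast_mem_leftStabilizer_mackeySpan
      eLast_mem_leftStabilizer_mackeySpan (tauLast_mem_leftStabilizer_mackeySpan h) z

theorem mackeySpan_eq_top (n : ℕ) : mackeySpan C n = ⊤ := by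
  induction n with
  | zero =>
    exact mackeySpan_eq_top_of_tauLast_mul_incl_mul_tauLast_mem fun r =>
      tauLast_mul_incl_mul_tauLast_mem_of_mem_polySpan
        (Submodule.eq_top_iff'.1 polySpan_zero_eq_top r)
  | succ n ih =>
    refine mackeySpan_eq_top_of_tauLast_mul_incl_mul_tauLast_mem fun r => ?_
    obtain ⟨a, ha, b, hb, rfl⟩ := Submodule.mem_sup.1 (Submodule.eq_top_iff'.1 ih r)
    rw [map_add, add_mul, mul_add]
    exact Submodule.add_mem _ (tauLast_mul_incl_mul_tauLast_mem_of_mem_polySpan ha)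
      (tauLast_mul_incl_mul_tauLast_mem_of_mem_tauSpan hb)

variable (C) in
/-- The minimal left coset representative `τ_n ⋯ τ_{b+1}` of `R(n + 1)` (strands are numbered
from `1` here), for `b ≤ n`; it is `1` for `b = n`. -/
noncomputable def tauChain : (n : ℕ) → ℕ → Alg C (n + 1)
  | 0, _ => 1
  | n + 1, b => if b = n + 1 then 1 else tauLast C n * incl (tauChain n b)

lemma tauChain_self (n : ℕ) : tauChain C n n = 1 := by
  cases n <;> simp [tauChain]

lemma tauChain_succ {n b : ℕ} (h : b ≤ n) :
    tauChain C (n + 1) b = tauLast C n * incl (tauChain C n b) := by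
  rw [tauChain, if_neg (by omega)]

variable (C) in
/-- The span of the products `r x_{n+1}^a e_l τ_n ⋯ τ_{b+1}` with `r ∈ R(n)`, shown in
`cosetSpan_eq_top` to be all of `R(n + 1)`. -/
def cosetSpan (n : ℕ) : Submodule k (Alg C (n + 1)) :=
  Submodule.span k {z | ∃ r a l, ∃ b ≤ n,
    z = incl r * (xLast C n ^ a * (eLast C n l * tauChain C n b))}

lemma mem_cosetSpan {n b : ℕ} (r a l) (hb : b ≤ n) :
    incl r * (xLast C n ^ a * (eLast C n l * tauChain C n b)) ∈ cosetSpan C n :=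
  Submodule.subset_span ⟨r, a, l, b, hb, rfl⟩

lemma incl_mem_leftStabilizer_cosetSpan {n : ℕ} (r : Alg C n) :
    incl r ∈ leftStabilizer (cosetSpan C n) := by
  refine mul_mem_of_mem_span ?_
  rintro _ ⟨s, a, l, b, hb, rfl⟩
  rw [← mul_assoc, ← map_mul]
  exact mem_cosetSpan _ _ _ hb

lemma xLast_mem_leftStabilizer_cosetSpan {n : ℕ} :
    xLast C n ∈ leftStabilizer (cosetSpan C n) := by
  refine mul_mem_of_mem_span ?_
  rintro _ ⟨s, a, l, b, hb, rfl⟩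
  rw [(incl_commute_xLast s).symm.left_comm, ← mul_assoc (xLast C n), ← pow_succ']
  exact mem_cosetSpan _ _ _ hb

lemma polySpan_le_cosetSpan (n : ℕ) : polySpan C n ≤ cosetSpan C n := by
  refine Submodule.span_le.2 ?_
  rintro _ ⟨r, a, l, rfl⟩
  have h := mem_cosetSpan r a l le_rfl
  rwa [tauChain_self, mul_one] at h

lemma eLastEq_mul_incl_mem_polySpan {n : ℕ} (r : Alg C (n + 1)) :
    eLastEq C n * incl r ∈ polySpan C (n + 1) := by
  rw [eLastEq_eq_sum]
  exact Subalgebra.sum_mem (leftStabilizer _) (fun a _ => Subalgebra.mul_mem _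
    (incl_mem_leftStabilizer_polySpan _) (eLast_mem_leftStabilizer_polySpan a))
    _ (incl_mem_polySpan _)

lemma tauLast_mul_incl_mem_cosetSpan {n b : ℕ} (hb : b ≤ n) (m : I) (a : ℕ) :
    tauLast C n * incl (xLast C n ^ a * (eLast C n m * tauChain C n b)) ∈ cosetSpan C (n + 1) := by
  induction a with
  | zero =>
    rw [pow_zero, one_mul, map_mul, ← mul_assoc, ← eLast_mul_tauLast, mul_assoc,
      ← tauChain_succ hb]
    simpa only [map_one, one_mul, pow_zero] using
      mem_cosetSpan (C := C) (n := n + 1) 1 0 m (hb.trans n.le_succ)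
  | succ a ih =>
    rw [pow_succ', mul_assoc, map_mul, ← mul_assoc, eq_sub_of_add_eq xLast_mul_tauLast.symm,
      sub_mul, mul_assoc]
    exact Submodule.sub_mem _ (xLast_mem_leftStabilizer_cosetSpan _ ih)
      (polySpan_le_cosetSpan _ (eLastEq_mul_incl_mem_polySpan _))

theorem cosetSpan_eq_top (n : ℕ) : cosetSpan C n = ⊤ := by
  induction n with
  | zero => exact top_le_iff.1 (polySpan_zero_eq_top.ge.trans (polySpan_le_cosetSpan 0))
  | succ n ih =>
    refine top_le_iff.1 ((mackeySpan_eq_top n).ge.trans (sup_le (polySpan_le_cosetSpan _) ?_))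
    refine Submodule.span_le.2 ?_
    rintro _ ⟨r, r', l, rfl⟩
    refine incl_mem_leftStabilizer_cosetSpan _ _ ?_
    rw [(incl_commute_eLast r' l).eq, ← mul_assoc, tauLast_mul_eLast, mul_assoc]
    refine incl_mem_leftStabilizer_cosetSpan _ _ ?_
    have hr' : r' ∈ cosetSpan C n := ih ▸ trivial
    refine (Submodule.map_span_le (LinearMap.mulLeft k (tauLast C n) ∘ₗ incl.toLinearMap)
      _ _).2 ?_ ⟨r', hr', rfl⟩
    rintro _ ⟨s, a, l, b, hb, rfl⟩
    change tauLast C n * incl _ ∈ _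
    rw [map_mul, (incl_incl_commute_tauLast s).symm.left_comm]
    exact incl_mem_leftStabilizer_cosetSpan _ _ (tauLast_mul_incl_mem_cosetSpan hb _ _)

/-! ### The calibrated representation -/

section Calibrated

variable {K : Type} [Field K] [Algebra k K]

lemma Qel_symm {A : Type} [CommRing A] [Algebra k A] (i j : I) (u v : A) :
    Qel C i j u v = Qel C j i v u := by
  unfold Qel
  by_cases h : i = j
  · rw [if_pos h, if_pos h.symm]
  · rw [if_neg h, if_neg (Ne.symm h), Finset.sum_comm]
    refine Finset.sum_congr rfl fun p _ => Finset.sum_congr rfl fun q _ => ?_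
    rw [C.symmetrize i j, add_comm, C.t_symm, mul_comm (u ^ _)]

lemma Qdiff_mul_sub {A : Type} [CommRing A] [Algebra k A] (i j : I) (u v w : A) :
    Qdiff C i j u v w * (u - w) = Qel C i j u v - Qel C i j w v := by
  unfold Qel Qdiff
  split_ifs with h
  · rw [zero_mul, sub_zero]
  · simp only [Finset.sum_mul, ← Finset.sum_sub_distrib]
    refine Finset.sum_congr rfl fun p _ => Finset.sum_congr rfl fun q _ => ?_
    split_ifs
    · rw [← smul_sub, ← sub_mul, smul_mul_assoc, ← geom_sum₂_mul u w p, mul_right_comm]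
      simp only [Finset.sum_mul]
    · rw [zero_mul, sub_zero]

/-- The diagonal coefficient of a crossing of two strands labelled `p` and `q` in the calibrated
representation; a label consists of the eigenvalue of `x_a` and the colour of the strand. -/
def diagCoeff {J : Type} [DecidableEq J] (p q : K × J) : K :=
  if p.2 = q.2 then -(p.1 - q.1)⁻¹ else 0

variable (C) in
/-- The product of the two off-diagonal coefficients of a crossing in the calibrated
representation. -/
def crossNorm (p q : K × I) : K :=
  if p.2 = q.2 then -((p.1 - q.1)⁻¹ ^ 2) else Qel C p.2 q.2 p.1 q.1

open Classical in
variable (C) in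
/-- The off-diagonal coefficient of a crossing in the calibrated representation. Only the product
`crossCoeff C p q * crossCoeff C q p` matters, so one of the two factors is normalized to `1`. -/
noncomputable def crossCoeff (p q : K × I) : K :=
  if WellOrderingRel p q then 1 else crossNorm C p q

lemma diagCoeff_comm {J : Type} [DecidableEq J] (p q : K × J) :
    diagCoeff q p = -diagCoeff p q := by
  unfold diagCoeff
  simp only [eq_comm (a := q.2), ← neg_sub p.1 q.1, inv_neg]
  split_ifs
  · rfl
  · exact neg_zero.symm

lemma crossNorm_comm (p q : K × I) : crossNorm C q p = crossNorm C p q := by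
  unfold crossNorm
  simp only [eq_comm (a := q.2), ← neg_sub p.1 q.1, inv_neg, neg_sq, Qel_symm q.2]

lemma crossCoeff_mul_crossCoeff {p q : K × I} (h : p ≠ q) :
    crossCoeff C p q * crossCoeff C q p = crossNorm C p q := by
  unfold crossCoeff
  obtain hpq | hpq | hqp := trichotomous_of WellOrderingRel p q
  · rw [if_pos hpq, if_neg (asymm_of WellOrderingRel hpq), one_mul, crossNorm_comm]
  · exact absurd hpq h
  · rw [if_pos hqp, if_neg (asymm_of WellOrderingRel hqp), mul_one]

lemma fst_sub_fst_ne_zero {J : Type} {p q : K × J} (h : p ≠ q) (hcol : p.2 = q.2) :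
    p.1 - q.1 ≠ 0 := fun h0 => h (Prod.ext (sub_eq_zero.1 h0) hcol)

lemma diagCoeff_mul_sub {J : Type} [DecidableEq J] {p q : K × J} (h : p ≠ q) :
    diagCoeff p q * (p.1 - q.1) = if p.2 = q.2 then -1 else 0 := by
  unfold diagCoeff
  split_ifs with hcol
  · rw [neg_mul, inv_mul_cancel₀ (fst_sub_fst_ne_zero h hcol)]
  · exact zero_mul _

lemma diagCoeff_sq_add_crossNorm (p q : K × I) :
    diagCoeff p q * diagCoeff p q + crossNorm C p q = Qel C p.2 q.2 p.1 q.1 := by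
  unfold diagCoeff crossNorm
  split_ifs with hcol
  · rw [Qel, if_pos hcol]
    ring
  · rw [zero_mul, zero_add]

lemma diagCoeff_braid {p q r : K × I} (hpq : p ≠ q) (hpr : p ≠ r) (hqr : q ≠ r) :
    diagCoeff q r * diagCoeff p q * diagCoeff q r + crossNorm C q r * diagCoeff p r
      - (diagCoeff p q * diagCoeff q r * diagCoeff p q + crossNorm C p q * diagCoeff p r) =
    if p.2 = r.2 then Qdiff C p.2 q.2 p.1 q.1 r.1 else 0 := by
  by_cases cpr : p.2 = r.2
  · have npr := fst_sub_fst_ne_zero hpr cpr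
    by_cases cpq : p.2 = q.2
    · have cqr := cpq.symm.trans cpr
      have npq := fst_sub_fst_ne_zero hpq cpq
      have nqr := fst_sub_fst_ne_zero hqr cqr
      rw [if_pos cpr, Qdiff, if_pos cpq]
      simp only [diagCoeff, crossNorm, if_pos cpr, if_pos cpq, if_pos cqr]
      field_simp
      ring
    · have cqr : q.2 ≠ r.2 := fun h => cpq (cpr.trans h.symm)
      have hQ := Qdiff_mul_sub (C := C) p.2 q.2 p.1 q.1 r.1
      rw [Qel_symm p.2 q.2 r.1 q.1] at hQ
      simp only [diagCoeff, crossNorm, if_pos cpr, if_neg cpq, if_neg cqr]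
      rw [← cpr]
      field_simp
      linear_combination (-1 : K) * hQ
  · have hzero : diagCoeff p q * diagCoeff q r = 0 := by
      unfold diagCoeff
      split_ifs with cpq cqr
      · exact absurd (cpq.trans cqr) cpr
      all_goals simp only [mul_zero, zero_mul]
    have hpr0 : diagCoeff p r = 0 := if_neg cpr
    rw [if_neg cpr, hpr0]
    linear_combination (diagCoeff q r - diagCoeff p q) * hzero

lemma diagCoeff_mul_diagCoeff {J : Type} [DecidableEq J] {p q r : K × J} (hpq : p ≠ q)
    (hpr : p ≠ r) (hqr : q ≠ r) : diagCoeff q r * diagCoeff p q =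
      diagCoeff p q * diagCoeff p r + diagCoeff p r * diagCoeff q r := by
  by_cases h : p.2 = q.2 ∧ q.2 = r.2
  · have npq := fst_sub_fst_ne_zero hpq h.1
    have nqr := fst_sub_fst_ne_zero hqr h.2
    have npr := fst_sub_fst_ne_zero hpr (h.1.trans h.2)
    simp only [diagCoeff, if_pos h.1, if_pos h.2, if_pos (h.1.trans h.2)]
    field_simp
    ring
  · unfold diagCoeff
    split_ifs <;> grind

/-- The labelling `σ` with the labels at `a` and `b` interchanged. -/
def swapLabels {n : ℕ} {α : Type} (σ : Fin n ↪ α) (a b : Fin n) : Fin n ↪ α :=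
  (Equiv.swap a b).toEmbedding.trans σ

lemma swapLabels_apply {n : ℕ} {α : Type} (σ : Fin n ↪ α) (a b c : Fin n) :
    swapLabels σ a b c = σ (Equiv.swap a b c) := rfl

lemma swapLabels_swapLabels {n : ℕ} {α : Type} (σ : Fin n ↪ α) (a b : Fin n) :
    swapLabels (swapLabels σ a b) a b = σ :=
  DFunLike.ext _ _ fun c => congrArg σ (Equiv.swap_apply_self a b c)

lemma swapLabels_braid {n : ℕ} {α : Type} (σ : Fin n ↪ α) {a b c : Fin n} (hab : a ≠ b)
    (hac : a ≠ c) (hbc : b ≠ c) :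
    swapLabels (swapLabels (swapLabels σ b c) a b) b c =
      swapLabels (swapLabels (swapLabels σ a b) b c) a b := by
  refine DFunLike.ext _ _ fun d => congrArg σ ?_
  change Equiv.swap b c (Equiv.swap a b (Equiv.swap b c d)) =
    Equiv.swap a b (Equiv.swap b c (Equiv.swap a b d))
  grind

lemma swapLabels_comm {n : ℕ} {α : Type} (σ : Fin n ↪ α) {a b c d : Fin n} (hac : a ≠ c)
    (had : a ≠ d) (hbc : b ≠ c) (hbd : b ≠ d) :
    swapLabels (swapLabels σ a b) c d = swapLabels (swapLabels σ c d) a b := by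
  refine DFunLike.ext _ _ fun e => congrArg σ ?_
  change Equiv.swap a b (Equiv.swap c d e) = Equiv.swap c d (Equiv.swap a b e)
  grind

/-- The colours of the strands of a labelling. -/
def colours {n : ℕ} {L J : Type} (σ : Fin n ↪ L × J) : Fin n → J := fun a => (σ a).2

lemma colours_swapLabels {n : ℕ} {L J : Type} (σ : Fin n ↪ L × J) (a b : Fin n) :
    colours (swapLabels σ a b) = colours σ ∘ Equiv.swap a b := rfl

/-- The space of the calibrated representation of `R(n)`: functions on the labellings of the
strands by pairwise different pairs of an eigenvalue and a colour. -/
abbrev LabelFun (J K : Type) (n : ℕ) : Type := (Fin n ↪ K × J) → K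

/-- Multiplication by a function of the labelling. -/
def multOp {J : Type} {n : ℕ} : LabelFun J K n →ₐ[k] Module.End K (LabelFun J K n) :=
  (Algebra.lmul K (LabelFun J K n)).restrictScalars k

lemma multOp_apply {J : Type} {n : ℕ} (f m : LabelFun J K n) (σ : Fin n ↪ K × J) :
    multOp (k := k) f m σ = f σ * m σ := rfl

variable (C) in
/-- The crossing of the strands `a` and `b` in the calibrated representation. -/
noncomputable def crossOp {n : ℕ} (a b : Fin n) : Module.End K (LabelFun I K n) where
  toFun m σ := diagCoeff (σ a) (σ b) * m σ + crossCoeff C (σ a) (σ b) * m (swapLabels σ a b)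
  map_add' m m' := by
    ext σ
    simp only [Pi.add_apply]
    ring
  map_smul' c m := by
    ext σ
    simp only [Pi.smul_apply, smul_eq_mul, RingHom.id_apply]
    ring

lemma crossOp_apply {n : ℕ} (a b : Fin n) (m : LabelFun I K n) (σ : Fin n ↪ K × I) :
    crossOp C a b m σ =
      diagCoeff (σ a) (σ b) * m σ + crossCoeff C (σ a) (σ b) * m (swapLabels σ a b) := rfl

lemma crossOp_sq_apply {n : ℕ} {a b : Fin n} (hab : a ≠ b) (m : LabelFun I K n)
    (σ : Fin n ↪ K × I) :
    crossOp C a b (crossOp C a b m) σ = Qel C (σ a).2 (σ b).2 (σ a).1 (σ b).1 * m σ := by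
  simp only [crossOp_apply, swapLabels_apply, Equiv.swap_apply_left, Equiv.swap_apply_right,
    swapLabels_swapLabels]
  rw [← diagCoeff_sq_add_crossNorm, ← crossCoeff_mul_crossCoeff (σ.injective.ne hab),
    diagCoeff_comm (σ a) (σ b)]
  ring

lemma crossOp_comm_apply {n : ℕ} {a b c d : Fin n} (hac : a ≠ c) (had : a ≠ d)
    (hbc : b ≠ c) (hbd : b ≠ d) (m : LabelFun I K n) (σ : Fin n ↪ K × I) :
    crossOp C a b (crossOp C c d m) σ = crossOp C c d (crossOp C a b m) σ := by
  simp only [crossOp_apply, swapLabels_apply, Equiv.swap_apply_of_ne_of_ne hac had,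
    Equiv.swap_apply_of_ne_of_ne hbc hbd, Equiv.swap_apply_of_ne_of_ne hac.symm hbc.symm,
    Equiv.swap_apply_of_ne_of_ne had.symm hbd.symm, swapLabels_comm σ hac had hbc hbd]
  ring

lemma crossOp_braid_apply {n : ℕ} {a b c : Fin n} (hab : a ≠ b) (hac : a ≠ c) (hbc : b ≠ c)
    (m : LabelFun I K n) (σ : Fin n ↪ K × I) :
    crossOp C b c (crossOp C a b (crossOp C b c m)) σ
      - crossOp C a b (crossOp C b c (crossOp C a b m)) σ =
    (if (σ a).2 = (σ c).2 then Qdiff C (σ a).2 (σ b).2 (σ a).1 (σ b).1 (σ c).1 else 0) * m σ := by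
  have hpq := σ.injective.ne hab
  have hpr := σ.injective.ne hac
  have hqr := σ.injective.ne hbc
  rw [← diagCoeff_braid hpq hpr hqr]
  simp only [crossOp_apply, swapLabels_apply, Equiv.swap_apply_left, Equiv.swap_apply_right,
    swapLabels_swapLabels, Equiv.swap_apply_of_ne_of_ne hab hac,
    Equiv.swap_apply_of_ne_of_ne hac.symm hbc.symm, swapLabels_braid σ hab hac hbc]
  rw [← crossCoeff_mul_crossCoeff hpq, ← crossCoeff_mul_crossCoeff hqr,
    diagCoeff_comm (σ a) (σ b), diagCoeff_comm (σ b) (σ c)]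
  linear_combination (crossCoeff C (σ b) (σ c) * m (swapLabels σ b c)
    - crossCoeff C (σ a) (σ b) * m (swapLabels σ a b)) * diagCoeff_mul_diagCoeff hpq hpr hqr

lemma diagCoeff_mul_comp_swap {n : ℕ} {J : Type} [DecidableEq J] (σ : Fin n ↪ K × J)
    (a b : Fin n) (f : (Fin n → J) → K) :
    diagCoeff (σ a) (σ b) * f (colours σ ∘ Equiv.swap a b) =
      diagCoeff (σ a) (σ b) * f (colours σ) := by
  by_cases hcol : (σ a).2 = (σ b).2
  · congr 2
    funext c
    simp only [Function.comp_apply, colours, Equiv.swap_apply_def]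
    grind
  · rw [diagCoeff, if_neg hcol, zero_mul, zero_mul]

lemma crossOp_mul_colours_apply {n : ℕ} (a b : Fin n) (f : (Fin n → I) → K)
    (m : LabelFun I K n) (σ : Fin n ↪ K × I) :
    crossOp C a b ((f ∘ colours) * m) σ = f (colours σ ∘ Equiv.swap a b) * crossOp C a b m σ := by
  simp only [crossOp_apply, Pi.mul_apply, Function.comp_apply, colours_swapLabels]
  linear_combination -m σ * diagCoeff_mul_comp_swap σ a b f

lemma diagCoeff_mul_fst_sub {n : ℕ} {J : Type} [DecidableEq J] {a b : Fin n} (hab : a ≠ b)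
    (c : Fin n) (σ : Fin n ↪ K × J) :
    diagCoeff (σ a) (σ b) * ((σ c).1 - (σ (Equiv.swap a b c)).1) =
      if c = a ∧ (σ a).2 = (σ b).2 then -1
      else if c = b ∧ (σ a).2 = (σ b).2 then 1 else 0 := by
  have hdiag := diagCoeff_mul_sub (σ.injective.ne hab)
  by_cases hca : c = a
  · subst hca
    simp only [Equiv.swap_apply_left, hdiag, true_and, hab, false_and, if_false]
  by_cases hcb : c = b
  · subst hcb
    simp only [Equiv.swap_apply_right, hca, false_and, if_false, true_and]
    rw [← neg_sub, mul_neg, hdiag, apply_ite Neg.neg, neg_neg, neg_zero]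
  · simp only [Equiv.swap_apply_of_ne_of_ne hca hcb, hca, hcb, false_and, if_false, sub_self,
      mul_zero]

lemma crossOp_mul_fst_apply {n : ℕ} {a b : Fin n} (hab : a ≠ b) (c : Fin n) (m : LabelFun I K n)
    (σ : Fin n ↪ K × I) :
    crossOp C a b ((fun τ => (τ c).1) * m) σ - (σ (Equiv.swap a b c)).1 * crossOp C a b m σ =
      (if c = a ∧ (σ a).2 = (σ b).2 then -1
        else if c = b ∧ (σ a).2 = (σ b).2 then 1 else 0) * m σ := by
  rw [← diagCoeff_mul_fst_sub hab]
  simp only [crossOp_apply, Pi.mul_apply, swapLabels_apply]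
  ring

lemma Qel_apply {S : Type} (i j : I) (f g : S → K) (s : S) :
    Qel C i j f g s = Qel C i j (f s) (g s) :=
  map_Qel (Pi.evalAlgHom k (fun _ => K) s) i j f g

lemma Qdiff_apply {S : Type} (i j : I) (f g h : S → K) (s : S) :
    Qdiff C i j f g h s = Qdiff C i j (f s) (g s) (h s) :=
  map_Qdiff (Pi.evalAlgHom k (fun _ => K) s) i j f g h

variable (C K) in
/-- The generators of `R(n)` acting in the calibrated representation. -/
noncomputable def calibratedFamily (n : ℕ) :
    GenFamily C n (Module.End K (LabelFun I K n)) where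
  e ν := multOp (k := k) fun σ => if colours σ = ν then 1 else 0
  x a := multOp (k := k) fun σ => (σ a).1
  tau l h := crossOp C ⟨l, Nat.lt_of_succ_lt h⟩ ⟨l + 1, h⟩
  e_mul_e ν ν' := by
    ext m σ
    rcases eq_or_ne ν ν' with rfl | h <;> by_cases hσ : colours σ = ν <;>
      simp [multOp_apply, *]
  sum_e := by
    ext m σ
    simp [multOp_apply]
  x_mul_x a b := by rw [← map_mul, ← map_mul, mul_comm]
  x_mul_e a ν := by rw [← map_mul, ← map_mul, mul_comm]
  tau_mul_e l h ν := by
    ext m σ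
    refine (crossOp_mul_colours_apply _ _ (fun μ => if μ = ν then 1 else 0) m σ).trans ?_
    simp only [Module.End.mul_apply, multOp_apply]
    congr 2
    exact propext (Equiv.comp_symm_eq (Equiv.swap _ _) _ _)
  tau_mul_tau l h l' h' hl := by
    ext m σ
    rw [Module.End.mul_apply, Module.End.mul_apply]
    apply crossOp_comm_apply <;> simp only [ne_eq, Fin.mk.injEq] <;> omega
  tau_sq l h ν := by
    ext m σ
    rw [pow_two, ← map_Qel, Module.End.mul_apply, Module.End.mul_apply, Module.End.mul_apply,
      crossOp_sq_apply (by simp), multOp_apply, multOp_apply, multOp_apply]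
    split_ifs with hσ
    · rw [← hσ, Qel_apply]
      rfl
    · simp only [zero_mul, mul_zero]
  tau_x l h c ν := by
    ext m σ
    refine (crossOp_mul_fst_apply (by simp) c _ σ).trans ?_
    by_cases hσ : colours σ = ν
    · have hν a : (σ a).2 = ν a := congrFun hσ a
      rw [hν, hν]
      split_ifs <;> simp [multOp_apply, hσ]
    · split_ifs <;> simp [multOp_apply, hσ]
  braid l h ν := by
    ext m σ
    rw [← map_Qdiff]
    refine (crossOp_braid_apply (by simp) (by simp [add_assoc]) (by simp) _ σ).trans ?_
    by_cases hσ : colours σ = ν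
    · have hν a : (σ a).2 = ν a := congrFun hσ a
      rw [hν, hν, hν]
      split_ifs
      · rw [Module.End.mul_apply, multOp_apply _ (multOp _ _), Qdiff_apply]
      · simp
    · split_ifs <;> simp [multOp_apply, hσ]

variable (C K) in
/-- The calibrated representation of `R(n)`: the `x_a` act diagonally by the eigenvalues of the
strands. -/
noncomputable def calibratedRep (n : ℕ) : Alg C n →ₐ[k] Module.End K (LabelFun I K n) :=
  (calibratedFamily C K n).lift

lemma calibratedRep_diag {n : ℕ} (f : (Fin n → I) → k) (m : LabelFun I K n)
    (σ : Fin n ↪ K × I) : calibratedRep C K n (diag C f) m σ = f (colours σ) • m σ := by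
  have hE ν : calibratedRep C K n (Ee C ν) m σ = if colours σ = ν then m σ else 0 := by
    rw [calibratedRep, GenFamily.lift_Ee]
    exact (ite_mul ..).trans (by rw [one_mul, zero_mul])
  simp only [diag, map_sum, map_smul, LinearMap.sum_apply, LinearMap.smul_apply,
    Finset.sum_apply, Pi.smul_apply, hE, smul_ite, smul_zero, Finset.sum_ite_eq,
    Finset.mem_univ, if_true]

lemma calibratedRep_Xx {n : ℕ} (a : Fin n) (m : LabelFun I K n) (σ : Fin n ↪ K × I) :
    calibratedRep C K n (Xx C a) m σ = (σ a).1 * m σ := by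
  rw [calibratedRep, GenFamily.lift_Xx]
  exact multOp_apply _ _ _

lemma calibratedRep_Tt {n : ℕ} (l : ℕ) (h : l + 1 < n) :
    calibratedRep C K n (Tt C l h) = crossOp C ⟨l, Nat.lt_of_succ_lt h⟩ ⟨l + 1, h⟩ :=
  GenFamily.lift_Tt _ _ _

/-! ### Restricting and extending functions of the labelling -/

/-- The labelling `ρ` with a further strand labelled `p` on the right. -/
def snocLabel {n : ℕ} {α : Type} (ρ : Fin n ↪ α) (p : α) (h : p ∉ Set.range ρ) :
    Fin (n + 1) ↪ α :=
  ⟨Fin.snoc (α := fun _ => α) ρ p, Fin.snoc_injective_iff.2 ⟨ρ.injective, h⟩⟩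

/-- The labelling `ρ` without its last strand. -/
def initLabel {n : ℕ} {α : Type} (ρ : Fin (n + 1) ↪ α) : Fin n ↪ α := Fin.castSuccEmb.trans ρ

section Labels

variable {n : ℕ} {α : Type}

@[simp] lemma initLabel_apply (ρ : Fin (n + 1) ↪ α) (a : Fin n) :
    initLabel ρ a = ρ a.castSucc := rfl

@[simp] lemma snocLabel_castSucc (ρ : Fin n ↪ α) (p : α) (h : p ∉ Set.range ρ) (a : Fin n) :
    snocLabel ρ p h a.castSucc = ρ a := Fin.snoc_castSucc (α := fun _ => α) _ _ _

@[simp] lemma snocLabel_last (ρ : Fin n ↪ α) (p : α) (h : p ∉ Set.range ρ) :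
    snocLabel ρ p h (Fin.last n) = p := Fin.snoc_last (α := fun _ => α) _ _

@[simp] lemma initLabel_snocLabel (ρ : Fin n ↪ α) (p : α) (h : p ∉ Set.range ρ) :
    initLabel (snocLabel ρ p h) = ρ :=
  DFunLike.ext _ _ fun a => snocLabel_castSucc ρ p h a

lemma label_ext {ρ ρ' : Fin (n + 1) ↪ α} (h : initLabel ρ = initLabel ρ')
    (h' : ρ (Fin.last n) = ρ' (Fin.last n)) : ρ = ρ' :=
  DFunLike.ext _ _ (Fin.lastCases h' (DFunLike.congr_fun h))

lemma range_snocLabel (ρ : Fin n ↪ α) (p : α) (h : p ∉ Set.range ρ) :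
    Set.range (snocLabel ρ p h) = insert p (Set.range ρ) :=
  Fin.range_snoc _ _

lemma range_swapLabels (ρ : Fin n ↪ α) (a b : Fin n) :
    Set.range (swapLabels ρ a b) = Set.range ρ :=
  (Equiv.swap a b).surjective.range_comp ρ

lemma initLabel_swapLabels_castSucc (ρ : Fin (n + 1) ↪ α) (a b : Fin n) :
    initLabel (swapLabels ρ a.castSucc b.castSucc) = swapLabels (initLabel ρ) a b :=
  DFunLike.ext _ _ fun c => congrArg ρ ((Fin.castSucc_injective n).swap_apply a b c)

lemma swapLabels_castSucc_last (ρ : Fin (n + 1) ↪ α) (a b : Fin n) :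
    swapLabels ρ a.castSucc b.castSucc (Fin.last n) = ρ (Fin.last n) :=
  congrArg ρ (Equiv.swap_apply_of_ne_of_ne (Fin.castSucc_lt_last _).ne'
    (Fin.castSucc_lt_last _).ne')

lemma swapLabels_snocLabel (ρ : Fin n ↪ α) (p : α) (h : p ∉ Set.range ρ) (a b : Fin n) :
    swapLabels (snocLabel ρ p h) a.castSucc b.castSucc =
      snocLabel (swapLabels ρ a b) p (by rwa [range_swapLabels]) := by
  refine label_ext ?_ ?_
  · rw [initLabel_swapLabels_castSucc, initLabel_snocLabel, initLabel_snocLabel]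
  · rw [swapLabels_castSucc_last, snocLabel_last, snocLabel_last]

end Labels

open Classical in
/-- Restriction of functions to the labellings whose last label is `p`. -/
noncomputable def restrictLabel {J : Type} {n : ℕ} (p : K × J) :
    LabelFun J K (n + 1) →ₗ[K] LabelFun J K n where
  toFun m ρ := if h : p ∉ Set.range ρ then m (snocLabel ρ p h) else 0
  map_add' m m' := by
    ext ρ
    simp only [Pi.add_apply]
    split_ifs
    · exact (add_zero 0).symm
    · rfl
  map_smul' c m := by
    ext ρ
    simp only [Pi.smul_apply, RingHom.id_apply]
    split_ifs
    · exact (smul_zero c).symm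
    · rfl

open Classical in
/-- Extension by zero of functions from the labellings whose last label is `q`. -/
noncomputable def extendLabel {J : Type} {n : ℕ} (q : K × J) :
    LabelFun J K n →ₗ[K] LabelFun J K (n + 1) where
  toFun m ρ := if ρ (Fin.last n) = q then m (initLabel ρ) else 0
  map_add' m m' := by
    ext ρ
    by_cases h : ρ (Fin.last n) = q <;> simp only [Pi.add_apply, h, if_true, if_false, add_zero]
  map_smul' c m := by
    ext ρ
    by_cases h : ρ (Fin.last n) = q <;>
      simp only [Pi.smul_apply, RingHom.id_apply, h, if_true, if_false, smul_zero]

section LabelFun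

variable {J : Type} {n : ℕ}

lemma restrictLabel_apply {p : K × J} (m : LabelFun J K (n + 1)) {ρ : Fin n ↪ K × J}
    (h : p ∉ Set.range ρ) : restrictLabel p m ρ = m (snocLabel ρ p h) := dif_pos h

lemma restrictLabel_eq_zero {p : K × J} (m : LabelFun J K (n + 1)) {ρ : Fin n ↪ K × J}
    (h : p ∈ Set.range ρ) : restrictLabel p m ρ = 0 := dif_neg (not_not.2 h)

open Classical in
lemma extendLabel_apply (q : K × J) (m : LabelFun J K n) (ρ : Fin (n + 1) ↪ K × J) :
    extendLabel q m ρ = if ρ (Fin.last n) = q then m (initLabel ρ) else 0 := rfl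

end LabelFun

lemma calibratedRep_mul_restrictLabel {n : ℕ} {r : Alg C (n + 1)} {f : K × I → K}
    (h : ∀ m σ, calibratedRep C K (n + 1) r m σ = f (σ (Fin.last n)) * m σ) (p : K × I)
    (m : LabelFun I K (n + 1)) :
    restrictLabel p (calibratedRep C K (n + 1) r m) = f p • restrictLabel p m := by
  ext ρ
  by_cases hp : p ∈ Set.range ρ
  · rw [Pi.smul_apply, restrictLabel_eq_zero _ hp, restrictLabel_eq_zero _ hp, smul_zero]
  · rw [Pi.smul_apply, restrictLabel_apply _ hp, restrictLabel_apply _ hp, h, snocLabel_last,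
      smul_eq_mul]

lemma restrictLabel_xLast (p : K × I) {n : ℕ} (m : LabelFun I K (n + 1)) :
    restrictLabel p (calibratedRep C K (n + 1) (xLast C n) m) = p.1 • restrictLabel p m :=
  calibratedRep_mul_restrictLabel (f := Prod.fst) (fun m σ => calibratedRep_Xx _ m σ) p m

lemma restrictLabel_xLast_pow (p : K × I) {n : ℕ} (a : ℕ) (m : LabelFun I K (n + 1)) :
    restrictLabel p (calibratedRep C K (n + 1) (xLast C n ^ a) m) =
      p.1 ^ a • restrictLabel p m := by
  induction a with
  | zero => rw [pow_zero, pow_zero, map_one, Module.End.one_apply, one_smul]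
  | succ a ih =>
    rw [pow_succ', map_mul, Module.End.mul_apply, restrictLabel_xLast, ih, smul_smul, ← pow_succ']

lemma restrictLabel_eLast (p : K × I) (l : I) {n : ℕ} (m : LabelFun I K (n + 1)) :
    restrictLabel p (calibratedRep C K (n + 1) (eLast C n l) m) =
      (if p.2 = l then (1 : K) else 0) • restrictLabel p m := by
  refine calibratedRep_mul_restrictLabel (f := fun p => if p.2 = l then 1 else 0)
    (fun m σ => ?_) p m
  rw [eLast, calibratedRep_diag, ite_smul, ite_mul, one_smul, zero_smul, one_mul, zero_mul]
  rfl

lemma intertwines_of_generators {n : ℕ} {V W : Type} [AddCommGroup V] [Module K V] [Module k V]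
    [IsScalarTower k K V] [AddCommGroup W] [Module K W] [Module k W] [IsScalarTower k K W]
    {f : Alg C n →ₐ[k] Module.End K V} {g : Alg C n →ₐ[k] Module.End K W} {T : V →ₗ[K] W}
    (he : ∀ ν v, T (f (Ee C ν) v) = g (Ee C ν) (T v))
    (hx : ∀ a v, T (f (Xx C a) v) = g (Xx C a) (T v))
    (ht : ∀ l h v, T (f (Tt C l h) v) = g (Tt C l h) (T v)) (r : Alg C n) (v : V) :
    T (f r v) = g r (T v) := by
  induction r using Alg.induction generalizing v with
  | algebraMap c =>
    rw [AlgHom.commutes, AlgHom.commutes, Module.algebraMap_end_apply,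
      Module.algebraMap_end_apply, LinearMap.map_smul_of_tower]
  | e ν => exact he ν v
  | x a => exact hx a v
  | tau l h => exact ht l h v
  | add a b ha hb => simp only [map_add, LinearMap.add_apply, ha, hb]
  | mul a b ha hb => simp only [map_mul, Module.End.mul_apply, ha, hb]

lemma restrictLabel_incl {n : ℕ} (p : K × I) (r : Alg C n) (m : LabelFun I K (n + 1)) :
    restrictLabel p (calibratedRep C K (n + 1) (incl r) m) =
      calibratedRep C K n r (restrictLabel p m) := by
  refine intertwines_of_generators (f := (calibratedRep C K (n + 1)).comp incl)
    (g := calibratedRep C K n) (fun ν m => ?_) (fun a m => ?_) (fun l hl m => ?_) r m <;>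
  refine funext fun ρ => ?_ <;> simp only [AlgHom.comp_apply] <;>
  by_cases h : p ∈ Set.range ρ
  · rw [Ee_eq_diag, calibratedRep_diag, restrictLabel_eq_zero _ h, restrictLabel_eq_zero _ h,
      smul_zero]
  · rw [Ee_eq_diag, incl_diag, calibratedRep_diag, restrictLabel_apply _ h,
      restrictLabel_apply _ h, calibratedRep_diag]
    exact congrArg (fun ρ => (if colours ρ = ν then (1 : k) else 0) • _)
      (initLabel_snocLabel ρ p h)
  · rw [calibratedRep_Xx, restrictLabel_eq_zero _ h, restrictLabel_eq_zero _ h, mul_zero]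
  · rw [incl_Xx, calibratedRep_Xx, restrictLabel_apply _ h, restrictLabel_apply _ h,
      calibratedRep_Xx, snocLabel_castSucc]
  · rw [calibratedRep_Tt, crossOp_apply, restrictLabel_eq_zero _ h, restrictLabel_eq_zero _ h,
      restrictLabel_eq_zero _ (by rwa [range_swapLabels]), mul_zero, mul_zero, add_zero]
  · rw [calibratedRep_Tt, crossOp_apply, incl_Tt, restrictLabel_apply _ h,
      restrictLabel_apply _ h, restrictLabel_apply _ (by rwa [range_swapLabels]),
      calibratedRep_Tt, ← swapLabels_snocLabel ρ p h,
      ← snocLabel_castSucc ρ p h ⟨l, Nat.lt_of_succ_lt hl⟩,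
      ← snocLabel_castSucc ρ p h ⟨l + 1, hl⟩]
    exact crossOp_apply _ _ _ _

lemma calibratedRep_incl_extendLabel {n : ℕ} (q : K × I) (r : Alg C n) (m : LabelFun I K n) :
    calibratedRep C K (n + 1) (incl r) (extendLabel q m) =
      extendLabel q (calibratedRep C K n r m) := by
  refine (intertwines_of_generators (f := calibratedRep C K n)
    (g := (calibratedRep C K (n + 1)).comp incl) (fun ν m => ?_) (fun a m => ?_)
    (fun l hl m => ?_) r m).symm <;>
  refine funext fun ρ => ?_ <;> simp only [AlgHom.comp_apply]
  · rw [Ee_eq_diag, incl_diag, calibratedRep_diag, extendLabel_apply, extendLabel_apply,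
      calibratedRep_diag, smul_ite, smul_zero]
    rfl
  · rw [incl_Xx, calibratedRep_Xx, extendLabel_apply, extendLabel_apply, calibratedRep_Xx,
      mul_ite, mul_zero]
    rfl
  · rw [incl_Tt, calibratedRep_Tt, calibratedRep_Tt]
    change _ = crossOp C (Fin.castSucc ⟨l, Nat.lt_of_succ_lt hl⟩) (Fin.castSucc ⟨l + 1, hl⟩) _ ρ
    rw [crossOp_apply, extendLabel_apply, extendLabel_apply, extendLabel_apply,
      swapLabels_castSucc_last, initLabel_swapLabels_castSucc]
    split_ifs
    · rfl
    · rw [mul_zero, mul_zero, add_zero]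

lemma restrictLabel_tauLast_extendLabel {n : ℕ} {p q : K × I} (hpq : p ≠ q)
    (m : LabelFun I K (n + 1)) :
    restrictLabel p (calibratedRep C K (n + 2) (tauLast C n) (extendLabel q m)) =
      crossCoeff C q p • extendLabel q (restrictLabel p m) := by
  refine funext fun ρ => ?_
  rw [Pi.smul_apply, extendLabel_apply, tauLast, calibratedRep_Tt]
  change restrictLabel p (crossOp C (Fin.last n).castSucc (Fin.last (n + 1)) _) ρ = _
  by_cases h : p ∈ Set.range ρ
  · rw [restrictLabel_eq_zero _ h]
    split_ifs with hq
    · have h' : p ∈ Set.range (initLabel ρ) := by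
        obtain ⟨a, rfl⟩ := h
        induction a using Fin.lastCases with
        | last => exact absurd hq hpq
        | cast a => exact ⟨a, rfl⟩
      rw [restrictLabel_eq_zero _ h', smul_zero]
    · rw [smul_zero]
  · have h' : p ∉ Set.range (initLabel ρ) := fun ⟨a, ha⟩ => h ⟨a.castSucc, ha⟩
    have hinit : initLabel (swapLabels (snocLabel ρ p h) (Fin.last n).castSucc
        (Fin.last (n + 1))) = snocLabel (initLabel ρ) p h' := by
      refine label_ext (DFunLike.ext _ _ fun a => ?_) ?_
      · have ha : a.castSucc ≠ Fin.last n := (Fin.castSucc_lt_last a).ne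
        rw [initLabel_apply, initLabel_apply, swapLabels_apply, Equiv.swap_apply_of_ne_of_ne
          ((Fin.castSucc_injective _).ne ha) (Fin.castSucc_lt_last _).ne, snocLabel_castSucc,
          initLabel_snocLabel, initLabel_apply]
      · rw [initLabel_apply, swapLabels_apply, Equiv.swap_apply_left, snocLabel_last,
          snocLabel_last]
    rw [restrictLabel_apply _ h, crossOp_apply, extendLabel_apply, extendLabel_apply,
      snocLabel_last, if_neg hpq, mul_zero, zero_add, swapLabels_apply,
      Equiv.swap_apply_right, snocLabel_castSucc, hinit]
    split_ifs with hq
    · rw [hq, restrictLabel_apply _ h', smul_eq_mul]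
    · rw [mul_zero, smul_zero]

end Calibrated

/-! ### Freeness of `R(n + 1)` over `R(n)` -/

section Free

variable {K : Type} [Field K] [Algebra k K]

lemma coeff_Qel_X_C {i j : I} (hij : i ≠ j) (v : K) :
    (Qel C i j Polynomial.X (Polynomial.C v)).coeff (-(C.a i j)).toNat =
      algebraMap k K (C.t i j (-(C.a i j)).toNat 0) := by
  have hcoeff p q : (C.t i j p q • (Polynomial.X ^ p * Polynomial.C v ^ q)).coeff
      (-(C.a i j)).toNat = if (-(C.a i j)).toNat = p then C.t i j p q • v ^ q else 0 := by
    rw [Polynomial.coeff_smul, ← Polynomial.C_pow, Polynomial.coeff_mul_C, Polynomial.coeff_X_pow,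
      ite_mul, one_mul, zero_mul, smul_ite, smul_zero]
  have hlead : ((-(C.a i j)).toNat : ℤ) = -(C.a i j) :=
    Int.toNat_of_nonneg (neg_nonneg.2 (C.a_nonpos i j hij))
  rw [Qel, if_neg hij]
  simp only [Polynomial.finsetSum_coeff, apply_ite (Polynomial.coeff · (-(C.a i j)).toNat), hcoeff,
    Polynomial.coeff_zero]
  rw [Finset.sum_eq_single_of_mem _ (Finset.self_mem_range_succ _),
    Finset.sum_eq_single_of_mem 0 (Finset.mem_range.2 (Nat.succ_pos _))]
  · rw [if_pos (by rw [hlead]; simp), if_pos rfl, pow_zero, Algebra.algebraMap_eq_smul_one]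
  · intro q _ hq
    refine if_neg fun h => ?_
    have hdq : C.d j * (q : ℤ) = 0 := by rw [hlead] at h; linarith
    exact (mul_pos (C.d_pos j) (Int.natCast_pos.2 (Nat.pos_of_ne_zero hq))).ne' hdq
  · intro p _ hp
    simp only [if_neg hp.symm, ite_self, Finset.sum_const_zero]

lemma finite_Qel_eq_zero {i j : I} (hij : i ≠ j) (v : K) :
    {y : K | Qel C i j y v = 0}.Finite := by
  set P : Polynomial K := Qel C i j Polynomial.X (Polynomial.C v) with hP
  have hP0 : P ≠ 0 := fun h => C.t_lead i j hij <| (map_eq_zero (algebraMap k K)).1 <| by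
    rw [← coeff_Qel_X_C hij v, ← hP, h, Polynomial.coeff_zero]
  refine (Polynomial.rootSet_finite P K).subset fun y hy => ?_
  have heval : Polynomial.aeval y P = Qel C i j y v := by
    refine (map_Qel ((Polynomial.aeval (R := K) y).restrictScalars k) i j _ _).trans ?_
    simp
  exact Polynomial.mem_rootSet.2 ⟨hP0, heval.trans hy⟩

lemma finite_crossCoeff_eq_zero (q : K × I) (i : I) :
    {y : K | crossCoeff C q (y, i) = 0}.Finite := by
  have hnorm {y : K} (hy : crossCoeff C q (y, i) = 0) : crossNorm C q (y, i) = 0 := by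
    unfold crossCoeff at hy
    split_ifs at hy
    · exact absurd hy one_ne_zero
    · exact hy
  by_cases h : q.2 = i
  · refine (Set.finite_singleton q.1).subset fun y hy => ?_
    have hinv : -((q.1 - y)⁻¹ ^ 2) = 0 := (if_pos h).symm.trans (hnorm hy)
    have hsub : q.1 - y = 0 := inv_eq_zero.1 (pow_eq_zero_iff two_ne_zero |>.1 (neg_eq_zero.1 hinv))
    exact (sub_eq_zero.1 hsub).symm
  · refine (finite_Qel_eq_zero (C := C) (Ne.symm h) q.1).subset fun y hy => ?_
    exact (Qel_symm i q.2 y q.1).trans ((if_neg h).symm.trans (hnorm hy))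

variable (C) in
/-- The label `p` is generic with respect to `σ` if every strand of `σ` can be moved past a strand
labelled `p` without annihilating the corresponding vector of the calibrated representation. -/
def IsGenericLabel {n : ℕ} (σ : Fin n ↪ K × I) (p : K × I) : Prop :=
  ∀ a, σ a ≠ p ∧ crossCoeff C (σ a) p ≠ 0

lemma infinite_isGenericLabel [Infinite K] {n : ℕ} (σ : Fin n ↪ K × I) (i : I) :
    {y : K | IsGenericLabel C σ (y, i)}.Infinite := by
  have hfin (a : Fin n) : {y : K | σ a = (y, i) ∨ crossCoeff C (σ a) (y, i) = 0}.Finite :=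
    ((Set.finite_singleton (σ a).1).subset fun y (hy : σ a = (y, i)) => by simp [hy]).union
      (finite_crossCoeff_eq_zero _ i)
  refine (Set.finite_iUnion hfin).infinite_compl.mono fun y hy a => ?_
  rw [← not_or]
  exact fun h => hy (Set.mem_iUnion.2 ⟨a, h⟩)

open Classical in
/-- The indicator function of the labelling `σ`. -/
noncomputable def labelDelta {J : Type} {n : ℕ} (σ : Fin n ↪ K × J) : LabelFun J K n :=
  fun ρ => if ρ = σ then 1 else 0

section LabelDelta

variable {J : Type} {n : ℕ}

lemma extendLabel_labelDelta (q : K × J) (σ : Fin n ↪ K × J) (h : q ∉ Set.range σ) :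
    extendLabel q (labelDelta σ) = labelDelta (snocLabel σ q h) := by
  funext ρ
  have hiff : ρ = snocLabel σ q h ↔ ρ (Fin.last n) = q ∧ initLabel ρ = σ :=
    ⟨by rintro rfl; exact ⟨snocLabel_last .., initLabel_snocLabel ..⟩, fun ⟨hq, hσ⟩ =>
      label_ext (hσ.trans (initLabel_snocLabel ..).symm) (hq.trans (snocLabel_last ..).symm)⟩
  classical
  rw [extendLabel_apply, labelDelta, labelDelta, ← ite_and]
  exact if_congr hiff.symm rfl rfl

lemma restrictLabel_extendLabel_of_ne {p q : K × J} (h : p ≠ q) (m : LabelFun J K n) :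
    restrictLabel p (extendLabel q m) = 0 := by
  funext ρ
  by_cases hp : p ∈ Set.range ρ
  · exact restrictLabel_eq_zero _ hp
  · rw [restrictLabel_apply _ hp, extendLabel_apply, snocLabel_last, if_neg h, Pi.zero_apply]

lemma restrictLabel_extendLabel_labelDelta {p : K × J} {σ : Fin n ↪ K × J}
    (h : p ∉ Set.range σ) : restrictLabel p (extendLabel p (labelDelta σ)) = labelDelta σ := by
  funext ρ
  by_cases hp : p ∈ Set.range ρ
  · rw [restrictLabel_eq_zero _ hp, labelDelta, if_neg]
    rintro rfl
    exact h hp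
  · rw [restrictLabel_apply _ hp, extendLabel_apply, snocLabel_last, if_pos rfl,
      initLabel_snocLabel]

end LabelDelta

lemma restrictLabel_tauChain_labelDelta_snocLabel {p q : K × I} (hpq : p ≠ q) {n b : ℕ}
    (hb : b ≤ n) {τ : Fin (n + 1) ↪ K × I} (hq : q ∉ Set.range τ) :
    restrictLabel p (calibratedRep C K (n + 2) (tauChain C (n + 1) b)
      (labelDelta (snocLabel τ q hq))) = crossCoeff C q p •
    extendLabel q (restrictLabel p (calibratedRep C K (n + 1) (tauChain C n b)
      (labelDelta τ))) := by
  rw [tauChain_succ hb, map_mul, Module.End.mul_apply, ← extendLabel_labelDelta,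
    calibratedRep_incl_extendLabel, restrictLabel_tauLast_extendLabel hpq]

/- The chains `τ_n ⋯ τ_{b+1}` act triangularly: the strand labelled `p` is inserted at position
`b` of `σ`, and then only the chain starting at `b` brings it to the last position. -/
lemma exists_restrictLabel_tauChain {p : K × I} {n b : ℕ} (hb : b ≤ n) {σ : Fin n ↪ K × I}
    (hσ : IsGenericLabel C σ p) :
    ∃ τ : Fin (n + 1) ↪ K × I, Set.range τ ⊆ insert p (Set.range σ) ∧ ∃ c : K, c ≠ 0 ∧
      (∀ b' ≤ n, b < b' →
        restrictLabel p (calibratedRep C K (n + 1) (tauChain C n b') (labelDelta τ)) = 0) ∧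
      restrictLabel p (calibratedRep C K (n + 1) (tauChain C n b) (labelDelta τ)) =
        c • labelDelta σ := by
  have hp : p ∉ Set.range σ := fun ⟨a, ha⟩ => (hσ a).1 ha
  obtain rfl | hlt := eq_or_lt_of_le hb
  · refine ⟨snocLabel σ p hp, (range_snocLabel ..).subset, 1, one_ne_zero,
      fun b' _ _ => by omega, ?_⟩
    rw [tauChain_self, map_one, Module.End.one_apply, ← extendLabel_labelDelta,
      restrictLabel_extendLabel_labelDelta hp, one_smul]
  · obtain ⟨n, rfl⟩ : ∃ m, n = m + 1 := ⟨n - 1, by omega⟩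
    set q := σ (Fin.last n)
    have hpq : p ≠ q := ((hσ _).1).symm
    have hqσ : q ∉ Set.range (initLabel σ) := fun ⟨a, ha⟩ =>
      (Fin.castSucc_lt_last a).ne (σ.injective ha)
    have hσ_eq : snocLabel (initLabel σ) q hqσ = σ :=
      label_ext (initLabel_snocLabel ..) (snocLabel_last ..)
    obtain ⟨τ, hτ, c, hc, hzero, hself⟩ := exists_restrictLabel_tauChain (Nat.lt_succ_iff.1 hlt)
      (σ := initLabel σ) (p := p) fun a => hσ a.castSucc
    have hqτ : q ∉ Set.range τ := fun h => (hτ h).elim hpq.symm hqσ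
    refine ⟨snocLabel τ q hqτ, ?_, crossCoeff C q p * c, mul_ne_zero (hσ _).2 hc,
      fun b' hb' hbb' => ?_, ?_⟩
    · rw [range_snocLabel, ← hσ_eq, range_snocLabel, Set.insert_comm]
      exact Set.insert_subset_insert hτ
    · obtain rfl | hlt' := eq_or_lt_of_le hb'
      · rw [tauChain_self, map_one, Module.End.one_apply, ← extendLabel_labelDelta,
          restrictLabel_extendLabel_of_ne hpq]
      · rw [restrictLabel_tauChain_labelDelta_snocLabel hpq (Nat.lt_succ_iff.1 hlt'),
          hzero b' (Nat.lt_succ_iff.1 hlt') hbb', map_zero, smul_zero]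
    · rw [restrictLabel_tauChain_labelDelta_snocLabel hpq (Nat.lt_succ_iff.1 hlt), hself, map_smul,
        smul_smul, extendLabel_labelDelta _ _ hqσ, hσ_eq]

variable (C) in
/-- Linear combinations with coefficients in `R(n)`, on the left, of the elements
`x_{n+1}^a e_l τ_n ⋯ τ_{b+1}` of `R(n + 1)`. -/
noncomputable def pbwMap (n : ℕ) : ((Fin (n + 1) × I × ℕ) →₀ Alg C n) →ₗ[k] Alg C (n + 1) :=
  Finsupp.lsum k fun t => (LinearMap.mulRight k
    (xLast C n ^ t.2.2 * (eLast C n t.2.1 * tauChain C n t.1))) ∘ₗ incl.toLinearMap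

lemma pbwMap_apply {n : ℕ} (F : (Fin (n + 1) × I × ℕ) →₀ Alg C n) : pbwMap C n F =
    F.sum fun t r => incl r * (xLast C n ^ t.2.2 * (eLast C n t.2.1 * tauChain C n t.1)) := rfl

theorem pbwMap_surjective (n : ℕ) : Function.Surjective (pbwMap C n) := by
  rw [← LinearMap.range_eq_top, ← top_le_iff, ← cosetSpan_eq_top n]
  refine Submodule.span_le.2 ?_
  rintro _ ⟨r, a, l, b, hb, rfl⟩
  refine ⟨Finsupp.single (⟨b, Nat.lt_succ_iff.2 hb⟩, l, a) r, ?_⟩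
  rw [pbwMap_apply, Finsupp.sum_single_index (by rw [map_zero, zero_mul])]

lemma restrictLabel_pbwMap {n : ℕ} (p : K × I) (F : (Fin (n + 1) × I × ℕ) →₀ Alg C n)
    (m : LabelFun I K (n + 1)) :
    restrictLabel p (calibratedRep C K (n + 1) (pbwMap C n F) m) = F.sum fun t r =>
      if p.2 = t.2.1 then p.1 ^ t.2.2 • calibratedRep C K n r
        (restrictLabel p (calibratedRep C K (n + 1) (tauChain C n t.1) m)) else 0 := by
  rw [pbwMap_apply, Finsupp.sum, map_sum, LinearMap.sum_apply, map_sum]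
  refine Finset.sum_congr rfl fun t _ => ?_
  rw [map_mul, Module.End.mul_apply, restrictLabel_incl, map_mul,
    Module.End.mul_apply, restrictLabel_xLast_pow, map_mul, Module.End.mul_apply,
    restrictLabel_eLast, ite_smul, one_smul, zero_smul]
  split_ifs with h
  · rw [map_smul]
    exact (if_pos h).symm
  · rw [smul_zero, map_zero]
    exact (if_neg h).symm

/-- The generating polynomial of the matrix coefficients at `(ρ, σ)` of the coefficients of
`x_{n+1}^a e_i τ_n ⋯ τ_{b+1}` in `F`, where `a` varies. -/
noncomputable def matrixCoeffPoly {n : ℕ} (F : (Fin (n + 1) × I × ℕ) →₀ Alg C n) (b : Fin (n + 1))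
    (i : I) (σ ρ : Fin n ↪ K × I) : Polynomial K :=
  F.sum fun t r => if t.1 = b ∧ t.2.1 = i then
    Polynomial.monomial t.2.2 (calibratedRep C K n r (labelDelta σ) ρ) else 0

lemma coeff_matrixCoeffPoly {n : ℕ} (F : (Fin (n + 1) × I × ℕ) →₀ Alg C n) (b : Fin (n + 1))
    (i : I) (a : ℕ) (σ ρ : Fin n ↪ K × I) : (matrixCoeffPoly F b i σ ρ).coeff a =
      calibratedRep C K n (F (b, i, a)) (labelDelta σ) ρ := by
  rw [matrixCoeffPoly, Finsupp.sum, Polynomial.finsetSum_coeff, Finset.sum_eq_single (b, i, a)]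
  · rw [if_pos ⟨rfl, rfl⟩, Polynomial.coeff_monomial, if_pos rfl]
  · rintro ⟨b', l, a'⟩ _ hne
    split_ifs with h
    · obtain ⟨rfl, rfl⟩ := h
      exact Polynomial.coeff_monomial_of_ne _ fun ha => hne (by rw [ha])
    · exact Polynomial.coeff_zero _
  · intro h
    simp [Finsupp.notMem_support_iff.1 h]

lemma eval_matrixCoeffPoly_eq_zero {n : ℕ} {F : (Fin (n + 1) × I × ℕ) →₀ Alg C n}
    (hF : ∀ σ : Fin (n + 1) ↪ K × I, calibratedRep C K (n + 1) (pbwMap C n F) (labelDelta σ) = 0)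
    {b : Fin (n + 1)} {i : I} (hb : ∀ b' < b, ∀ a, F (b', i, a) = 0) {σ : Fin n ↪ K × I}
    {y : K} (hy : IsGenericLabel C σ (y, i)) (ρ : Fin n ↪ K × I) :
    (matrixCoeffPoly F b i σ ρ).eval y = 0 := by
  obtain ⟨τ, -, c, hc, hzero, hself⟩ := exists_restrictLabel_tauChain (Nat.lt_succ_iff.1 b.2) hy
  have hτ := restrictLabel_pbwMap (y, i) F (labelDelta τ)
  rw [hF, map_zero] at hτ
  refine mul_left_cancel₀ hc ((Eq.trans ?_ (congrFun hτ ρ).symm).trans (mul_zero c).symm)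
  rw [matrixCoeffPoly, Finsupp.sum, Finsupp.sum, Polynomial.eval_finsetSum, Finset.mul_sum,
    Finset.sum_apply]
  refine Finset.sum_congr rfl fun ⟨b', l, a⟩ ht => ?_
  by_cases hl : i = l
  · subst hl
    rcases lt_trichotomy b' b with hlt | rfl | hgt
    · exact absurd (hb b' hlt a) (Finsupp.mem_support_iff.1 ht)
    · simp only [and_self, if_true, hself, Polynomial.eval_monomial, map_smul, Pi.smul_apply,
        smul_eq_mul]
      ring
    · simp [hgt.ne', hzero b' (Nat.lt_succ_iff.1 b'.2) hgt]
  · simp [hl, Ne.symm hl]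

variable (C K) in
/-- Elements of `R(n)` are determined by their action on the indicator functions in the calibrated
representation. -/
def FaithfulOnDeltas (n : ℕ) : Prop :=
  ∀ r : Alg C n, (∀ σ : Fin n ↪ K × I, calibratedRep C K n r (labelDelta σ) = 0) → r = 0

lemma FaithfulOnDeltas.eq_zero_of_pbwMap [Infinite K] {n : ℕ} (hn : FaithfulOnDeltas C K n)
    {F : (Fin (n + 1) × I × ℕ) →₀ Alg C n} (hF : ∀ σ : Fin (n + 1) ↪ K × I,
      calibratedRep C K (n + 1) (pbwMap C n F) (labelDelta σ) = 0) : F = 0 := by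
  suffices h : ∀ b i a, F (b, i, a) = 0 from Finsupp.ext fun t => h t.1 t.2.1 t.2.2
  intro b
  induction b using WellFoundedLT.induction with
  | ind b ih =>
  refine fun i a => hn _ fun σ => funext fun ρ => ?_
  have hpoly : matrixCoeffPoly F b i σ ρ = 0 := by
    refine Polynomial.eq_zero_of_infinite_isRoot _ ?_
    exact (infinite_isGenericLabel σ i).mono fun y hy =>
      eval_matrixCoeffPoly_eq_zero hF (fun b' hb' => ih b' hb' i) hy ρ
  rw [← coeff_matrixCoeffPoly, hpoly, Polynomial.coeff_zero, Pi.zero_apply]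

lemma exists_eq_algebraMap (r : Alg C 0) : ∃ c : k, r = algebraMap k _ c := by
  induction r using Alg.induction with
  | algebraMap c => exact ⟨c, rfl⟩
  | e ν => exact ⟨1, by rw [map_one, ← sum_Ee, Fintype.sum_subsingleton _ ν]⟩
  | x a => exact a.elim0
  | tau l h => omega
  | add a b ha hb =>
    obtain ⟨c, rfl⟩ := ha
    obtain ⟨d, rfl⟩ := hb
    exact ⟨c + d, (map_add ..).symm⟩
  | mul a b ha hb =>
    obtain ⟨c, rfl⟩ := ha
    obtain ⟨d, rfl⟩ := hb
    exact ⟨c * d, (map_mul ..).symm⟩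

theorem faithfulOnDeltas [Infinite K] (n : ℕ) : FaithfulOnDeltas C K n := by
  induction n with
  | zero =>
    intro r h
    obtain ⟨c, rfl⟩ := exists_eq_algebraMap r
    have hc := congrFun (h (Function.Embedding.ofIsEmpty)) Function.Embedding.ofIsEmpty
    rw [AlgHom.commutes, Module.algebraMap_end_apply, Pi.smul_apply, labelDelta, if_pos rfl,
      ← Algebra.algebraMap_eq_smul_one, Pi.zero_apply] at hc
    rw [(map_eq_zero _).1 hc, map_zero]
  | succ n ih =>
    intro r h
    obtain ⟨F, rfl⟩ := pbwMap_surjective n r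
    rw [ih.eq_zero_of_pbwMap h, map_zero]

theorem pbwMap_injective (n : ℕ) : Function.Injective (pbwMap C n) := by
  refine (injective_iff_map_eq_zero _).2 fun F hF => ?_
  refine (faithfulOnDeltas (K := AlgebraicClosure k) n).eq_zero_of_pbwMap fun σ => ?_
  rw [hF, map_zero, LinearMap.zero_apply]

end Free

/-! ### The cyclotomic ideal -/

/-- The subalgebra of all `y` with `T y ⊆ T`. -/
def rightStabilizer {A : Type} [Ring A] [Algebra k A] (T : Submodule k A) : Subalgebra k A where
  carrier := {y | ∀ t ∈ T, t * y ∈ T}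
  mul_mem' {a b} ha hb t ht := by
    rw [← mul_assoc]
    exact hb _ (ha _ ht)
  add_mem' {a b} ha hb t ht := by
    rw [mul_add]
    exact T.add_mem (ha _ ht) (hb _ ht)
  algebraMap_mem' c t ht := by
    rw [← Algebra.commutes, ← Algebra.smul_def]
    exact T.smul_mem _ ht

lemma mul_mul_mem_of_mem_span {A : Type} [Ring A] [Algebra k A] {s : Set A} {y y' : A}
    {T : Submodule k A} (h : ∀ z ∈ s, y * (z * y') ∈ T) :
    ∀ t ∈ Submodule.span k s, y * (t * y') ∈ T := fun t ht => (Submodule.map_span_le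
  (LinearMap.mulLeft k y ∘ₗ LinearMap.mulRight k y') s T).2 h ⟨t, ht, rfl⟩

lemma exists_polySpan_add_tauSpan {n : ℕ} (z : Alg C (n + 2)) :
    ∃ p ∈ polySpan C (n + 1), ∃ t ∈ tauSpan C n, p + t = z :=
  Submodule.mem_sup.1 ((mackeySpan_eq_top n).ge (Submodule.mem_top (x := z)))

lemma mem_of_mem_polySpan {n : ℕ} (S : Subalgebra k (Alg C (n + 1))) (hi : ∀ r, incl r ∈ S)
    (hx : xLast C n ∈ S) (he : ∀ l, eLast C n l ∈ S) {z : Alg C (n + 1)}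
    (hz : z ∈ polySpan C n) : z ∈ S := by
  refine (Submodule.span_le (p := S.toSubmodule)).2 ?_ hz
  rintro _ ⟨r, a, l, rfl⟩
  exact S.mul_mem (hi r) (S.mul_mem (S.pow_mem hx a) (he l))

variable (C) in
/-- The elements of `R(n + 1)` commuting with all idempotents `eLast C n i`, that is, preserving
the colour of the last strand. -/
def lastCentralizer (n : ℕ) : Subalgebra k (Alg C (n + 1)) :=
  Subalgebra.centralizer k (Set.range (eLast C n))

lemma mem_lastCentralizer {n : ℕ} {z : Alg C (n + 1)} :
    z ∈ lastCentralizer C n ↔ ∀ i, Commute (eLast C n i) z := by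
  rw [lastCentralizer, Subalgebra.mem_centralizer_iff, Set.forall_mem_range]
  rfl

lemma incl_mem_lastCentralizer {n : ℕ} (r : Alg C n) : incl r ∈ lastCentralizer C n :=
  mem_lastCentralizer.2 fun i => (incl_commute_eLast r i).symm

lemma xLast_mem_lastCentralizer {n : ℕ} : xLast C n ∈ lastCentralizer C n :=
  mem_lastCentralizer.2 fun i => (xLast_commute_eLast i).symm

lemma eLast_mem_lastCentralizer {n : ℕ} (l : I) : eLast C n l ∈ lastCentralizer C n :=
  mem_lastCentralizer.2 fun _ => diag_commute_diag _ _

lemma eLastEq_mem_lastCentralizer {n : ℕ} : eLastEq C n ∈ lastCentralizer C (n + 1) :=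
  mem_lastCentralizer.2 fun _ => diag_commute_diag _ _

lemma mem_lastCentralizer_of_mem_polySpan {n : ℕ} {z : Alg C (n + 1)}
    (h : z ∈ polySpan C n) : z ∈ lastCentralizer C n :=
  mem_of_mem_polySpan _ incl_mem_lastCentralizer xLast_mem_lastCentralizer
    eLast_mem_lastCentralizer h

lemma eLast_mul_mul_eLast_eq_zero {n : ℕ} {z : Alg C (n + 1)} (h : z ∈ lastCentralizer C n)
    {i j : I} (hij : i ≠ j) : eLast C n i * (z * eLast C n j) = 0 := by
  rw [(mem_lastCentralizer.1 h i).left_comm, eLast_mul_eLast, if_neg hij, mul_zero]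

variable (C) in
/-- The element `w τ_{n+1} v` of `R(n + 2)`, for `w, v ∈ R(n + 1)`, restricted to last strands of
colour `j` at the bottom and of colour `i` at the top. -/
noncomputable def crossing {n : ℕ} (i j : I) (w v : Alg C (n + 1)) : Alg C (n + 2) :=
  eLast C (n + 1) i * (incl w * (tauLast C n * (incl v * eLast C (n + 1) j)))

section Crossing

variable {n : ℕ} {i j : I} (w v : Alg C (n + 1))

lemma incl_mul_crossing (r : Alg C (n + 1)) :
    incl r * crossing C i j w v = crossing C i j (r * w) v := by
  rw [crossing, (incl_commute_eLast r i).left_comm, ← mul_assoc (incl r), ← map_mul, crossing]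

lemma crossing_mul_incl (r : Alg C (n + 1)) :
    crossing C i j w v * incl r = crossing C i j w (v * r) := by
  simp only [crossing, mul_assoc, map_mul]
  rw [(incl_commute_eLast r j).eq]

lemma eLast_mul_crossing (l : I) : eLast C (n + 1) l * crossing C i j w v =
    if l = i then crossing C i j w v else 0 := by
  rw [crossing, ← mul_assoc, eLast_mul_eLast]
  split_ifs with h
  · rw [h]
  · rw [zero_mul]

lemma crossing_mul_eLast (l : I) : crossing C i j w v * eLast C (n + 1) l =
    if j = l then crossing C i j w v else 0 := by
  simp only [crossing, mul_assoc, eLast_mul_eLast, mul_ite, mul_zero]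

lemma eLast_mul_incl_mul_eLastEq_mul_eq_zero (hij : i ≠ j) :
    eLast C (n + 1) i * (incl w * (eLastEq C n * (incl v * eLast C (n + 1) j))) = 0 := by
  have h := Subalgebra.mul_mem _ (Subalgebra.mul_mem _ (incl_mem_lastCentralizer w)
    eLastEq_mem_lastCentralizer) (incl_mem_lastCentralizer v)
  simpa only [mul_assoc] using eLast_mul_mul_eLast_eq_zero h hij

lemma xLast_mul_crossing (hij : i ≠ j) :
    xLast C (n + 1) * crossing C i j w v = crossing C i j w (xLast C n * v) := by
  rw [crossing, (xLast_commute_eLast i).left_comm, (incl_commute_xLast w).symm.left_comm,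
    ← mul_assoc (xLast C (n + 1)), xLast_mul_tauLast, add_mul, mul_add, mul_add,
    eLast_mul_incl_mul_eLastEq_mul_eq_zero w v hij, add_zero]
  simp only [crossing, map_mul, mul_assoc]

lemma crossing_mul_xLast (hij : i ≠ j) :
    crossing C i j w v * xLast C (n + 1) = crossing C i j (w * xLast C n) v := by
  simp only [crossing, mul_assoc]
  rw [← (xLast_commute_eLast j).eq, (incl_commute_xLast v).left_comm, ← mul_assoc (tauLast C n),
    tauLast_mul_xLast, add_mul, mul_add, mul_add,
    eLast_mul_incl_mul_eLastEq_mul_eq_zero w v hij, add_zero]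
  simp only [map_mul, mul_assoc]

end Crossing

variable (C) in
/-- The span of the elements `crossing C i j w v` with `w` or `v` in the two-sided ideal `J` of
`R(n + 1)`. -/
def crossingSpan {n : ℕ} (i j : I) (J : TwoSidedIdeal (Alg C (n + 1))) :
    Submodule k (Alg C (n + 2)) :=
  Submodule.span k {z | ∃ w v, (w ∈ J ∨ v ∈ J) ∧ z = crossing C i j w v}

section CrossingSpan

variable {n : ℕ} {i j : I} {J : TwoSidedIdeal (Alg C (n + 1))}

lemma crossing_mem_crossingSpan {w v : Alg C (n + 1)} (h : w ∈ J ∨ v ∈ J) :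
    crossing C i j w v ∈ crossingSpan C i j J := Submodule.subset_span ⟨w, v, h, rfl⟩

lemma incl_mem_leftStabilizer_crossingSpan (r : Alg C (n + 1)) :
    incl r ∈ leftStabilizer (crossingSpan C i j J) := by
  refine mul_mem_of_mem_span ?_
  rintro _ ⟨w, v, h, rfl⟩
  rw [incl_mul_crossing]
  exact crossing_mem_crossingSpan (h.imp_left (J.mul_mem_left _ _))

lemma incl_mem_rightStabilizer_crossingSpan (r : Alg C (n + 1)) :
    incl r ∈ rightStabilizer (crossingSpan C i j J) := by
  refine mul_mem_of_mem_span' ?_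
  rintro _ ⟨w, v, h, rfl⟩
  rw [crossing_mul_incl]
  exact crossing_mem_crossingSpan (h.imp_right (J.mul_mem_right _ _))

lemma eLast_mem_leftStabilizer_crossingSpan (l : I) :
    eLast C (n + 1) l ∈ leftStabilizer (crossingSpan C i j J) := by
  refine mul_mem_of_mem_span ?_
  rintro _ ⟨w, v, h, rfl⟩
  rw [eLast_mul_crossing]
  split_ifs
  · exact crossing_mem_crossingSpan h
  · exact Submodule.zero_mem _

lemma eLast_mem_rightStabilizer_crossingSpan (l : I) :
    eLast C (n + 1) l ∈ rightStabilizer (crossingSpan C i j J) := by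
  refine mul_mem_of_mem_span' ?_
  rintro _ ⟨w, v, h, rfl⟩
  rw [crossing_mul_eLast]
  split_ifs
  · exact crossing_mem_crossingSpan h
  · exact Submodule.zero_mem _

lemma xLast_mem_leftStabilizer_crossingSpan (hij : i ≠ j) :
    xLast C (n + 1) ∈ leftStabilizer (crossingSpan C i j J) := by
  refine mul_mem_of_mem_span ?_
  rintro _ ⟨w, v, h, rfl⟩
  rw [xLast_mul_crossing _ _ hij]
  exact crossing_mem_crossingSpan (h.imp_right (J.mul_mem_left _ _))

lemma xLast_mem_rightStabilizer_crossingSpan (hij : i ≠ j) :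
    xLast C (n + 1) ∈ rightStabilizer (crossingSpan C i j J) := by
  refine mul_mem_of_mem_span' ?_
  rintro _ ⟨w, v, h, rfl⟩
  rw [crossing_mul_xLast _ _ hij]
  exact crossing_mem_crossingSpan (h.imp_left (J.mul_mem_right _ _))

lemma mem_leftStabilizer_crossingSpan_of_mem_polySpan (hij : i ≠ j) {z : Alg C (n + 2)}
    (hz : z ∈ polySpan C (n + 1)) : z ∈ leftStabilizer (crossingSpan C i j J) :=
  mem_of_mem_polySpan _ incl_mem_leftStabilizer_crossingSpan
    (xLast_mem_leftStabilizer_crossingSpan hij) eLast_mem_leftStabilizer_crossingSpan hz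

lemma mem_rightStabilizer_crossingSpan_of_mem_polySpan (hij : i ≠ j) {z : Alg C (n + 2)}
    (hz : z ∈ polySpan C (n + 1)) : z ∈ rightStabilizer (crossingSpan C i j J) :=
  mem_of_mem_polySpan _ incl_mem_rightStabilizer_crossingSpan
    (xLast_mem_rightStabilizer_crossingSpan hij) eLast_mem_rightStabilizer_crossingSpan hz

lemma incl_mul_mem_crossingSpan {a : Alg C (n + 1)} (ha : a ∈ J) :
    ∀ t ∈ crossingSpan C i j ⊤, incl a * t ∈ crossingSpan C i j J := by
  refine mul_mem_of_mem_span ?_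
  rintro _ ⟨w, v, -, rfl⟩
  rw [incl_mul_crossing]
  exact crossing_mem_crossingSpan (Or.inl (J.mul_mem_right _ _ ha))

lemma mul_incl_mem_crossingSpan {a : Alg C (n + 1)} (ha : a ∈ J) :
    ∀ t ∈ crossingSpan C i j ⊤, t * incl a ∈ crossingSpan C i j J := by
  refine mul_mem_of_mem_span' ?_
  rintro _ ⟨w, v, -, rfl⟩
  rw [crossing_mul_incl]
  exact crossing_mem_crossingSpan (Or.inr (J.mul_mem_left _ _ ha))

lemma eLast_mul_mul_eLast_mem_crossingSpan (hij : i ≠ j) (z : Alg C (n + 2)) :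
    eLast C (n + 1) i * (z * eLast C (n + 1) j) ∈ crossingSpan C i j ⊤ := by
  obtain ⟨p, hp, t, ht, rfl⟩ := exists_polySpan_add_tauSpan z
  rw [add_mul, mul_add,
    eLast_mul_mul_eLast_eq_zero (mem_lastCentralizer_of_mem_polySpan hp) hij, zero_add]
  refine mul_mul_mem_of_mem_span ?_ t ht
  rintro _ ⟨r, r', l, rfl⟩
  simp only [mul_assoc, eLast_mul_eLast]
  split_ifs with h
  · rw [h]
    exact crossing_mem_crossingSpan (Or.inl trivial)
  · simp only [mul_zero, Submodule.zero_mem]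

lemma eLast_mul_tau_incl_tau_mul_eLast_eq (r r' a s s' : Alg C (n + 1)) (l m : I) :
    eLast C (n + 1) i * ((incl r * (tauLast C n * (incl r' * eLast C (n + 1) l))) *
      (incl a * ((incl s * (tauLast C n * (incl s' * eLast C (n + 1) m))) * eLast C (n + 1) j))) =
    incl r * (eLast C (n + 1) i * (tauLast C n * (incl (r' * a * s) *
      (tauLast C n * eLast C (n + 1) j)))) * incl (eLast C n l * s') * eLast C (n + 1) m := by
  have hm : Commute (eLast C (n + 1) m) (eLast C (n + 1) j) := diag_commute_diag _ _
  simp only [map_mul, mul_assoc]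
  rw [← (incl_commute_eLast r i).left_comm, ← (incl_commute_eLast a l).left_comm,
    ← (incl_commute_eLast s l).left_comm, ← mul_assoc (eLast C (n + 1) l) (tauLast C n),
    eLast_mul_tauLast, hm.eq, (incl_commute_eLast s' j).left_comm,
    ← (incl_commute_eLast (eLast C n l) j).left_comm]
  simp only [mul_assoc]

lemma eLast_mul_tauSpan_mul_incl_mul_tauSpan_mul_eLast_mem
    (hJ : ∀ y ∈ J, eLast C (n + 1) i * (tauLast C n * (incl y * (tauLast C n *
      eLast C (n + 1) j))) ∈ crossingSpan C i j J) {a : Alg C (n + 1)} (ha : a ∈ J)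
    {t t' : Alg C (n + 2)} (ht : t ∈ tauSpan C n) (ht' : t' ∈ tauSpan C n) :
    eLast C (n + 1) i * (t * (incl a * (t' * eLast C (n + 1) j))) ∈ crossingSpan C i j J := by
  refine mul_mul_mem_of_mem_span ?_ t ht
  rintro _ ⟨r, r', l, rfl⟩
  rw [← mul_assoc, ← mul_assoc]
  refine mul_mul_mem_of_mem_span ?_ t' ht'
  rintro _ ⟨s, s', m, rfl⟩
  rw [mul_assoc, mul_assoc, eLast_mul_tau_incl_tau_mul_eLast_eq]
  exact eLast_mem_rightStabilizer_crossingSpan m _ (incl_mem_rightStabilizer_crossingSpan _ _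
    (incl_mem_leftStabilizer_crossingSpan r _
      (hJ _ (J.mul_mem_right _ _ (J.mul_mem_left _ _ ha)))))

lemma eLast_mul_mul_incl_mul_mul_eLast_mem (hij : i ≠ j)
    (hJ : ∀ y ∈ J, eLast C (n + 1) i * (tauLast C n * (incl y * (tauLast C n *
      eLast C (n + 1) j))) ∈ crossingSpan C i j J) {a : Alg C (n + 1)} (ha : a ∈ J)
    (u u' : Alg C (n + 2)) :
    eLast C (n + 1) i * (u * (incl a * (u' * eLast C (n + 1) j))) ∈ crossingSpan C i j J := by
  obtain ⟨p, hp, t, ht, rfl⟩ := exists_polySpan_add_tauSpan u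
  rw [add_mul, mul_add]
  refine Submodule.add_mem _ ?_ ?_
  · rw [(mem_lastCentralizer.1 (mem_lastCentralizer_of_mem_polySpan hp) i).left_comm,
      (incl_commute_eLast a i).symm.left_comm]
    exact mem_leftStabilizer_crossingSpan_of_mem_polySpan hij hp _
      (incl_mul_mem_crossingSpan ha _ (eLast_mul_mul_eLast_mem_crossingSpan hij u'))
  obtain ⟨p', hp', t', ht', rfl⟩ := exists_polySpan_add_tauSpan u'
  rw [add_mul, mul_add, mul_add, mul_add]
  refine Submodule.add_mem _ ?_ (eLast_mul_tauSpan_mul_incl_mul_tauSpan_mul_eLast_mem hJ ha ht ht')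
  rw [← (mem_lastCentralizer.1 (mem_lastCentralizer_of_mem_polySpan hp') j).eq,
    (incl_commute_eLast a j).left_comm]
  simpa only [mul_assoc] using mem_rightStabilizer_crossingSpan_of_mem_polySpan hij hp' _
    (mul_incl_mem_crossingSpan ha _ (eLast_mul_mul_eLast_mem_crossingSpan hij t))

end CrossingSpan

variable (C) in
/-- The element `∑ x_1^{Λ(ν_1)} e(ν)` of `R(n)`, or `0` if `n = 0`. -/
noncomputable def cyclotomicElement (Λ : I → ℕ) (n : ℕ) : Alg C n :=
  if h : 0 < n then ∑ ν : Fin n → I, Xx C (⟨0, h⟩ : Fin n) ^ (Λ (ν ⟨0, h⟩)) * Ee C ν else 0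

variable (C) in
/-- The two-sided ideal of `R(n)` generated by `cyclotomicElement C Λ n`. -/
noncomputable def cyclotomicIdeal (Λ : I → ℕ) (n : ℕ) : TwoSidedIdeal (Alg C n) :=
  TwoSidedIdeal.span {cyclotomicElement C Λ n}

section Cyclotomic

variable {Λ : I → ℕ} {n : ℕ} {i j : I}

lemma cyclotomicElement_mem : cyclotomicElement C Λ n ∈ cyclotomicIdeal C Λ n :=
  TwoSidedIdeal.subset_span rfl

lemma cyclotomicElement_mul_Ee (ν : Fin (n + 1) → I) :
    cyclotomicElement C Λ (n + 1) * Ee C ν = Xx C 0 ^ Λ (ν 0) * Ee C ν := by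
  rw [cyclotomicElement, dif_pos n.succ_pos, Finset.sum_mul]
  simp only [mul_assoc, Ee_mul_Ee, mul_ite, mul_zero, Finset.sum_ite_eq', Finset.mem_univ, if_true]
  rfl

lemma incl_cyclotomicElement :
    incl (cyclotomicElement C Λ (n + 1)) = cyclotomicElement C Λ (n + 2) := by
  refine eq_of_mul_Ee fun ν => ?_
  rw [cyclotomicElement_mul_Ee, Ee_eq_incl_mul_eLast, ← mul_assoc, ← map_mul,
    cyclotomicElement_mul_Ee, map_mul, map_pow, incl_Xx, mul_assoc]
  rfl

lemma incl_mem_cyclotomicIdeal {z : Alg C (n + 1)} (h : z ∈ cyclotomicIdeal C Λ (n + 1)) :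
    incl z ∈ cyclotomicIdeal C Λ (n + 2) := by
  refine TwoSidedIdeal.mem_comap (f := (incl : Alg C (n + 1) →ₐ[k] Alg C (n + 2))).1 ?_
  refine TwoSidedIdeal.span_le.2 (Set.singleton_subset_iff.2 ?_) h
  rw [SetLike.mem_coe, TwoSidedIdeal.mem_comap, incl_cyclotomicElement]
  exact cyclotomicElement_mem

lemma eLast_mul_tau_incl_tau_mul_eLast (y : Alg C (n + 1)) :
    eLast C (n + 1) i * (tauLast C n * (incl y * (tauLast C n * eLast C (n + 1) j))) =
      tauLast C n * (incl (eLast C n i * (y * eLast C n j)) * tauLast C n) := by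
  rw [← mul_assoc, eLast_mul_tauLast, tauLast_mul_eLast]
  simp only [map_mul, mul_assoc]

lemma eLast_mul_mul_eLast_mem_of_mem_cyclotomicIdeal (hij : i ≠ j)
    (h : ∀ y ∈ cyclotomicIdeal C Λ (n + 1), eLast C (n + 1) i * (tauLast C n * (incl y *
      (tauLast C n * eLast C (n + 1) j))) ∈ crossingSpan C i j (cyclotomicIdeal C Λ (n + 1)))
    {z : Alg C (n + 2)} (hz : z ∈ cyclotomicIdeal C Λ (n + 2)) :
    eLast C (n + 1) i * (z * eLast C (n + 1) j) ∈
      crossingSpan C i j (cyclotomicIdeal C Λ (n + 1)) := by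
  suffices H : ∀ u u', eLast C (n + 1) i * (u * (z * (u' * eLast C (n + 1) j))) ∈
      crossingSpan C i j (cyclotomicIdeal C Λ (n + 1)) by simpa only [one_mul] using H 1 1
  induction hz using TwoSidedIdeal.span_induction with
  | mem x hx =>
    intro u u'
    rw [Set.mem_singleton_iff.1 hx, ← incl_cyclotomicElement]
    exact eLast_mul_mul_incl_mul_mul_eLast_mem hij h cyclotomicElement_mem u u'
  | zero => simp only [zero_mul, mul_zero, Submodule.zero_mem, implies_true]
  | add x y _ _ hx hy =>
    intro u u'
    simpa only [add_mul, mul_add] using Submodule.add_mem _ (hx u u') (hy u u')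
  | neg x _ hx =>
    intro u u'
    rw [neg_mul x, mul_neg u (x * _), mul_neg (eLast C _ i) (u * _)]
    exact Submodule.neg_mem _ (hx u u')
  | left_absorb a x _ hx =>
    intro u u'
    simpa only [mul_assoc] using hx (u * a) u'
  | right_absorb b x _ hx =>
    intro u u'
    simpa only [mul_assoc] using hx u (b * u')

lemma tauLast_mul_incl_crossing_mul_tauLast (w v : Alg C (n + 1)) :
    tauLast C (n + 1) * (incl (crossing C i j w v) * tauLast C (n + 1)) =
      eLast C (n + 2) i * ((incl (incl w) * ((tauLast C (n + 1) * incl (tauLast C n) *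
        tauLast C (n + 1)) * incl (incl v))) * eLast C (n + 2) j) := by
  simp only [crossing, map_mul, mul_assoc]
  rw [← mul_assoc (tauLast C (n + 1)) (incl (eLast C (n + 1) i)), ← eLast_mul_tauLast,
    ← tauLast_mul_eLast, mul_assoc, (incl_incl_commute_tauLast v).left_comm,
    (incl_incl_commute_tauLast w).symm.left_comm]

lemma tauLast_braid_defect_mem_lastCentralizer :
    tauLast C (n + 1) * incl (tauLast C n) * tauLast C (n + 1) -
      incl (tauLast C n) * tauLast C (n + 1) * incl (tauLast C n) ∈ lastCentralizer C (n + 2) := by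
  rw [tauLast_braid]
  exact Subalgebra.sum_mem _ fun a _ => Subalgebra.sum_mem _ fun b _ =>
    Subalgebra.mul_mem _ (Qdiff_mem _ _ _ (incl_mem_lastCentralizer _)
      (incl_mem_lastCentralizer _) xLast_mem_lastCentralizer) (Subalgebra.mul_mem _
      (incl_mem_lastCentralizer _) (Subalgebra.mul_mem _ (incl_mem_lastCentralizer _)
      (eLast_mem_lastCentralizer _)))

lemma tauLast_mul_incl_crossing_mul_tauLast_eq_crossing (hij : i ≠ j) (w v : Alg C (n + 1)) :
    tauLast C (n + 1) * (incl (crossing C i j w v) * tauLast C (n + 1)) =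
      crossing C i j (incl w * tauLast C n) (tauLast C n * incl v) := by
  have h_defect := eLast_mul_mul_eLast_eq_zero (Subalgebra.mul_mem _ (incl_mem_lastCentralizer
    (incl w)) (Subalgebra.mul_mem _ tauLast_braid_defect_mem_lastCentralizer
      (incl_mem_lastCentralizer (incl v)))) hij
  rw [sub_mul, mul_sub, sub_mul, mul_sub, sub_eq_zero] at h_defect
  rw [tauLast_mul_incl_crossing_mul_tauLast, h_defect]
  simp only [crossing, map_mul, mul_assoc]

theorem eLast_mul_mul_eLast_mem_crossingSpan_cyclotomicIdeal (hij : i ≠ j) {z : Alg C (n + 2)}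
    (hz : z ∈ cyclotomicIdeal C Λ (n + 2)) : eLast C (n + 1) i * (z * eLast C (n + 1) j) ∈
      crossingSpan C i j (cyclotomicIdeal C Λ (n + 1)) := by
  induction n with
  | zero =>
    refine eLast_mul_mul_eLast_mem_of_mem_cyclotomicIdeal hij (fun y _ => ?_) hz
    rw [eLast_mul_tau_incl_tau_mul_eLast, eLast_mul_mul_eLast_eq_zero
      (mem_lastCentralizer_of_mem_polySpan (Submodule.eq_top_iff'.1 polySpan_zero_eq_top y)) hij]
    simp only [map_zero, zero_mul, mul_zero, Submodule.zero_mem]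
  | succ n ih =>
    refine eLast_mul_mul_eLast_mem_of_mem_cyclotomicIdeal hij (fun y hy => ?_) hz
    rw [eLast_mul_tau_incl_tau_mul_eLast]
    refine tauLast_mul_incl_mul_tauLast_mem_of_mem_span ?_ _ (ih hy)
    rintro _ ⟨w, v, h, rfl⟩
    rw [tauLast_mul_incl_crossing_mul_tauLast_eq_crossing hij]
    exact crossing_mem_crossingSpan (h.imp
      (fun hw => TwoSidedIdeal.mul_mem_right _ _ _ (incl_mem_cyclotomicIdeal hw))
      (fun hv => TwoSidedIdeal.mul_mem_left _ _ _ (incl_mem_cyclotomicIdeal hv)))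

end Cyclotomic

/-! ### Cyclotomic quotients -/

lemma addA_comm {I : Type} [DecidableEq I] (β : I → ℕ) (i j : I) :
    addA (addA β i) j = addA (addA β j) i :=
  funext fun _ => add_right_comm _ _ _

lemma addA_injective {I : Type} [DecidableEq I] (i : I) :
    Function.Injective fun β : I → ℕ => addA β i :=
  fun _ _ h => funext fun l => Nat.add_right_cancel (congrFun h l)

lemma content_snoc {I : Type} [DecidableEq I] {n : ℕ} (ν : Fin n → I) (i : I) :
    content (Fin.snoc ν i : Fin (n + 1) → I) = addA (content ν) i := by
  funext l
  simp only [content, addA, Finset.card_filter, Fin.sum_univ_castSucc, Fin.snoc_castSucc,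
    Fin.snoc_last, eq_comm]

lemma content_eq_addA_iff {I : Type} [DecidableEq I] {n : ℕ} (ν : Fin (n + 1) → I)
    (β : I → ℕ) :
    content ν = addA β (ν (Fin.last n)) ↔ content (Fin.init ν : Fin n → I) = β := by
  conv_lhs => rw [← Fin.snoc_init_self ν, content_snoc, Fin.snoc_last]
  exact (addA_injective (ν (Fin.last n))).eq_iff

lemma content_comp_perm {I : Type} [DecidableEq I] {n : ℕ} (ν : Fin n → I)
    (σ : Equiv.Perm (Fin n)) : content (ν ∘ σ) = content ν := by
  funext l
  simp only [content, Finset.card_filter]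
  exact Equiv.sum_comp σ (fun a => if ν a = l then 1 else 0)

lemma eIdem_eq_diag {n : ℕ} (β : I → ℕ) :
    eIdem C n β = diag C fun ν => if content ν = β then 1 else 0 :=
  sum_Ee_filter _

lemma commute_eIdem {n : ℕ} (r : Alg C n) (β : I → ℕ) : Commute r (eIdem C n β) := by
  rw [eIdem_eq_diag]
  refine commute_map_of_generators (AlgHom.id k _) (fun ν => ?_) (fun a => Xx_commute_diag _ _)
    (fun l h => Tt_commute_diag fun ν => ?_) r
  · rw [Ee_eq_diag]
    exact diag_commute_diag _ _
  · rw [content_comp_perm]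

lemma eIdem_mul_eIdem {n : ℕ} (β : I → ℕ) : eIdem C n β * eIdem C n β = eIdem C n β := by
  rw [eIdem_eq_diag, diag_mul_diag]
  congr 1
  funext ν
  simp only [Pi.mul_apply, ite_zero_mul_ite_zero, and_self, mul_one]

lemma eR_eq_eLast_mul_eIdem {n : ℕ} (β : I → ℕ) (i : I) :
    eR C n β i = eLast C n i * eIdem C (n + 1) (addA β i) := by
  rw [eR, seqs, Finset.filter_filter, sum_Ee_filter, eLast, eIdem_eq_diag, diag_mul_diag]
  congr 1
  funext ν
  rw [Pi.mul_apply, ite_zero_mul_ite_zero, mul_one]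
  exact if_congr and_comm rfl rfl

lemma incl_eIdem_mul_eLast {n : ℕ} (β : I → ℕ) (i : I) :
    incl (eIdem C n β) * eLast C n i = eLast C n i * eIdem C (n + 1) (addA β i) := by
  rw [eIdem_eq_diag, eIdem_eq_diag, incl_diag, eLast, diag_mul_diag, diag_mul_diag]
  congr 1
  funext ν
  rw [Pi.mul_apply, Pi.mul_apply, ite_zero_mul_ite_zero, ite_zero_mul_ite_zero]
  refine if_congr ?_ rfl rfl
  rw [and_comm]
  refine and_congr_right fun h => ?_
  rw [← h, content_eq_addA_iff]

section CyclotomicQuotient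

variable {Λ : I → ℕ} {n : ℕ} {β γ : I → ℕ}

lemma toCB_mkAlgHom (x : FA k I n) :
    toCB C Λ (β := β) (RingQuot.mkAlgHom k (Rel C n) x) = RingQuot.mkAlgHom k (CRel C Λ n β) x := by
  simp only [toCB, toB, toC, AlgHom.comp_apply, RingQuot.liftAlgHom_mkAlgHom_apply]

lemma toCB_surjective : Function.Surjective (toCB C Λ (n := n) (β := β)) := by
  intro y
  obtain ⟨x, rfl⟩ := RingQuot.mkAlgHom_surjective k (CRel C Λ n β) y
  exact ⟨_, toCB_mkAlgHom x⟩

lemma mkAlgHom_sum_seqs :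
    RingQuot.mkAlgHom k (Rel C n) (∑ ν ∈ seqs β n, ge k ν) = eIdem C n β :=
  map_sum _ _ _

lemma mkAlgHom_aLamF :
    RingQuot.mkAlgHom k (Rel C n) (aLamF Λ n β) = cyclotomicElement C Λ n * eIdem C n β := by
  cases n with
  | zero => rw [aLamF, cyclotomicElement, dif_neg, dif_neg, map_zero, zero_mul] <;>
    exact lt_irrefl 0
  | succ n =>
    rw [aLamF, dif_pos n.succ_pos, map_sum, eIdem, Finset.mul_sum]
    refine Finset.sum_congr rfl fun ν _ => ?_
    rw [cyclotomicElement_mul_Ee, map_mul, map_pow]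
    rfl

lemma toCB_eIdem : toCB C Λ (β := β) (eIdem C n β) = 1 := by
  rw [← mkAlgHom_sum_seqs, toCB_mkAlgHom, RingQuot.mkAlgHom_rel k CRel.unit, map_one]

lemma toCB_mul_eIdem (z : Alg C n) : toCB C Λ (β := β) (z * eIdem C n β) = toCB C Λ z := by
  rw [map_mul, toCB_eIdem, mul_one]

lemma toCB_cyclotomicElement : toCB C Λ (β := β) (cyclotomicElement C Λ n) = 0 := by
  rw [← toCB_mul_eIdem, ← mkAlgHom_aLamF, toCB_mkAlgHom, RingQuot.mkAlgHom_rel k CRel.cyc, map_zero]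

lemma toCB_eq_zero_of_mem_cyclotomicIdeal {z : Alg C n} (h : z ∈ cyclotomicIdeal C Λ n) :
    toCB C Λ (β := β) z = 0 := by
  refine (TwoSidedIdeal.mem_ker (f := toCB C Λ (n := n) (β := β))).1 ?_
  refine TwoSidedIdeal.span_le.2 (Set.singleton_subset_iff.2 ?_) h
  exact (TwoSidedIdeal.mem_ker _).2 toCB_cyclotomicElement

variable (C) in
/-- The ideal of all `z ∈ R(n)` with `z e(β)` in the cyclotomic ideal; it is the kernel of
`R(n) → R^Λ(β)`. -/
noncomputable def cyclotomicKernel (Λ : I → ℕ) (n : ℕ) (β : I → ℕ) : Ideal (Alg C n) :=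
  Submodule.comap (LinearMap.toSpanSingleton _ _ (eIdem C n β))
    (TwoSidedIdeal.asIdeal (cyclotomicIdeal C Λ n))

lemma mem_cyclotomicKernel {z : Alg C n} :
    z ∈ cyclotomicKernel C Λ n β ↔ z * eIdem C n β ∈ cyclotomicIdeal C Λ n := Iff.rfl

instance : (cyclotomicKernel C Λ n β).IsTwoSided where
  mul_mem_of_left b h := by
    rw [mem_cyclotomicKernel, mul_assoc, (commute_eIdem b β).eq, ← mul_assoc]
    exact TwoSidedIdeal.mul_mem_right _ _ _ h

lemma mkAlgHom_sub_mkAlgHom_mem_cyclotomicKernel {x y : FA k I n} (h : CRel C Λ n β x y) :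
    RingQuot.mkAlgHom k (Rel C n) x - RingQuot.mkAlgHom k (Rel C n) y ∈
      cyclotomicKernel C Λ n β := by
  rw [mem_cyclotomicKernel]
  cases h with
  | base h =>
    rw [RingQuot.mkAlgHom_rel k h, sub_self, zero_mul]
    exact TwoSidedIdeal.zero_mem _
  | unit =>
    rw [mkAlgHom_sum_seqs, map_one, sub_mul, eIdem_mul_eIdem, one_mul, sub_self]
    exact TwoSidedIdeal.zero_mem _
  | cyc =>
    rw [mkAlgHom_aLamF, map_zero, sub_zero]
    exact TwoSidedIdeal.mul_mem_right _ _ _ (TwoSidedIdeal.mul_mem_right _ _ _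
      cyclotomicElement_mem)

theorem mul_eIdem_mem_cyclotomicIdeal_of_toCB_eq_zero {z : Alg C n}
    (h : toCB C Λ (β := β) z = 0) : z * eIdem C n β ∈ cyclotomicIdeal C Λ n := by
  let q := (Ideal.Quotient.mkₐ k (cyclotomicKernel C Λ n β)).comp (RingQuot.mkAlgHom k (Rel C n))
  have hq : ∀ ⦃x y⦄, CRel C Λ n β x y → q x = q y := fun x y hxy =>
    Ideal.Quotient.eq.2 (mkAlgHom_sub_mkAlgHom_mem_cyclotomicKernel hxy)
  obtain ⟨x, rfl⟩ := RingQuot.mkAlgHom_surjective k (Rel C n) z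
  have h_lift := RingQuot.liftAlgHom_mkAlgHom_apply k q hq x
  rw [← toCB_mkAlgHom, h, map_zero] at h_lift
  exact mem_cyclotomicKernel.1 (Ideal.Quotient.eq_zero_iff_mem.1 h_lift.symm)

variable {i : I}

lemma toCB_eR (h : γ = addA β i) :
    toCB C Λ (β := γ) (eR C n β i) = toCB C Λ (β := γ) (eLast C n i) := by
  rw [eR_eq_eLast_mul_eIdem, ← h, toCB_mul_eIdem]

lemma incl_Ee_mul_eLast (ν : Fin n → I) :
    incl (Ee C ν) * eLast C n i = Ee C (Fin.snoc ν i : Fin (n + 1) → I) := by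
  rw [Ee_eq_incl_mul_eLast, Fin.init_snoc, Fin.snoc_last]

lemma IsUpRc.apply_one {φ : cAlg C Λ n β →ₙₐ[k] cAlg C Λ (n + 1) γ} (hφ : IsUpRc C Λ i φ) :
    φ 1 = toCB C Λ (eLast C n i) := by
  rw [← one_mul (eLast C n i), ← map_one (incl (n := n)), ← map_one (toCB C Λ (n := n)), ← sum_Ee]
  simp only [map_sum, hφ.1, Finset.sum_mul, incl_Ee_mul_eLast]

lemma IsUpRc.map_toCB (h : γ = addA β i) {φ : cAlg C Λ n β →ₙₐ[k] cAlg C Λ (n + 1) γ}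
    (hφ : IsUpRc C Λ i φ) (w : Alg C n) :
    φ (toCB C Λ w) = toCB C Λ (incl w * eLast C n i) := by
  induction w using Alg.induction with
  | algebraMap c =>
    rw [AlgHom.commutes, AlgHom.commutes, Algebra.algebraMap_eq_smul_one, map_smul, hφ.apply_one,
      ← Algebra.smul_def, map_smul]
  | e ν => rw [hφ.1, incl_Ee_mul_eLast]
  | x a => rw [hφ.2.1, map_mul, toCB_eR h, ← map_mul, incl_Xx]
  | tau l hl => rw [hφ.2.2, map_mul, toCB_eR h, ← map_mul, incl_Tt]
  | add a b ha hb => simp only [map_add, add_mul, ha, hb]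
  | mul a b ha hb =>
    rw [map_mul, map_mul, ha, hb, ← map_mul, map_mul incl, mul_assoc,
      ← (incl_commute_eLast b i).left_comm, eLast_mul_eLast, if_pos rfl, mul_assoc]

end CyclotomicQuotient

/-! ### Tensor factorizations -/

section TensorFactorization

variable {S V W U : Type} [Ring S] [Algebra k S] [Ring V] [Algebra k V] [Ring W] [Algebra k W]
  [Ring U] [Algebra k U] {φi : S →ₙₐ[k] V} {φj : S →ₙₐ[k] W} {φ : V →ₙₐ[k] U}
  {ψ : W →ₙₐ[k] U} {t : U}

/-- The map `w ⊗ v ↦ ψ w * t * φ v`. -/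
noncomputable def sandwich (ψ : W →ₙₐ[k] U) (φ : V →ₙₐ[k] U) (t : U) : W ⊗[k] V →ₗ[k] U :=
  LinearMap.mul' k U ∘ₗ
    TensorProduct.map (LinearMap.mulRight k t ∘ₗ (ψ : W →ₗ[k] U)) (φ : V →ₗ[k] U)

lemma sandwich_tmul (w : W) (v : V) : sandwich ψ φ t (w ⊗ₜ v) = ψ w * t * φ v := rfl

lemma sandwich_lTensor (z : W ⊗[k] V) (v : V) :
    sandwich ψ φ t (LinearMap.lTensor W (LinearMap.mulRight k v) z) =
      sandwich ψ φ t z * φ v := by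
  induction z using TensorProduct.induction_on with
  | zero => simp only [map_zero, zero_mul]
  | tmul a b =>
    simp only [LinearMap.lTensor_tmul, LinearMap.mulRight_apply, sandwich_tmul, map_mul, mul_assoc]
  | add x y hx hy => simp only [map_add, add_mul, hx, hy]

lemma sandwich_mul_one (z : W ⊗[k] V) : sandwich ψ φ t z * φ 1 = sandwich ψ φ t z := by
  rw [← sandwich_lTensor, LinearMap.mulRight_one, LinearMap.lTensor_id, LinearMap.id_apply]

lemma one_mul_sandwich (z : W ⊗[k] V) : ψ 1 * sandwich ψ φ t z = sandwich ψ φ t z := by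
  induction z using TensorProduct.induction_on with
  | zero => rw [map_zero, mul_zero]
  | tmul a b => simp only [sandwich_tmul, ← mul_assoc, ← map_mul, one_mul]
  | add x y hx hy => rw [map_add, mul_add, hx, hy]

/-- The kernel of `W ⊗_k V → W φj(1) ⊗_S φi(1) V`, where `S` acts through the non-unital
homomorphisms `φi` and `φj`. -/
def balancingRelations (φi : S →ₙₐ[k] V) (φj : S →ₙₐ[k] W) : Submodule k (W ⊗[k] V) :=
  Submodule.span k ({z | ∃ w s v, z = (w * φj s) ⊗ₜ[k] v - w ⊗ₜ[k] (φi s * v)} ∪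
    {z | ∃ w v, z = w ⊗ₜ[k] v - w ⊗ₜ[k] (φi 1 * v)})

lemma balanced_mem (w : W) (s : S) (v : V) :
    (w * φj s) ⊗ₜ[k] v - w ⊗ₜ[k] (φi s * v) ∈ balancingRelations φi φj :=
  Submodule.subset_span (Or.inl ⟨w, s, v, rfl⟩)

lemma tmul_sub_tmul_one_mul_mem (w : W) (v : V) :
    w ⊗ₜ[k] v - w ⊗ₜ[k] (φi 1 * v) ∈ balancingRelations φi φj :=
  Submodule.subset_span (Or.inr ⟨w, v, rfl⟩)

lemma tmul_sub_mul_one_tmul_mem (w : W) (v : V) :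
    w ⊗ₜ[k] v - (w * φj 1) ⊗ₜ[k] v ∈ balancingRelations φi φj := by
  simpa only [sub_sub_sub_cancel_right] using
    Submodule.sub_mem _ (tmul_sub_tmul_one_mul_mem (φi := φi) (φj := φj) w v) (balanced_mem w 1 v)

lemma tmul_mem_of_one_mul_eq_zero {w : W} {v : V} (h : φi 1 * v = 0) :
    w ⊗ₜ[k] v ∈ balancingRelations φi φj := by
  simpa only [h, TensorProduct.tmul_zero, sub_zero] using
    tmul_sub_tmul_one_mul_mem (φi := φi) (φj := φj) w v

lemma tmul_mem_of_mul_one_eq_zero {w : W} {v : V} (h : w * φj 1 = 0) :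
    w ⊗ₜ[k] v ∈ balancingRelations φi φj := by
  simpa only [h, TensorProduct.zero_tmul, sub_zero] using
    tmul_sub_mul_one_tmul_mem (φi := φi) (φj := φj) w v

lemma balancingRelations_le_ker {Z : Type} [AddCommGroup Z] [Module k Z] {g : W ⊗[k] V →ₗ[k] Z}
    (h_bal : ∀ w s v, g ((w * φj s) ⊗ₜ v) = g (w ⊗ₜ (φi s * v)))
    (h_one : ∀ w v, g (w ⊗ₜ v) = g (w ⊗ₜ (φi 1 * v))) :
    balancingRelations φi φj ≤ LinearMap.ker g := by
  refine Submodule.span_le.2 ?_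
  rintro _ (⟨w, s, v, rfl⟩ | ⟨w, v, rfl⟩)
  · exact LinearMap.sub_mem_ker_iff.2 (h_bal w s v)
  · exact LinearMap.sub_mem_ker_iff.2 (h_one w v)

/-- The element `t` identifies the bimodule `ψ(1) U φ(1)` with `W φj(1) ⊗_S φi(1) V` through
`w ⊗ v ↦ ψ w * t * φ v`. -/
structure IsTensorFactorization (φi : S →ₙₐ[k] V) (φj : S →ₙₐ[k] W) (φ : V →ₙₐ[k] U)
    (ψ : W →ₙₐ[k] U) (t : U) : Prop where
  balanced (s : S) : ψ (φj s) * t = t * φ (φi s)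
  mul_one : t * φ (φi 1) = t
  mem_of_sandwich_eq_zero (z : W ⊗[k] V) :
    sandwich ψ φ t z = 0 → z ∈ balancingRelations φi φj
  exists_sandwich_eq (u : U) : ∃ z, sandwich ψ φ t z = ψ 1 * u * φ 1

namespace IsTensorFactorization

section Descent

variable {S' V' W' U' : Type} [Ring S'] [Algebra k S'] [Ring V'] [Algebra k V'] [Ring W']
  [Algebra k W'] [Ring U'] [Algebra k U'] {φi' : S' →ₙₐ[k] V'} {φj' : S' →ₙₐ[k] W'}
  {φ' : V' →ₙₐ[k] U'} {ψ' : W' →ₙₐ[k] U'} {pS : S →ₐ[k] S'} {pV : V →ₐ[k] V'}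
  {pW : W →ₐ[k] W'} {pU : U →ₐ[k] U'}

lemma map_mem_balancingRelations (hφi : ∀ s, φi' (pS s) = pV (φi s))
    (hφj : ∀ s, φj' (pS s) = pW (φj s)) {z : W ⊗[k] V} (hz : z ∈ balancingRelations φi φj) :
    TensorProduct.map pW.toLinearMap pV.toLinearMap z ∈ balancingRelations φi' φj' := by
  let g := (balancingRelations φi' φj').mkQ ∘ₗ
    TensorProduct.map pW.toLinearMap pV.toLinearMap
  have h_ker : balancingRelations φi φj ≤ LinearMap.ker g := by
    refine balancingRelations_le_ker (fun w s v => ?_) fun w v => ?_ <;>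
      refine (Submodule.Quotient.eq _).2 ?_ <;>
      simp only [TensorProduct.map_tmul, AlgHom.toLinearMap_apply, map_mul]
    · rw [← hφi, ← hφj]
      exact balanced_mem _ _ _
    · rw [← hφi, map_one]
      exact tmul_sub_tmul_one_mul_mem _ _
  exact (Submodule.Quotient.mk_eq_zero _).1 (h_ker hz)

lemma sandwich_map (hφ : ∀ v, φ' (pV v) = pU (φ v)) (hψ : ∀ w, ψ' (pW w) = pU (ψ w))
    (z : W ⊗[k] V) :
    sandwich ψ' φ' (pU t) (TensorProduct.map pW.toLinearMap pV.toLinearMap z) =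
      pU (sandwich ψ φ t z) := by
  induction z using TensorProduct.induction_on with
  | zero => simp only [map_zero]
  | tmul w v =>
    simp only [TensorProduct.map_tmul, AlgHom.toLinearMap_apply, sandwich_tmul, hφ, hψ, map_mul]
  | add x y hx hy => simp only [map_add, hx, hy]

theorem descend (F : IsTensorFactorization φi φj φ ψ t) (hpS : Function.Surjective pS)
    (hpV : Function.Surjective pV) (hpW : Function.Surjective pW) (hpU : Function.Surjective pU)
    (hφi : ∀ s, φi' (pS s) = pV (φi s)) (hφj : ∀ s, φj' (pS s) = pW (φj s))
    (hφ : ∀ v, φ' (pV v) = pU (φ v)) (hψ : ∀ w, ψ' (pW w) = pU (ψ w))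
    (h_ker : ∀ z, pU (sandwich ψ φ t z) = 0 → ∃ y y', sandwich ψ φ t y = sandwich ψ φ t y' ∧
      TensorProduct.map pW.toLinearMap pV.toLinearMap y =
        TensorProduct.map pW.toLinearMap pV.toLinearMap z ∧
      TensorProduct.map pW.toLinearMap pV.toLinearMap y' = 0) :
    IsTensorFactorization φi' φj' φ' ψ' (pU t) where
  balanced s := by
    obtain ⟨s, rfl⟩ := hpS s
    rw [hφi, hφj, hφ, hψ, ← map_mul, F.balanced, map_mul]
  mul_one := by rw [← map_one pS, hφi, hφ, ← map_mul, F.mul_one]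
  mem_of_sandwich_eq_zero z hz := by
    obtain ⟨z, rfl⟩ := TensorProduct.map_surjective (g := pW.toLinearMap) hpW
      (g' := pV.toLinearMap) hpV z
    rw [sandwich_map hφ hψ] at hz
    obtain ⟨y, y', h_eq, hy, hy'⟩ := h_ker z hz
    have h_mem := map_mem_balancingRelations hφi hφj
      (F.mem_of_sandwich_eq_zero (y - y') (by rw [map_sub, h_eq, sub_self]))
    rwa [map_sub, hy, hy', sub_zero] at h_mem
  exists_sandwich_eq u := by
    obtain ⟨u, rfl⟩ := hpU u
    obtain ⟨z, hz⟩ := F.exists_sandwich_eq u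
    refine ⟨TensorProduct.map pW.toLinearMap pV.toLinearMap z, ?_⟩
    rw [sandwich_map hφ hψ, hz, ← map_one pV, ← map_one pW, hφ, hψ, map_mul, map_mul]

end Descent

end IsTensorFactorization

end TensorFactorization

/-! ### The factorization of `e(…, i) R(n + 2) e(…, j)` -/

variable (C) in
/-- The homomorphism `R(n) → R(n + 1)`, `r ↦ r e(…, i)`, adding a last strand of colour `i`. -/
noncomputable def inclColour (n : ℕ) (i : I) : Alg C n →ₙₐ[k] Alg C (n + 1) where
  toFun r := incl r * eLast C n i
  map_smul' c r := by rw [map_smul, smul_mul_assoc]; rfl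
  map_zero' := by rw [map_zero, zero_mul]
  map_add' r s := by rw [map_add, add_mul]
  map_mul' r s := by
    rw [map_mul, mul_assoc, mul_assoc, ← (incl_commute_eLast s i).left_comm, eLast_mul_eLast,
      if_pos rfl]

lemma inclColour_apply {n : ℕ} {i : I} (r : Alg C n) :
    inclColour C n i r = incl r * eLast C n i := rfl

lemma inclColour_one {n : ℕ} {i : I} : inclColour C n i 1 = eLast C n i := by
  rw [inclColour_apply, map_one, one_mul]

section CrossingFactorization

variable {n : ℕ} {i j : I}

lemma crossing_eq (w v : Alg C (n + 1)) : crossing C i j w v =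
    incl (w * eLast C n j) * (eLast C (n + 1) i * (tauLast C n * incl v)) := by
  rw [crossing, (incl_commute_eLast v j).eq, ← mul_assoc (tauLast C n), tauLast_mul_eLast,
    ← (incl_commute_eLast w i).left_comm, mul_assoc,
    ← (incl_commute_eLast (eLast C n j) i).left_comm, map_mul, mul_assoc]

lemma crossing_mul_eLast_left (w v : Alg C (n + 1)) :
    crossing C i j (w * eLast C n j) v = crossing C i j w v := by
  rw [crossing_eq, crossing_eq, mul_assoc, eLast_mul_eLast, if_pos rfl]

lemma crossing_eLast_mul_right (w v : Alg C (n + 1)) :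
    crossing C i j w (eLast C n i * v) = crossing C i j w v := by
  rw [crossing_eq, crossing_eq, map_mul incl (eLast C n i), ← mul_assoc (tauLast C n),
    ← eLast_mul_tauLast, mul_assoc (eLast C (n + 1) i), ← mul_assoc (eLast C (n + 1) i),
    eLast_mul_eLast, if_pos rfl]

lemma crossing_mul_incl_left (w v : Alg C (n + 1)) (s : Alg C n) :
    crossing C i j (w * incl s) v = crossing C i j w (incl s * v) := by
  simp only [crossing, map_mul, mul_assoc]
  rw [(incl_incl_commute_tauLast s).left_comm]

lemma crossing_xLast_pow_mul_right (hij : i ≠ j) (w v : Alg C (n + 1)) (a : ℕ) :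
    crossing C i j w (xLast C n ^ a * v) = xLast C (n + 1) ^ a * crossing C i j w v := by
  induction a with
  | zero => rw [pow_zero, pow_zero, one_mul, one_mul]
  | succ a ih => rw [pow_succ', mul_assoc, ← xLast_mul_crossing _ _ hij, ih, pow_succ', mul_assoc]

lemma crossing_normalForm (hij : i ≠ j) (w : Alg C (n + 1)) (a : ℕ) {b : ℕ} (hb : b ≤ n) :
    crossing C i j w (xLast C n ^ a * (eLast C n i * tauChain C n b)) =
      incl (w * eLast C n j) *
        (xLast C (n + 1) ^ a * (eLast C (n + 1) i * tauChain C (n + 1) b)) := by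
  rw [crossing_xLast_pow_mul_right hij, crossing_eLast_mul_right, crossing_eq, tauChain_succ hb,
    ← ((incl_commute_xLast (w * eLast C n j)).pow_right a).left_comm]

variable (C) in
/-- The map `w ⊗ v ↦ e(…, i) w τ_{n+1} v e(…, j)` on `R(n + 1) ⊗ R(n + 1)`. -/
noncomputable abbrev crossingMap (n : ℕ) (i j : I) :
    Alg C (n + 1) ⊗[k] Alg C (n + 1) →ₗ[k] Alg C (n + 2) :=
  sandwich (inclColour C (n + 1) i) (inclColour C (n + 1) j) (crossing C i j 1 1)

lemma crossingMap_tmul (w v : Alg C (n + 1)) :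
    crossingMap C n i j (w ⊗ₜ v) = crossing C i j w v := by
  rw [sandwich_tmul, inclColour_apply, inclColour_apply, mul_assoc (incl w), eLast_mul_crossing,
    if_pos rfl, incl_mul_crossing, ← mul_assoc, crossing_mul_incl, crossing_mul_eLast, if_pos rfl,
    mul_one, one_mul]

lemma balancingRelations_le_ker_crossingMap :
    balancingRelations (inclColour C n i) (inclColour C n j) ≤
      LinearMap.ker (crossingMap C n i j) := by
  refine balancingRelations_le_ker (fun w s v => ?_) fun w v => ?_
  · rw [crossingMap_tmul, crossingMap_tmul, inclColour_apply, inclColour_apply,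
      ← mul_assoc w, crossing_mul_eLast_left, crossing_mul_incl_left, (incl_commute_eLast s i).eq,
      mul_assoc, crossing_eLast_mul_right]
  · rw [crossingMap_tmul, crossingMap_tmul, inclColour_one, crossing_eLast_mul_right]

variable (C) in
/-- The map `(r_{b,a})_{b,a} ↦ ∑ r_{b,a} ⊗ x_{n+1}^a e(…, i) τ_n ⋯ τ_{b+1}`, whose image represents
all elements of `R(n + 1) e(…, j) ⊗_{R(n)} e(…, i) R(n + 1)`. -/
noncomputable def tensorNormalForm (n : ℕ) (i : I) :
    (Fin (n + 1) × ℕ →₀ Alg C (n + 1)) →ₗ[k] Alg C (n + 1) ⊗[k] Alg C (n + 1) :=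
  Finsupp.lsum k fun t => (TensorProduct.mk k (Alg C (n + 1)) (Alg C (n + 1))).flip
    (xLast C n ^ t.2 * (eLast C n i * tauChain C n t.1))

lemma tensorNormalForm_apply (m : Fin (n + 1) × ℕ →₀ Alg C (n + 1)) : tensorNormalForm C n i m =
    m.sum fun t r => r ⊗ₜ (xLast C n ^ t.2 * (eLast C n i * tauChain C n t.1)) := rfl

lemma balancingRelations_sup_range_tensorNormalForm :
    balancingRelations (inclColour C n i) (inclColour C n j) ⊔
      LinearMap.range (tensorNormalForm C n i) = ⊤ := by
  rw [← top_le_iff, ← TensorProduct.span_tmul_eq_top]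
  refine Submodule.span_le.2 ?_
  rintro _ ⟨w, v, rfl⟩
  have hv : v ∈ cosetSpan C n := by rw [cosetSpan_eq_top]; trivial
  refine (Submodule.map_span_le (TensorProduct.mk k _ _ w) _ _).2 ?_ (Submodule.mem_map_of_mem hv)
  rintro _ ⟨r, a, l, b, hb, rfl⟩
  rw [TensorProduct.mk_apply]
  have h_left : eLast C n i * (xLast C n ^ a * (eLast C n l * tauChain C n b)) =
      if i = l then xLast C n ^ a * (eLast C n l * tauChain C n b) else 0 := by
    rw [← ((xLast_commute_eLast i).pow_left a).left_comm, ← mul_assoc (eLast C n i),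
      eLast_mul_eLast]
    split_ifs with h
    · rw [h]
    · rw [zero_mul, mul_zero]
  by_cases h : i = l
  · rw [if_pos h] at h_left
    have h_bal := balanced_mem (φi := inclColour C n i) (φj := inclColour C n j) w r
      (xLast C n ^ a * (eLast C n l * tauChain C n b))
    rw [inclColour_apply (i := i), mul_assoc (incl r), h_left] at h_bal
    refine (Submodule.sub_mem_iff_right _ ?_).1 (Submodule.mem_sup_left h_bal)
    refine Submodule.mem_sup_right
      ⟨Finsupp.single (⟨b, Nat.lt_succ_iff.2 hb⟩, a) (w * inclColour C n j r), ?_⟩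
    rw [tensorNormalForm_apply, Finsupp.sum_single_index, h]
    exact TensorProduct.zero_tmul _ _
  · refine Submodule.mem_sup_left (tmul_mem_of_one_mul_eq_zero ?_)
    rw [inclColour_one, ← (incl_commute_eLast r i).left_comm, h_left, if_neg h, mul_zero]

lemma crossingMap_tensorNormalForm (hij : i ≠ j) (m : Fin (n + 1) × ℕ →₀ Alg C (n + 1)) :
    crossingMap C n i j (tensorNormalForm C n i m) =
      pbwMap C (n + 1) (Finsupp.mapDomain (fun t => (t.1.castSucc, i, t.2))
        (m.mapRange (· * eLast C n j) (zero_mul _))) := by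
  rw [tensorNormalForm_apply, map_finsuppSum, pbwMap_apply,
    Finsupp.sum_mapDomain_index (fun _ => by rw [map_zero, zero_mul])
      (fun _ _ _ => by rw [map_add, add_mul]),
    Finsupp.sum_mapRange_index (fun _ => by rw [map_zero, zero_mul])]
  refine Finset.sum_congr rfl fun t _ => ?_
  exact (crossingMap_tmul _ _).trans (crossing_normalForm hij _ _ (Nat.lt_succ_iff.1 t.1.2))

lemma apply_mul_eLast_eq_zero_of_crossingMap (hij : i ≠ j)
    {m : Fin (n + 1) × ℕ →₀ Alg C (n + 1)}
    (h : crossingMap C n i j (tensorNormalForm C n i m) = 0) (t : Fin (n + 1) × ℕ) :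
    m t * eLast C n j = 0 := by
  have h_inj : Function.Injective fun t : Fin (n + 1) × ℕ => (t.1.castSucc, i, t.2) := by
    rintro ⟨b, a⟩ ⟨b', a'⟩ h_eq
    simpa only [Prod.mk.injEq, Fin.castSucc_inj, true_and] using h_eq
  rw [crossingMap_tensorNormalForm hij, ← map_zero (pbwMap C (n + 1))] at h
  have h_zero := Finsupp.mapDomain_injective h_inj
    ((pbwMap_injective (n + 1) h).trans Finsupp.mapDomain_zero.symm)
  exact (Finsupp.mapRange_apply).symm.trans (DFunLike.congr_fun h_zero t)

lemma mem_balancingRelations_of_crossingMap_eq_zero (hij : i ≠ j)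
    {z : Alg C (n + 1) ⊗[k] Alg C (n + 1)}
    (hz : crossingMap C n i j z = 0) :
    z ∈ balancingRelations (inclColour C n i) (inclColour C n j) := by
  have h_top : z ∈ balancingRelations (inclColour C n i) (inclColour C n j) ⊔
      LinearMap.range (tensorNormalForm C n i) := by
    rw [balancingRelations_sup_range_tensorNormalForm]; trivial
  obtain ⟨y, hy, _, ⟨m, rfl⟩, rfl⟩ := Submodule.mem_sup.1 h_top
  rw [LinearMap.map_add, LinearMap.mem_ker.1 (balancingRelations_le_ker_crossingMap hy),
    zero_add] at hz
  refine Submodule.add_mem _ hy ?_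
  rw [tensorNormalForm_apply]
  refine Submodule.sum_mem _ fun t _ => tmul_mem_of_mul_one_eq_zero ?_
  rw [inclColour_one]
  exact apply_mul_eLast_eq_zero_of_crossingMap hij hz t

lemma exists_crossingMap_eq {J : TwoSidedIdeal (Alg C (n + 1))} {u : Alg C (n + 2)}
    (hu : u ∈ crossingSpan C i j J) :
    ∃ z ∈ Submodule.span k {z | ∃ w v, (w ∈ J ∨ v ∈ J) ∧ z = w ⊗ₜ[k] v},
      crossingMap C n i j z = u := by
  refine Submodule.mem_map.1 (Submodule.span_le.2 ?_ hu)
  rintro _ ⟨w, v, h, rfl⟩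
  exact ⟨w ⊗ₜ v, Submodule.subset_span ⟨w, v, h, rfl⟩, crossingMap_tmul w v⟩

/-- This is the Mackey decomposition of `e(…, i) R(n + 2) e(…, j)` for `i ≠ j`. -/
theorem isTensorFactorization_crossing (hij : i ≠ j) :
    IsTensorFactorization (inclColour C n i) (inclColour C n j) (inclColour C (n + 1) j)
      (inclColour C (n + 1) i) (crossing C i j 1 1) where
  balanced s := by
    rw [inclColour_apply, inclColour_apply, inclColour_apply, inclColour_apply, mul_assoc,
      eLast_mul_crossing, if_pos rfl, incl_mul_crossing, ← mul_assoc, crossing_mul_incl,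
      crossing_mul_eLast, if_pos rfl, mul_one, one_mul, crossing_mul_eLast_left,
      (incl_commute_eLast s i).eq, crossing_eLast_mul_right]
    simpa only [one_mul, mul_one] using crossing_mul_incl_left (i := i) (j := j) 1 1 s
  mul_one := by
    rw [inclColour_one, inclColour_apply, ← mul_assoc, crossing_mul_incl, crossing_mul_eLast,
      if_pos rfl, one_mul, ← mul_one (eLast C n i), crossing_eLast_mul_right]
  mem_of_sandwich_eq_zero _ := mem_balancingRelations_of_crossingMap_eq_zero hij
  exists_sandwich_eq u := by
    obtain ⟨z, -, hz⟩ := exists_crossingMap_eq (eLast_mul_mul_eLast_mem_crossingSpan hij u)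
    exact ⟨z, by rw [hz, inclColour_one, inclColour_one, mul_assoc]⟩

end CrossingFactorization

section CyclotomicFactorization

variable {Λ β γ : I → ℕ} {n : ℕ} {i j : I}

lemma map_toCB_eq_zero {z : Alg C n ⊗[k] Alg C n}
    (hz : z ∈ Submodule.span k {z | ∃ w v,
      (w ∈ cyclotomicIdeal C Λ n ∨ v ∈ cyclotomicIdeal C Λ n) ∧ z = w ⊗ₜ[k] v}) :
    TensorProduct.map (toCB C Λ (β := β)).toLinearMap (toCB C Λ (β := γ)).toLinearMap z = 0 := by
  refine LinearMap.mem_ker.1 (Submodule.span_le.2 ?_ hz)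
  rintro _ ⟨w, v, h, rfl⟩
  rw [SetLike.mem_coe, LinearMap.mem_ker, TensorProduct.map_tmul, AlgHom.toLinearMap_apply,
    AlgHom.toLinearMap_apply]
  rcases h with h | h
  · rw [toCB_eq_zero_of_mem_cyclotomicIdeal h, TensorProduct.zero_tmul]
  · rw [toCB_eq_zero_of_mem_cyclotomicIdeal h, TensorProduct.tmul_zero]

lemma map_toCB_lTensor_mulRight_eIdem (z : Alg C n ⊗[k] Alg C n) :
    TensorProduct.map (toCB C Λ (β := β)).toLinearMap (toCB C Λ (β := γ)).toLinearMap
        (LinearMap.lTensor _ (LinearMap.mulRight k (eIdem C n γ)) z) =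
      TensorProduct.map (toCB C Λ).toLinearMap (toCB C Λ).toLinearMap z := by
  rw [← LinearMap.comp_apply, LinearMap.lTensor, ← TensorProduct.map_comp, LinearMap.comp_id]
  congr 2
  exact LinearMap.ext fun v => toCB_mul_eIdem v

lemma crossingMap_mul_eIdem (z : Alg C (n + 1) ⊗[k] Alg C (n + 1)) :
    crossingMap C n i j (LinearMap.lTensor _ (LinearMap.mulRight k (eIdem C (n + 1) β)) z) =
      crossingMap C n i j z * eIdem C (n + 2) (addA β j) := by
  rw [sandwich_lTensor, inclColour_apply, incl_eIdem_mul_eLast, ← inclColour_one, ← mul_assoc,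
    sandwich_mul_one]

lemma exists_map_toCB_eq_zero_of_toCB_crossingMap_eq_zero (hij : i ≠ j)
    {z : Alg C (n + 1) ⊗[k] Alg C (n + 1)}
    (hz : toCB C Λ (β := addA (addA β i) j) (crossingMap C n i j z) = 0) :
    ∃ y y', crossingMap C n i j y = crossingMap C n i j y' ∧
      TensorProduct.map (toCB C Λ (β := addA β j)).toLinearMap
          (toCB C Λ (β := addA β i)).toLinearMap y =
        TensorProduct.map (toCB C Λ).toLinearMap (toCB C Λ).toLinearMap z ∧
      TensorProduct.map (toCB C Λ (β := addA β j)).toLinearMap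
        (toCB C Λ (β := addA β i)).toLinearMap y' = 0 := by
  have h_mem := mul_eIdem_mem_cyclotomicIdeal_of_toCB_eq_zero hz
  rw [← crossingMap_mul_eIdem] at h_mem
  have h_span := eLast_mul_mul_eLast_mem_crossingSpan_cyclotomicIdeal hij h_mem
  rw [← inclColour_one (i := i), ← inclColour_one (i := j), sandwich_mul_one,
    one_mul_sandwich] at h_span
  obtain ⟨y', hy', h_eq⟩ := exists_crossingMap_eq h_span
  exact ⟨_, y', h_eq.symm, map_toCB_lTensor_mulRight_eIdem z, map_toCB_eq_zero hy'⟩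

theorem isTensorFactorization_toCB_crossing (hij : i ≠ j)
    {φi : cAlg C Λ n β →ₙₐ[k] cAlg C Λ (n + 1) (addA β i)}
    {φj : cAlg C Λ n β →ₙₐ[k] cAlg C Λ (n + 1) (addA β j)}
    {φ : cAlg C Λ (n + 1) (addA β i) →ₙₐ[k] cAlg C Λ (n + 2) (addA (addA β i) j)}
    {ψ : cAlg C Λ (n + 1) (addA β j) →ₙₐ[k] cAlg C Λ (n + 2) (addA (addA β i) j)}
    (hφi : IsUpRc C Λ i φi) (hφj : IsUpRc C Λ j φj) (hφ : IsUpRc C Λ j φ)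
    (hψ : IsUpRc C Λ i ψ) :
    IsTensorFactorization φi φj φ ψ (toCB C Λ (crossing C i j 1 1)) :=
  (isTensorFactorization_crossing hij).descend toCB_surjective toCB_surjective toCB_surjective
    toCB_surjective (hφi.map_toCB rfl) (hφj.map_toCB rfl) (hφ.map_toCB rfl)
    (hψ.map_toCB (addA_comm β i j))
    fun _ => exists_map_toCB_eq_zero_of_toCB_crossingMap_eq_zero hij

end CyclotomicFactorization

/-! ### Gradings -/

section Gradings

lemma mem_of_mem_iSup_of_le {R M ι : Type} [Ring R] [AddCommGroup M] [Module R M]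
    [DecidableEq ι] {A D : ι → Submodule R M} (hA : DirectSum.IsInternal A) (hD : ∀ c, D c ≤ A c)
    {y : M} {c : ι} (hy : y ∈ A c) (hy' : y ∈ ⨆ c, D c) : y ∈ D c := by
  let := hA.chooseDecomposition
  suffices h : (DirectSum.decompose A y c : M) ∈ D c by
    rwa [DirectSum.decompose_of_mem_same A hy] at h
  clear hy
  induction hy' using Submodule.iSup_induction' with
  | mem c' x hx =>
    by_cases h : c' = c
    · subst h
      rwa [DirectSum.decompose_of_mem_same A (hD _ hx)]
    · rw [DirectSum.decompose_of_mem_ne A (hD _ hx) h]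
      exact Submodule.zero_mem _
  | zero => simp only [DirectSum.decompose_zero, DirectSum.zero_apply, ZeroMemClass.coe_zero,
      Submodule.zero_mem]
  | add x y _ _ hx hy =>
    rw [DirectSum.decompose_add]
    exact Submodule.add_mem _ hx hy

lemma mul_mem_iSup {R A ι : Type} [CommSemiring R] [Semiring A] [Algebra R A] [Add ι]
    {D : ι → Submodule R A} (hD : ∀ ⦃c c' a b⦄, a ∈ D c → b ∈ D c' → a * b ∈ D (c + c')) {a b : A}
    (ha : a ∈ ⨆ c, D c) (hb : b ∈ ⨆ c, D c) : a * b ∈ ⨆ c, D c := by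
  have h_le : (⨆ c, D c) * (⨆ c, D c) ≤ ⨆ c, D c := by
    simp only [Submodule.iSup_mul, Submodule.mul_iSup]
    exact iSup_le fun c' => iSup_le fun c => Submodule.mul_le.2 fun _ ha _ hb =>
      Submodule.mem_iSup_of_mem (c + c') (hD ha hb)
  exact h_le (Submodule.mul_mem_mul ha hb)

/-- The elements of degree `c` of a graded algebra that `φ` maps to elements of degree `c`. -/
def degreePreserving {A A' : Type} [Ring A] [Algebra k A] [Ring A'] [Algebra k A']
    (φ : A →ₙₐ[k] A') (𝒜 : ℤ → Submodule k A) (ℬ : ℤ → Submodule k A') (c : ℤ) : Submodule k A :=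
  𝒜 c ⊓ (ℬ c).comap (φ : A →ₗ[k] A')

lemma mem_degreePreserving {A A' : Type} [Ring A] [Algebra k A] [Ring A'] [Algebra k A']
    {φ : A →ₙₐ[k] A'} {𝒜 : ℤ → Submodule k A} {ℬ : ℤ → Submodule k A'} {c : ℤ} {x : A} :
    x ∈ degreePreserving φ 𝒜 ℬ c ↔ x ∈ 𝒜 c ∧ φ x ∈ ℬ c :=
  Iff.rfl

section KLRGrading

variable {n : ℕ} {A : Type} [Ring A] [Algebra k A] {𝒜 : ℤ → Submodule k A}

lemma map_mem_of_forall_mul_Ee_mem {p : Alg C n →ₐ[k] A} {T : Submodule k A} {g : Alg C n}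
    (hg : ∀ ν, p (g * Ee C ν) ∈ T) : p g ∈ T := by
  rw [← mul_one g, ← sum_Ee, Finset.mul_sum, map_sum]
  exact Submodule.sum_mem _ fun ν _ => hg ν

lemma IsKLRGrading.map_eLast_mem {p : Alg C (n + 1) →ₐ[k] A} (h : IsKLRGrading C p 𝒜) (i : I) :
    p (eLast C n i) ∈ 𝒜 0 := by
  rw [eLast, diag, map_sum]
  refine Submodule.sum_mem _ fun ν _ => ?_
  rw [map_smul]
  exact Submodule.smul_mem _ _ (h.2.1 ν)

lemma IsKLRGrading.map_crossing_mem {p : Alg C (n + 2) →ₐ[k] A} (h : IsKLRGrading C p 𝒜)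
    (i j : I) : p (crossing C i j 1 1) ∈ 𝒜 (-B C i j) := by
  refine map_mem_of_forall_mul_Ee_mem fun ν => ?_
  rw [crossing, map_one, one_mul, one_mul, ← mul_assoc, eLast_mul_tauLast]
  simp only [mul_assoc, eLast_mul_Ee]
  by_cases hj : ν (Fin.last (n + 1)) = j
  · rw [if_pos hj, incl_eLast_mul_Ee]
    by_cases hi : ν (Fin.last n).castSucc = i
    · rw [if_pos hi, ← hi, ← hj]
      exact h.2.2.2 n (by omega) ν
    · rw [if_neg hi, mul_zero, map_zero]
      exact Submodule.zero_mem _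
  · rw [if_neg hj, mul_zero, mul_zero, map_zero]
    exact Submodule.zero_mem _

end KLRGrading

variable {Λ : I → ℕ} {n : ℕ} {β γ : I → ℕ} {i : I}
  {φ : cAlg C Λ n β →ₙₐ[k] cAlg C Λ (n + 1) γ} {𝒜 : ℤ → Submodule k (cAlg C Λ n β)}
  {ℬ : ℤ → Submodule k (cAlg C Λ (n + 1) γ)}

lemma IsUpRc.map_toCB_mul_Ee (h : γ = addA β i) (hφ : IsUpRc C Λ i φ) (w : Alg C n)
    (ν : Fin n → I) :
    φ (toCB C Λ (w * Ee C ν)) = toCB C Λ (incl w * Ee C (Fin.snoc ν i)) := by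
  rw [hφ.map_toCB h, map_mul incl, mul_assoc, incl_Ee_mul_eLast]

lemma IsUpRc.toCB_mem_iSup_degreePreserving (h : γ = addA β i) (hφ : IsUpRc C Λ i φ)
    (h𝒜 : IsKLRGrading C (toCB C Λ) 𝒜) (hℬ : IsKLRGrading C (toCB C Λ) ℬ) (w : Alg C n) :
    toCB C Λ w ∈ ⨆ c, degreePreserving φ 𝒜 ℬ c := by
  have h_Ee (ν : Fin n → I) : toCB C Λ (Ee C ν) ∈ degreePreserving φ 𝒜 ℬ 0 :=
    mem_degreePreserving.2 ⟨h𝒜.2.1 ν, by rw [hφ.1]; exact hℬ.2.1 _⟩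
  induction w using Alg.induction with
  | algebraMap c =>
    refine map_mem_of_forall_mul_Ee_mem fun ν => Submodule.mem_iSup_of_mem 0 ?_
    rw [← Algebra.smul_def, map_smul]
    exact Submodule.smul_mem _ _ (h_Ee ν)
  | e ν => exact Submodule.mem_iSup_of_mem 0 (h_Ee ν)
  | x a =>
    refine map_mem_of_forall_mul_Ee_mem fun ν =>
      Submodule.mem_iSup_of_mem _ (mem_degreePreserving.2 ⟨h𝒜.2.2.1 a ν, ?_⟩)
    have h_deg := hℬ.2.2.1 a.castSucc (Fin.snoc ν i)
    rw [Fin.snoc_castSucc, ← incl_Xx, ← hφ.map_toCB_mul_Ee h] at h_deg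
    exact h_deg
  | tau l hl =>
    refine map_mem_of_forall_mul_Ee_mem fun ν =>
      Submodule.mem_iSup_of_mem _ (mem_degreePreserving.2 ⟨h𝒜.2.2.2 l hl ν, ?_⟩)
    have h_deg := hℬ.2.2.2 l (Nat.lt_succ_of_lt hl) (Fin.snoc ν i)
    rw [snoc_mk_of_lt ν i (by omega), snoc_mk_of_lt ν i hl, ← incl_Tt,
      ← hφ.map_toCB_mul_Ee h] at h_deg
    exact h_deg
  | add a b ha hb =>
    rw [map_add]
    exact Submodule.add_mem _ ha hb
  | mul a b ha hb =>
    rw [map_mul]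
    refine mul_mem_iSup (D := degreePreserving φ 𝒜 ℬ) (fun c c' a b ha hb => ?_) ha hb
    refine mem_degreePreserving.2 ⟨h𝒜.1.2.1 ha.1 hb.1, ?_⟩
    rw [map_mul]
    exact hℬ.1.2.1 ha.2 hb.2

theorem IsUpRc.map_mem (h : γ = addA β i) (hφ : IsUpRc C Λ i φ)
    (h𝒜 : IsKLRGrading C (toCB C Λ) 𝒜) (hℬ : IsKLRGrading C (toCB C Λ) ℬ) {c : ℤ}
    {x : cAlg C Λ n β} (hx : x ∈ 𝒜 c) : φ x ∈ ℬ c := by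
  obtain ⟨w, rfl⟩ := toCB_surjective x
  exact (mem_of_mem_iSup_of_le h𝒜.1.2.2 (fun _ => inf_le_left) hx
    (hφ.toCB_mem_iSup_degreePreserving h h𝒜 hℬ w)).2

end Gradings

/-! ### Balanced tensor products -/

section BalancedTensor

variable {S R M Z : Type} [Ring S] [Algebra k S] [Ring R] [Algebra k R] [AddCommGroup M]
  [Module k M] [Module S M] [AddCommGroup Z] [Module k Z] {φ : S →ₙₐ[k] R}

/-- `OTmk` as a `k`-linear map. -/
def balancedMk (φ : S →ₙₐ[k] R) : R ⊗[k] M →ₗ[k] OT k S R M φ :=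
  (TRel k S R M φ).mkQ.restrictScalars k

lemma balancedMk_mul_tmul (b : R) (r : S) (m : M) :
    balancedMk φ ((b * φ r) ⊗ₜ[k] m) = balancedMk φ (b ⊗ₜ[k] (r • m)) :=
  (Submodule.Quotient.eq _).2 (Submodule.subset_span ⟨b, r, m, rfl⟩)

lemma smul_balancedMk_tmul (b a : R) (m : M) :
    b • balancedMk φ (a ⊗ₜ[k] m) = balancedMk φ ((b * a) ⊗ₜ[k] m) :=
  rfl

@[elab_as_elim]
lemma balanced_induction {P : OT k S R M φ → Prop} (zero : P 0)
    (tmul : ∀ b m, P (balancedMk φ (b ⊗ₜ[k] m))) (add : ∀ x y, P x → P y → P (x + y))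
    (x : OT k S R M φ) : P x := by
  obtain ⟨z, rfl⟩ := Submodule.Quotient.mk_surjective _ x
  induction z using TensorProduct.induction_on with
  | zero => exact zero
  | tmul b m => exact tmul b m
  | add x y hx hy => exact add _ _ hx hy

-- The relations span an `R`-submodule, so a map that is only `k`-linear has to vanish on all their
-- `R`-multiples.
lemma restrictScalars_TRel_le_ker {f : R ⊗[k] M →ₗ[k] Z}
    (hf : ∀ b r m, f ((b * φ r) ⊗ₜ m) = f (b ⊗ₜ (r • m))) :
    (TRel k S R M φ).restrictScalars k ≤ LinearMap.ker f := by
  suffices h : ∀ z ∈ TRel k S R M φ, ∀ b : R, f (b • z) = 0 from fun z hz => by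
    simpa only [one_smul, LinearMap.mem_ker] using h z hz 1
  intro z hz
  induction hz using Submodule.span_induction with
  | mem z hz =>
    obtain ⟨a, r, m, rfl⟩ := hz
    intro b
    simp only [smul_sub, TensorProduct.smul_tmul', smul_eq_mul, map_sub, ← mul_assoc, hf, sub_self]
  | zero => intro b; rw [smul_zero, map_zero]
  | add x y _ _ hx hy => intro b; rw [smul_add, map_add, hx, hy, add_zero]
  | smul a x _ hx => intro b; rw [← mul_smul, hx]

/-- The `k`-linear map on a balanced tensor product induced by a balanced map. -/
def balancedLift (f : R ⊗[k] M →ₗ[k] Z) (hf : ∀ b r m, f ((b * φ r) ⊗ₜ m) = f (b ⊗ₜ (r • m))) :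
    OT k S R M φ →ₗ[k] Z :=
  Submodule.liftQ _ f (restrictScalars_TRel_le_ker hf) ∘ₗ
    (Submodule.Quotient.restrictScalarsEquiv k (TRel k S R M φ)).symm.toLinearMap

lemma otGr_le_comap {f : OT k S R M φ →ₗ[k] Z} {𝒜 : ℤ → Submodule k R} {gr : ℤ → Submodule k M}
    {c : ℤ} {T : Submodule k Z}
    (h : ∀ c₁ c₂ b m, c₁ + c₂ = c → b ∈ 𝒜 c₁ → m ∈ gr c₂ → f (balancedMk φ (b ⊗ₜ m)) ∈ T) :
    otGr k S R M φ 𝒜 gr c ≤ T.comap f := by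
  refine Submodule.span_le.2 ?_
  rintro _ ⟨c₁, c₂, b, m, hc, hb, hm, rfl⟩
  exact h c₁ c₂ b m hc hb hm

end BalancedTensor

section Cut

variable {V N : Type} [Ring V] [Algebra k V] [AddCommGroup N] [Module k N] [Module V N]
  [IsScalarTower k V N] {e : V}

/-- Multiplication by `e`, as a map onto `e N`. -/
def cut (N : Type) [AddCommGroup N] [Module k N] [Module V N] [IsScalarTower k V N] (e : V) :
    N →ₗ[k] eSub k V N e :=
  (eMap k V N e).rangeRestrict

lemma coe_cut (n : N) : (cut (k := k) N e n : N) = e • n :=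
  rfl

lemma smul_coe_eSub (he : IsIdempotentElem e) (x : eSub k V N e) : e • (x : N) = x := by
  obtain ⟨_, n, rfl⟩ := x
  exact (mul_smul e e n).symm.trans (congrArg (· • n) he)

lemma cut_coe (he : IsIdempotentElem e) (x : eSub k V N e) : cut (k := k) N e x = x :=
  Subtype.ext (smul_coe_eSub he x)

lemma isIdempotentElem_map_one {S : Type} [Ring S] [Algebra k S] (φ : S →ₙₐ[k] V) :
    IsIdempotentElem (φ 1) :=
  (map_mul φ 1 1).symm.trans (congrArg φ (one_mul 1))

end Cut

/-! ### The exchange isomorphism -/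

section Exchange

variable {S V W U N : Type} [Ring S] [Algebra k S] [Ring V] [Algebra k V] [Ring W] [Algebra k W]
  [Ring U] [Algebra k U] [AddCommGroup N] [Module k N] [Module V N] [IsScalarTower k V N]
  {φi : S →ₙₐ[k] V} {φj : S →ₙₐ[k] W} {φ : V →ₙₐ[k] U} {ψ : W →ₙₐ[k] U} {t : U} {e : V} {e' : U}
  [Module S (eSub k V N e)]

lemma balancedMk_exchange_balanced
    (hS : ∀ (r : S) (x : eSub k V N e), ((r • x : eSub k V N e) : N) = φi r • (x : N))
    (F : IsTensorFactorization φi φj φ ψ t) (w : W) (r : S) (x : eSub k V N e) :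
    balancedMk φ ((ψ (w * φj r) * t) ⊗ₜ[k] (x : N)) =
      balancedMk φ ((ψ w * t) ⊗ₜ[k] ((r • x : eSub k V N e) : N)) := by
  rw [map_mul, mul_assoc, F.balanced, ← mul_assoc, balancedMk_mul_tmul, hS]

/-- The map `W ⊗_S e N → U ⊗_V N`, `w ⊗ x ↦ ψ w * t ⊗ x`. -/
noncomputable def exchange
    (hS : ∀ (r : S) (x : eSub k V N e), ((r • x : eSub k V N e) : N) = φi r • (x : N))
    (F : IsTensorFactorization φi φj φ ψ t) : OT k S W (eSub k V N e) φj →ₗ[k] OT k V U N φ :=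
  balancedLift
    (balancedMk φ ∘ₗ
      TensorProduct.map (LinearMap.mulRight k t ∘ₗ (ψ : W →ₗ[k] U)) (eSub k V N e).subtype)
    (balancedMk_exchange_balanced hS F)

/-- The map sending `w ⊗ v` to `n ↦ w ⊗ e v n`. -/
noncomputable def cutAction (N : Type) [AddCommGroup N] [Module k N] [Module V N]
    [IsScalarTower k V N] (e : V) [Module S (eSub k V N e)]
    (φj : S →ₙₐ[k] W) : W ⊗[k] V →ₗ[k] N →ₗ[k] OT k S W (eSub k V N e) φj :=
  TensorProduct.curry (balancedMk φj ∘ₗ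
    LinearMap.lTensor W (cut N e ∘ₗ TensorProduct.lift (Algebra.lsmul k k N).toLinearMap) ∘ₗ
    (TensorProduct.assoc k W V N).toLinearMap)

lemma cutAction_tmul (w : W) (v : V) (n : N) :
    cutAction N e φj (w ⊗ₜ v) n = balancedMk φj (w ⊗ₜ cut N e (v • n)) :=
  rfl

lemma cutAction_lTensor (z : W ⊗[k] V) (v : V) (n : N) :
    cutAction N e φj (LinearMap.lTensor W (LinearMap.mulRight k v) z) n =
      cutAction N e φj z (v • n) := by
  induction z using TensorProduct.induction_on with
  | zero => simp only [map_zero, LinearMap.zero_apply]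
  | tmul a b =>
    rw [LinearMap.lTensor_tmul, cutAction_tmul, cutAction_tmul, LinearMap.mulRight_apply, mul_smul]
  | add x y hx hy => simp only [map_add, LinearMap.add_apply, hx, hy]

section

variable (hS : ∀ (r : S) (x : eSub k V N e), ((r • x : eSub k V N e) : N) = φi r • (x : N))
  (F : IsTensorFactorization φi φj φ ψ t)

lemma exchange_balancedMk_tmul (w : W) (x : eSub k V N e) :
    exchange hS F (balancedMk φj (w ⊗ₜ x)) = balancedMk φ ((ψ w * t) ⊗ₜ[k] (x : N)) :=
  rfl

lemma exchange_smul (w : W) (x : OT k S W (eSub k V N e) φj) :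
    exchange hS F (w • x) = ψ w • exchange hS F x := by
  induction x using balanced_induction with
  | zero => rw [smul_zero, map_zero, smul_zero]
  | tmul b m =>
    simp only [smul_balancedMk_tmul, exchange_balancedMk_tmul, map_mul, mul_assoc]
  | add x y hx hy => simp only [smul_add, map_add, hx, hy]

lemma exchange_mem (he' : e' = ψ 1) (x : OT k S W (eSub k V N e) φj) :
    exchange hS F x ∈ eSub k U (OT k V U N φ) e' := by
  rw [he']
  exact ⟨exchange hS F x, (exchange_smul hS F 1 x).symm.trans (congrArg _ (one_smul W x))⟩

lemma exchange_cutAction (he : e = φi 1) (z : W ⊗[k] V) (n : N) :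
    exchange hS F (cutAction N e φj z n) = balancedMk φ (sandwich ψ φ t z ⊗ₜ[k] n) := by
  induction z using TensorProduct.induction_on with
  | zero => simp only [map_zero, LinearMap.zero_apply, TensorProduct.zero_tmul]
  | tmul w v =>
    rw [cutAction_tmul, exchange_balancedMk_tmul, sandwich_tmul, coe_cut, ← balancedMk_mul_tmul,
      ← balancedMk_mul_tmul, he, mul_assoc (ψ w), F.mul_one]
  | add x y hx hy =>
    simp only [map_add, LinearMap.add_apply, TensorProduct.add_tmul, hx, hy]

include hS in
lemma cutAction_eq_zero_of_mem (he : e = φi 1) {z : W ⊗[k] V}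
    (hz : z ∈ balancingRelations φi φj) : cutAction N e φj z = 0 := by
  have h_idem : IsIdempotentElem e := he ▸ isIdempotentElem_map_one φi
  refine balancingRelations_le_ker (fun w s v => ?_) (fun w v => ?_) hz <;> ext n <;>
    rw [cutAction_tmul, cutAction_tmul]
  · rw [balancedMk_mul_tmul]
    congr 2
    apply Subtype.ext
    rw [hS, coe_cut, coe_cut, ← mul_smul, ← mul_smul, ← mul_smul, he, ← map_mul, mul_one,
      ← mul_assoc, ← map_mul, one_mul]
  · congr 2
    apply Subtype.ext
    rw [coe_cut, coe_cut, ← he, mul_smul, ← mul_smul e e, h_idem]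

include hS F in
lemma cutAction_congr (he : e = φi 1) {z z' : W ⊗[k] V}
    (h : sandwich ψ φ t z = sandwich ψ φ t z') : cutAction N e φj z = cutAction N e φj z' := by
  rw [← sub_eq_zero, ← map_sub]
  refine cutAction_eq_zero_of_mem hS he (F.mem_of_sandwich_eq_zero _ ?_)
  rw [map_sub, h, sub_self]

end

lemma IsTensorFactorization.exists_linear_section (F : IsTensorFactorization φi φj φ ψ t) :
    ∃ s : U →ₗ[k] W ⊗[k] V, ∀ u, sandwich ψ φ t (s u) = ψ 1 * u * φ 1 := by
  let g : U →ₗ[k] LinearMap.range (sandwich ψ φ t) :=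
    (LinearMap.mulRight k (φ 1) ∘ₗ LinearMap.mulLeft k (ψ 1)).codRestrict _ F.exists_sandwich_eq
  obtain ⟨s, hs⟩ := Module.projective_lifting_property (sandwich ψ φ t).rangeRestrict g
    (LinearMap.surjective_rangeRestrict _)
  exact ⟨s, fun u => congrArg Subtype.val (LinearMap.congr_fun hs u)⟩

lemma exists_exchange_inverse
    (hS : ∀ (r : S) (x : eSub k V N e), ((r • x : eSub k V N e) : N) = φi r • (x : N))
    (F : IsTensorFactorization φi φj φ ψ t) (he : e = φi 1) :
    ∃ g : OT k V U N φ →ₗ[k] OT k S W (eSub k V N e) φj, ∀ z u n,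
      sandwich ψ φ t z = ψ 1 * u * φ 1 → g (balancedMk φ (u ⊗ₜ n)) = cutAction N e φj z n := by
  obtain ⟨s, hs⟩ := F.exists_linear_section
  refine ⟨balancedLift (TensorProduct.lift (cutAction N e φj ∘ₗ s)) fun u v n => ?_,
    fun z u n h => ?_⟩
  · rw [TensorProduct.lift.tmul, TensorProduct.lift.tmul, LinearMap.comp_apply,
      LinearMap.comp_apply, ← cutAction_lTensor]
    refine LinearMap.congr_fun (cutAction_congr hS F he ?_) n
    rw [sandwich_lTensor, hs, hs]
    simp only [mul_assoc, ← map_mul, mul_one, one_mul]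
  · exact LinearMap.congr_fun (cutAction_congr hS F he ((hs u).trans h.symm)) n

/-- The inverse of `exchange` on `ψ(1) (U ⊗_V N)`: it sends `ψ w * t * φ v ⊗ n` to `w ⊗ e v n`. -/
noncomputable def exchangeInv
    (hS : ∀ (r : S) (x : eSub k V N e), ((r • x : eSub k V N e) : N) = φi r • (x : N))
    (F : IsTensorFactorization φi φj φ ψ t) (he : e = φi 1) :
    OT k V U N φ →ₗ[k] OT k S W (eSub k V N e) φj :=
  (exists_exchange_inverse hS F he).choose

variable (hS : ∀ (r : S) (x : eSub k V N e), ((r • x : eSub k V N e) : N) = φi r • (x : N))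
  (F : IsTensorFactorization φi φj φ ψ t) (he : e = φi 1)

lemma exchangeInv_balancedMk_tmul {z : W ⊗[k] V} {u : U} (h : sandwich ψ φ t z = ψ 1 * u * φ 1)
    (n : N) : exchangeInv hS F he (balancedMk φ (u ⊗ₜ n)) = cutAction N e φj z n :=
  (exists_exchange_inverse hS F he).choose_spec z u n h

lemma exchangeInv_exchange (x : OT k S W (eSub k V N e) φj) :
    exchangeInv hS F he (exchange hS F x) = x := by
  induction x using balanced_induction with
  | zero => rw [map_zero, map_zero]
  | tmul w x =>
    have h_sandwich : sandwich ψ φ t (w ⊗ₜ 1) = ψ 1 * (ψ w * t) * φ 1 := by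
      rw [sandwich_tmul, ← mul_assoc, ← map_mul, one_mul]
    rw [exchange_balancedMk_tmul, exchangeInv_balancedMk_tmul hS F he h_sandwich, cutAction_tmul,
      one_smul, cut_coe (he ▸ isIdempotentElem_map_one φi)]
  | add x y hx hy => rw [map_add, map_add, hx, hy]

lemma exchange_exchangeInv (y : OT k V U N φ) :
    exchange hS F (exchangeInv hS F he y) = ψ 1 • y := by
  induction y using balanced_induction with
  | zero => rw [map_zero, map_zero, smul_zero]
  | tmul u n =>
    obtain ⟨z, hz⟩ := F.exists_sandwich_eq u
    rw [exchangeInv_balancedMk_tmul hS F he hz, exchange_cutAction hS F he, hz,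
      balancedMk_mul_tmul, one_smul, smul_balancedMk_tmul]
  | add x y hx hy => rw [map_add, map_add, hx, hy, smul_add]

/-- `exchange` as a `W`-linear isomorphism `W ⊗_S e N ≃ e' (U ⊗_V N)`. -/
noncomputable def exchangeEquiv [Module W (eSub k U (OT k V U N φ) e')]
    (hW : ∀ (w : W) (x : eSub k U (OT k V U N φ) e'),
      ((w • x : eSub k U (OT k V U N φ) e') : OT k V U N φ) = ψ w • (x : OT k V U N φ))
    (he' : e' = ψ 1) : OT k S W (eSub k V N e) φj ≃ₗ[W] eSub k U (OT k V U N φ) e' where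
  toFun x := ⟨exchange hS F x, exchange_mem hS F he' x⟩
  map_add' x y := Subtype.ext (map_add (exchange hS F) x y)
  map_smul' w x := Subtype.ext <|
    (exchange_smul hS F w x).trans (hW w ⟨exchange hS F x, exchange_mem hS F he' x⟩).symm
  invFun y := exchangeInv hS F he y
  left_inv x := exchangeInv_exchange hS F he x
  right_inv y := Subtype.ext <| (exchange_exchangeInv hS F he _).trans <| by
    rw [← he']
    exact smul_coe_eSub (he' ▸ isIdempotentElem_map_one ψ) y

lemma exchange_natural {N' : Type} [AddCommGroup N'] [Module k N'] [Module V N']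
    [IsScalarTower k V N'] [Module S (eSub k V N' e)]
    (hS' : ∀ (r : S) (x : eSub k V N' e), ((r • x : eSub k V N' e) : N') = φi r • (x : N'))
    {f : N → N'} {gE : eSub k V N e → eSub k V N' e} (hgE : ∀ x, (gE x : N') = f x)
    {gFE : OT k S W (eSub k V N e) φj →ₗ[k] OT k S W (eSub k V N' e) φj}
    (hgFE : ∀ w x, gFE (OTmk k S W _ φj (w ⊗ₜ x)) = OTmk k S W _ φj (w ⊗ₜ gE x))
    {gF : OT k V U N φ →ₗ[k] OT k V U N' φ}
    (hgF : ∀ u n, gF (OTmk k V U N φ (u ⊗ₜ n)) = OTmk k V U N' φ (u ⊗ₜ f n))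
    (z : OT k S W (eSub k V N e) φj) :
    exchange hS' F (gFE z) = gF (exchange hS F z) := by
  induction z using balanced_induction with
  | zero => simp only [map_zero]
  | tmul w x =>
    calc exchange hS' F (gFE (balancedMk φj (w ⊗ₜ x)))
        = exchange hS' F (balancedMk φj (w ⊗ₜ gE x)) := congrArg _ (hgFE w x)
      _ = balancedMk φ ((ψ w * t) ⊗ₜ f x) := by rw [exchange_balancedMk_tmul, hgE]
      _ = gF (exchange hS F (balancedMk φj (w ⊗ₜ x))) := (hgF _ _).symm
  | add x y hx hy => simp only [map_add, hx, hy]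

section Graded

variable {𝒱 : ℤ → Submodule k V} {𝒲 : ℤ → Submodule k W} {𝒰 : ℤ → Submodule k U} {b : ℤ}

/-- The degree `c` part of `W ⊗_k V`. -/
def tensorDegree (𝒲 : ℤ → Submodule k W) (𝒱 : ℤ → Submodule k V) (c : ℤ) :
    Submodule k (W ⊗[k] V) :=
  Submodule.span k {z | ∃ c₁ c₂ w v, c₁ + c₂ = c ∧ w ∈ 𝒲 c₁ ∧ v ∈ 𝒱 c₂ ∧ z = w ⊗ₜ v}

lemma iSup_tensorDegree (h𝒲 : ⨆ c, 𝒲 c = ⊤) (h𝒱 : ⨆ c, 𝒱 c = ⊤) :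
    ⨆ c, tensorDegree 𝒲 𝒱 c = ⊤ := by
  rw [eq_top_iff, ← TensorProduct.map₂_mk_top_top_eq_top, ← h𝒲, ← h𝒱]
  simp only [Submodule.map₂_iSup_left, Submodule.map₂_iSup_right]
  exact iSup_le fun c₂ => iSup_le fun c₁ => Submodule.map₂_le.2 fun w hw v hv =>
    Submodule.mem_iSup_of_mem (c₁ + c₂) (Submodule.subset_span ⟨c₁, c₂, w, v, rfl, hw, hv, rfl⟩)

lemma map_sandwich_tensorDegree_le (h𝒰 : IsAlgGrading k 𝒰)
    (hφ : ∀ {c x}, x ∈ 𝒱 c → φ x ∈ 𝒰 c) (hψ : ∀ {c x}, x ∈ 𝒲 c → ψ x ∈ 𝒰 c)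
    (ht : t ∈ 𝒰 (-b)) (c : ℤ) :
    (tensorDegree 𝒲 𝒱 (c + b)).map (sandwich ψ φ t) ≤ 𝒰 c := by
  refine (Submodule.map_span_le _ _ _).2 ?_
  rintro _ ⟨c₁, c₂, w, v, hc, hw, hv, rfl⟩
  have h_deg := h𝒰.2.1 (h𝒰.2.1 (hψ hw) ht) (hφ hv)
  rwa [show c₁ + -b + c₂ = c by omega] at h_deg

lemma exists_mem_tensorDegree_sandwich_eq (F : IsTensorFactorization φi φj φ ψ t)
    (h𝒱 : IsAlgGrading k 𝒱) (h𝒲 : IsAlgGrading k 𝒲) (h𝒰 : IsAlgGrading k 𝒰)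
    (hφ : ∀ {c x}, x ∈ 𝒱 c → φ x ∈ 𝒰 c) (hψ : ∀ {c x}, x ∈ 𝒲 c → ψ x ∈ 𝒰 c)
    (ht : t ∈ 𝒰 (-b)) {c : ℤ} {u : U} (hu : u ∈ 𝒰 c) :
    ∃ z ∈ tensorDegree 𝒲 𝒱 (c + b), sandwich ψ φ t z = ψ 1 * u * φ 1 := by
  have h_mem : ψ 1 * u * φ 1 ∈ 𝒰 c := by
    simpa only [zero_add, add_zero] using h𝒰.2.1 (h𝒰.2.1 (hψ h𝒲.1) hu) (hφ h𝒱.1)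
  refine mem_of_mem_iSup_of_le h𝒰.2.2 (map_sandwich_tensorDegree_le h𝒰 hφ hψ ht) h_mem ?_
  have h_top : ⨆ c, tensorDegree 𝒲 𝒱 (c + b) = ⊤ :=
    ((Equiv.addRight b).surjective.iSup_comp (tensorDegree 𝒲 𝒱)).trans
      (iSup_tensorDegree h𝒲.2.2.submodule_iSup_eq_top h𝒱.2.2.submodule_iSup_eq_top)
  rw [← Submodule.map_iSup, h_top]
  obtain ⟨z, hz⟩ := F.exists_sandwich_eq u
  exact ⟨z, Submodule.mem_top, hz⟩

variable {grN : ℤ → Submodule k N}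

lemma cutAction_mem_otGr (hN : IsModGrading k 𝒱 grN) (h_e : e ∈ 𝒱 0) {c c' : ℤ} {z : W ⊗[k] V}
    (hz : z ∈ tensorDegree 𝒲 𝒱 c) {n : N} (hn : n ∈ grN c') :
    cutAction N e φj z n ∈ otGr k S W (eSub k V N e) φj 𝒲 (eSubGr k V N e grN) (c + c') := by
  suffices h : (tensorDegree 𝒲 𝒱 c).map ((cutAction N e φj).flip n) ≤
      otGr k S W (eSub k V N e) φj 𝒲 (eSubGr k V N e grN) (c + c') from h ⟨z, hz, rfl⟩
  refine (Submodule.map_span_le _ _ _).2 ?_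
  rintro _ ⟨c₁, c₂, w, v, hc, hw, hv, rfl⟩
  exact Submodule.subset_span
    ⟨c₁, 0 + (c₂ + c'), w, cut N e (v • n), by omega, hw, hN.2 h_e (hN.2 hv hn), rfl⟩

include he in
theorem mem_otGr_iff_exchange_mem (h𝒱 : IsAlgGrading k 𝒱) (h𝒲 : IsAlgGrading k 𝒲)
    (h𝒰 : IsAlgGrading k 𝒰) (hφ : ∀ {c x}, x ∈ 𝒱 c → φ x ∈ 𝒰 c)
    (hψ : ∀ {c x}, x ∈ 𝒲 c → ψ x ∈ 𝒰 c) (ht : t ∈ 𝒰 (-b)) (h_e : e ∈ 𝒱 0)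
    (hN : IsModGrading k 𝒱 grN) {m : ℤ} {x : OT k S W (eSub k V N e) φj} :
    x ∈ otGr k S W (eSub k V N e) φj 𝒲 (eSubGr k V N e grN) (m + b) ↔
      exchange hS F x ∈ otGr k V U N φ 𝒰 grN m := by
  constructor <;> intro hx
  · refine otGr_le_comap (f := exchange hS F) (T := otGr k V U N φ 𝒰 grN m)
      (fun c₁ c₂ w x hc hw hx => ?_) hx
    exact Submodule.subset_span
      ⟨c₁ + -b, c₂, ψ w * t, x, by omega, h𝒰.2.1 (hψ hw) ht, hx, rfl⟩
  · rw [← exchangeInv_exchange hS F he x]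
    refine otGr_le_comap (f := exchangeInv hS F he)
      (T := otGr k S W (eSub k V N e) φj 𝒲 (eSubGr k V N e grN) (m + b))
      (fun c₁ c₂ u n hc hu hn => ?_) hx
    obtain ⟨z, hz, h_eq⟩ := exists_mem_tensorDegree_sandwich_eq F h𝒱 h𝒲 h𝒰 hφ hψ ht hu
    rw [exchangeInv_balancedMk_tmul hS F he h_eq, show m + b = c₁ + b + c₂ by omega]
    exact cutAction_mem_otGr hN h_e hz hn

end Graded

end Exchange

end KLR

open KLR TensorProduct in
set_option maxHeartbeats 1000000 in
/-- For `i ≠ j` there is a natural isomorphism of graded modules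
`q^{-(α_i,α_j)} F_j^Λ E_i^Λ N ≅ E_i^Λ F_j^Λ N`. -/
theorem FjLambda_EiLambda_commute {k : Type} [Field k] {I : Type} [Fintype I]
    [DecidableEq I] (C : CartanDatum k I) (Λ : I → ℕ) (β : I → ℕ) (i j : I)
    (hij : i ≠ j) (n : ℕ) (hn : ht I β = n)
    -- the homomorphism through which `E_i^Λ N` is an `R^Λ(β)`-module
    (φiS : cAlg C Λ n β →ₙₐ[k] cAlg C Λ (n + 1) (addA β i)) (hφiS : IsUpRc C Λ i φiS)
    -- the homomorphism through which `F_j^Λ` (over `β`) is formed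
    (φjS : cAlg C Λ n β →ₙₐ[k] cAlg C Λ (n + 1) (addA β j)) (hφjS : IsUpRc C Λ j φjS)
    -- the homomorphism through which `F_j^Λ` (over `β+α_i`) is formed
    (φjV : cAlg C Λ (n + 1) (addA β i) →ₙₐ[k] cAlg C Λ (n + 2) (addA (addA β i) j))
    (hφjV : IsUpRc C Λ j φjV)
    -- the homomorphism through which `E_i^Λ` (over `β+α_j`) acts
    (ψ : cAlg C Λ (n + 1) (addA β j) →ₙₐ[k] cAlg C Λ (n + 2) (addA (addA β i) j))
    (hψ : IsUpRc C Λ i ψ) :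
    ∃ Φ : ∀ (N : Type) [AddCommGroup N] [Module k N]
        [Module (cAlg C Λ (n + 1) (addA β i)) N]
        [IsScalarTower k (cAlg C Λ (n + 1) (addA β i)) N]
        (d1 : EData k N (eRc C Λ n β i) φiS)
        (d2 : EData k (OT k (cAlg C Λ (n + 1) (addA β i))
            (cAlg C Λ (n + 2) (addA (addA β i) j)) N φjV)
          (toCB C Λ (β := addA (addA β i) j) (eR C (n + 1) (addA β j) i)) ψ),
        (letI := d1.inst; letI := d1.tower; letI := d2.inst;
          (OT k (cAlg C Λ n β) (cAlg C Λ (n + 1) (addA β j))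
              ↥(eSub k (cAlg C Λ (n + 1) (addA β i)) N (eRc C Λ n β i)) φjS
            ≃ₗ[cAlg C Λ (n + 1) (addA β j)]
          ↥(eSub k (cAlg C Λ (n + 2) (addA (addA β i) j))
              (OT k (cAlg C Λ (n + 1) (addA β i))
                (cAlg C Λ (n + 2) (addA (addA β i) j)) N φjV)
              (toCB C Λ (β := addA (addA β i) j) (eR C (n + 1) (addA β j) i))))),
      -- gradedness: `Φ` shifts degrees by `(α_i, α_j)`
      (∀ (𝒜V : ℤ → Submodule k (cAlg C Λ (n + 1) (addA β i)))
        (_ : IsKLRGrading C (toCB C Λ) 𝒜V)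
        (𝒜W : ℤ → Submodule k (cAlg C Λ (n + 1) (addA β j)))
        (_ : IsKLRGrading C (toCB C Λ) 𝒜W)
        (𝒜U : ℤ → Submodule k (cAlg C Λ (n + 2) (addA (addA β i) j)))
        (_ : IsKLRGrading C (toCB C Λ) 𝒜U)
        (N : Type) (_ : AddCommGroup N) (_ : Module k N)
        (_ : Module (cAlg C Λ (n + 1) (addA β i)) N)
        (_ : IsScalarTower k (cAlg C Λ (n + 1) (addA β i)) N)
        (d1 : EData k N (eRc C Λ n β i) φiS)
        (d2 : EData k (OT k (cAlg C Λ (n + 1) (addA β i))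
            (cAlg C Λ (n + 2) (addA (addA β i) j)) N φjV)
          (toCB C Λ (β := addA (addA β i) j) (eR C (n + 1) (addA β j) i)) ψ),
        letI := d1.inst; letI := d1.tower; letI := d2.inst;
        ∀ (grN : ℤ → Submodule k N) (_ : IsModGrading k 𝒜V grN) (m : ℤ)
        (x : OT k (cAlg C Λ n β) (cAlg C Λ (n + 1) (addA β j))
          ↥(eSub k (cAlg C Λ (n + 1) (addA β i)) N (eRc C Λ n β i)) φjS),
        (x ∈ otGr k (cAlg C Λ n β) (cAlg C Λ (n + 1) (addA β j))
            ↥(eSub k (cAlg C Λ (n + 1) (addA β i)) N (eRc C Λ n β i)) φjS 𝒜W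
            (eSubGr k (cAlg C Λ (n + 1) (addA β i)) N (eRc C Λ n β i) grN)
            (m + B C i j) ↔
          Φ N d1 d2 x ∈ eSubGr k (cAlg C Λ (n + 2) (addA (addA β i) j))
            (OT k (cAlg C Λ (n + 1) (addA β i))
              (cAlg C Λ (n + 2) (addA (addA β i) j)) N φjV)
            (toCB C Λ (β := addA (addA β i) j) (eR C (n + 1) (addA β j) i))
            (otGr k (cAlg C Λ (n + 1) (addA β i))
              (cAlg C Λ (n + 2) (addA (addA β i) j)) N φjV 𝒜U grN) m)) ∧
      -- naturality in `N`
      (∀ (N N' : Type) (_ : AddCommGroup N) (_ : Module k N)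
        (_ : Module (cAlg C Λ (n + 1) (addA β i)) N)
        (_ : IsScalarTower k (cAlg C Λ (n + 1) (addA β i)) N)
        (_ : AddCommGroup N') (_ : Module k N')
        (_ : Module (cAlg C Λ (n + 1) (addA β i)) N')
        (_ : IsScalarTower k (cAlg C Λ (n + 1) (addA β i)) N')
        (d1 : EData k N (eRc C Λ n β i) φiS)
        (d2 : EData k (OT k (cAlg C Λ (n + 1) (addA β i))
            (cAlg C Λ (n + 2) (addA (addA β i) j)) N φjV)
          (toCB C Λ (β := addA (addA β i) j) (eR C (n + 1) (addA β j) i)) ψ)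
        (d1' : EData k N' (eRc C Λ n β i) φiS)
        (d2' : EData k (OT k (cAlg C Λ (n + 1) (addA β i))
            (cAlg C Λ (n + 2) (addA (addA β i) j)) N' φjV)
          (toCB C Λ (β := addA (addA β i) j) (eR C (n + 1) (addA β j) i)) ψ),
        letI := d1.inst; letI := d1.tower; letI := d2.inst;
        letI := d1'.inst; letI := d1'.tower; letI := d2'.inst;
        ∀ (f : N →ₗ[cAlg C Λ (n + 1) (addA β i)] N')
        -- the induced map `E_i^Λ f`
        (gE : ↥(eSub k (cAlg C Λ (n + 1) (addA β i)) N (eRc C Λ n β i)) →ₗ[k]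
              ↥(eSub k (cAlg C Λ (n + 1) (addA β i)) N' (eRc C Λ n β i)))
        (_ : ∀ x, (gE x).val = f x.val)
        -- the induced map `F_j^Λ E_i^Λ f`
        (gFE : OT k (cAlg C Λ n β) (cAlg C Λ (n + 1) (addA β j))
            ↥(eSub k (cAlg C Λ (n + 1) (addA β i)) N (eRc C Λ n β i)) φjS →ₗ[k]
          OT k (cAlg C Λ n β) (cAlg C Λ (n + 1) (addA β j))
            ↥(eSub k (cAlg C Λ (n + 1) (addA β i)) N' (eRc C Λ n β i)) φjS)
        (_ : ∀ (b : cAlg C Λ (n + 1) (addA β j))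
            (x : ↥(eSub k (cAlg C Λ (n + 1) (addA β i)) N (eRc C Λ n β i))),
          gFE (OTmk k (cAlg C Λ n β) (cAlg C Λ (n + 1) (addA β j))
              ↥(eSub k (cAlg C Λ (n + 1) (addA β i)) N (eRc C Λ n β i)) φjS (b ⊗ₜ[k] x))
            = OTmk k (cAlg C Λ n β) (cAlg C Λ (n + 1) (addA β j))
              ↥(eSub k (cAlg C Λ (n + 1) (addA β i)) N' (eRc C Λ n β i)) φjS
              (b ⊗ₜ[k] gE x))
        -- the induced map `F_j^Λ f`
        (gF : OT k (cAlg C Λ (n + 1) (addA β i))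
            (cAlg C Λ (n + 2) (addA (addA β i) j)) N φjV →ₗ[k]
          OT k (cAlg C Λ (n + 1) (addA β i))
            (cAlg C Λ (n + 2) (addA (addA β i) j)) N' φjV)
        (_ : ∀ (b : cAlg C Λ (n + 2) (addA (addA β i) j)) (m : N),
          gF (OTmk k (cAlg C Λ (n + 1) (addA β i))
              (cAlg C Λ (n + 2) (addA (addA β i) j)) N φjV (b ⊗ₜ[k] m))
            = OTmk k (cAlg C Λ (n + 1) (addA β i))
              (cAlg C Λ (n + 2) (addA (addA β i) j)) N' φjV (b ⊗ₜ[k] f m))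
        -- the induced map `E_i^Λ F_j^Λ f`
        (gEF : ↥(eSub k (cAlg C Λ (n + 2) (addA (addA β i) j))
            (OT k (cAlg C Λ (n + 1) (addA β i))
              (cAlg C Λ (n + 2) (addA (addA β i) j)) N φjV)
            (toCB C Λ (β := addA (addA β i) j) (eR C (n + 1) (addA β j) i))) →ₗ[k]
          ↥(eSub k (cAlg C Λ (n + 2) (addA (addA β i) j))
            (OT k (cAlg C Λ (n + 1) (addA β i))
              (cAlg C Λ (n + 2) (addA (addA β i) j)) N' φjV)
            (toCB C Λ (β := addA (addA β i) j) (eR C (n + 1) (addA β j) i))))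
        (_ : ∀ x, (gEF x).val = gF x.val),
        ∀ z, Φ N' d1' d2' (gFE z) = gEF (Φ N d1 d2 z)) := by
  have he : eRc C Λ n β i = φiS 1 := (toCB_eR rfl).trans hφiS.apply_one.symm
  have he' : toCB C Λ (eR C (n + 1) (addA β j) i) = ψ 1 :=
    (toCB_eR (addA_comm β i j)).trans hψ.apply_one.symm
  have F := isTensorFactorization_toCB_crossing hij hφiS hφjS hφjV hψ
  refine ⟨fun N _ _ _ _ d1 d2 => by
    let := d1.inst
    let := d2.inst
    exact exchangeEquiv d1.compat F he d2.compat he', ?_, ?_⟩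
  · intro 𝒜V hV 𝒜W hW 𝒜U hU N _ _ _ _ d1 _
    let := d1.inst
    intro grN hN m x
    exact mem_otGr_iff_exchange_mem d1.compat F he hV.1 hW.1 hU.1 (hφjV.map_mem rfl hV hU)
      (hψ.map_mem (addA_comm β i j) hW hU) (hU.map_crossing_mem i j)
      (he ▸ hφiS.apply_one ▸ hV.map_eLast_mem i) hN
  · intro N N' _ _ _ _ _ _ _ _ d1 d2 d1' d2' f gE hgE gFE hgFE gF hgF gEF hgEF z
    let := d1.inst
    let := d1'.inst
    refine Subtype.ext (Eq.trans ?_ (hgEF _).symm)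
    exact exchange_natural d1.compat F d1'.compat hgE hgFE hgF z
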